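/- arXiv:2106.11194 — 3 statements merged into one kernel-verified Lean document; each statement's English description precedes it below -/
import Mathlib

section
/- (Theorem 3.2.) Consider the one-pair Nicholson equation x'(t) = β(t)(p x(t−τ(t)) e^{−a x(t−σ(t))} − δ x(t)) with p > δ > 0, a > 0, and set ζ_M := limsup_{t→∞} ∫_{t−σ(t)}^{t} β(s) ds. Assume one of: (i) log(p/δ) ≤ 2δζ_M/(e^{δζ_M} − δζ_M − 1) and δζ_M(2 + log(p/δ)) < 1; or (ii) log(p/δ) > 2δζ_M/(e^{δζ_M} − δζ_M − 1) and (e^{δζ_M} − 1)·log(p/δ) ≤ 1. Then the positive equilibrium K = (1/a) log(p/δ) is globally asymptotically stable: K is locally exponentially stable and every solution with admissible initial data converges to K as t → ∞. -/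
/-- A solution of the one-pair Nicholson equation
`x'(t) = β(t)(p x(t−τ(t)) e^{−a x(t−σ(t))} − δ x(t))`, `t ≥ t₀`,
defined on `[t₀ − τbar, ∞)`, with admissible initial data. -/
def NicholsonSolution1 (p a δ t₀ τbar : ℝ) (β τ σ : ℝ → ℝ) (x : ℝ → ℝ) : Prop :=
  ContinuousOn x (Set.Ici (t₀ - τbar)) ∧
  (∀ t ∈ Set.Ici t₀, HasDerivWithinAt x
      (β t * (p * x (t - τ t) * Real.exp (-a * x (t - σ t)) - δ * x t))
      (Set.Ici t₀) t) ∧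
  (∀ s, t₀ - τbar ≤ s → s < t₀ → 0 ≤ x s) ∧
  0 < x t₀

/-- `K` is locally exponentially stable for the one-pair Nicholson equation. -/
def LocallyExpStable1 (p a δ t₀ τbar : ℝ) (β τ σ : ℝ → ℝ) (K : ℝ) : Prop :=
  ∃ ε > 0, ∃ M ≥ (1 : ℝ), ∃ lam > 0, ∀ x : ℝ → ℝ,
    NicholsonSolution1 p a δ t₀ τbar β τ σ x →
    sSup ((fun s => |x s - K|) '' Set.Icc (t₀ - τbar) t₀) ≤ ε →
    ∀ t ∈ Set.Ici t₀, |x t - K| ≤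
      M * Real.exp (-lam * (t - t₀)) *
        sSup ((fun s => |x s - K|) '' Set.Icc (t₀ - τbar) t₀)

open Set Filter Topology


theorem nic_first_pos_b (f : ℝ → ℝ) (s0 t : ℝ) (ht : s0 ≤ t) (hc : ContinuousOn f (Ici s0))
    (h0 : 0 < f s0)
    (hstep : ∀ u, s0 < u → u ≤ t → (∀ s, s0 ≤ s → s < u → 0 < f s) → 0 ≤ f u → 0 < f u) :
    0 < f t := by
  by_contra hneg
  push Not at hneg
  let A : Set ℝ := Icc s0 t ∩ f ⁻¹' (Iic 0)
  have hcl : IsClosed A :=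
    (hc.mono Icc_subset_Ici_self).preimage_isClosed_of_isClosed isClosed_Icc isClosed_Iic
  have hcomp : IsCompact A := isCompact_Icc.of_isClosed_subset hcl inter_subset_left
  obtain ⟨t1, ht1, hmin⟩ := hcomp.exists_isLeast ⟨t, ⟨ht, le_rfl⟩, hneg⟩
  have h1 : f t1 ≤ 0 := ht1.2
  have hs0 : s0 < t1 := by
    rcases lt_or_eq_of_le ht1.1.1 with h | h
    · exact h
    · rw [← h] at h1; linarith
  have hbefore : ∀ s, s0 ≤ s → s < t1 → 0 < f s := by
    intro s hs hst
    by_contra hh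
    push Not at hh
    have := hmin (show s ∈ A from ⟨⟨hs, hst.le.trans ht1.1.2⟩, hh⟩)
    linarith
  have hnn : 0 ≤ f t1 := by
    have hcw : Tendsto f (𝓝[<] t1) (𝓝 (f t1)) := by
      have := (hc t1 hs0.le)
      have h2 : ContinuousWithinAt f (Ioo s0 t1) t1 :=
        this.mono (fun z hz => hz.1.le)
      rw [ContinuousWithinAt, nhdsWithin_Ioo_eq_nhdsLT hs0] at h2
      exact h2
    refine ge_of_tendsto hcw ?_
    filter_upwards [Ioo_mem_nhdsLT hs0] with s hs
    exact (hbefore s hs.1.le hs.2).le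
  have := hstep t1 hs0 ht1.1.2 hbefore hnn
  linarith

theorem nic_first_pos (f : ℝ → ℝ) (s0 : ℝ) (hc : ContinuousOn f (Ici s0)) (h0 : 0 < f s0)
    (hstep : ∀ t, s0 < t → (∀ s, s0 ≤ s → s < t → 0 < f s) → 0 ≤ f t → 0 < f t) :
    ∀ t, s0 ≤ t → 0 < f t := fun t ht =>
  nic_first_pos_b f s0 t ht hc h0 (fun u hu _ => hstep u hu)

theorem nic_left_max (f : ℝ → ℝ) (d a t : ℝ) (hat : a < t) (hd : HasDerivAt f d t)
    (hm : ∀ s, a ≤ s → s < t → f s ≤ f t) : 0 ≤ d := by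
  have h1 := (hasDerivAt_iff_tendsto_slope_left_right.1 hd).1
  refine ge_of_tendsto h1 ?_
  filter_upwards [Ioo_mem_nhdsLT hat] with s hs
  rw [slope_def_field]
  have := hm s hs.1.le hs.2
  exact div_nonneg_of_nonpos (by linarith) (by linarith [hs.2])

theorem nic_cmp_up (f f' : ℝ → ℝ) (F r t : ℝ) (hrt : r ≤ t) (hc : ContinuousOn f (Icc r t))
    (hd : ∀ s ∈ Ioo r t, HasDerivAt f (f' s) s) (hle : ∀ s ∈ Ioo r t, f' s ≤ F - f s) :
    f r ≥ F - (F - f t) * Real.exp (t - r) := by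
  have hanti : AntitoneOn (fun s => (f s - F) * Real.exp s) (Icc r t) := by
    apply antitoneOn_of_hasDerivWithinAt_nonpos (convex_Icc r t)
      (f' := fun s => f' s * Real.exp s + (f s - F) * Real.exp s)
    · exact (hc.sub continuousOn_const).mul Real.continuous_exp.continuousOn
    · intro s hs
      rw [interior_Icc] at hs
      exact (((hd s hs).sub_const F).mul (Real.hasDerivAt_exp s)).hasDerivWithinAt
    · intro s hs
      rw [interior_Icc] at hs
      have := hle s hs
      have h2 := Real.exp_pos s
      nlinarith
  have h := hanti (left_mem_Icc.2 hrt) (right_mem_Icc.2 hrt) hrt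
  simp only at h
  have he : Real.exp t = Real.exp (t - r) * Real.exp r := by rw [← Real.exp_add]; ring_nf
  rw [he] at h
  have h2 := Real.exp_pos r
  have h3 : (f t - F) * Real.exp (t - r) * Real.exp r ≤ (f r - F) * Real.exp r := by
    linarith
  have := le_of_mul_le_mul_right h3 h2
  linarith

theorem nic_cmp_down (f f' : ℝ → ℝ) (F r t : ℝ) (hrt : r ≤ t) (hc : ContinuousOn f (Icc r t))
    (hd : ∀ s ∈ Ioo r t, HasDerivAt f (f' s) s) (hle : ∀ s ∈ Ioo r t, F - f s ≤ f' s) :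
    f r ≤ F + (f t - F) * Real.exp (t - r) := by
  have := nic_cmp_up (fun s => - f s) (fun s => - f' s) (-F) r t hrt hc.neg
    (fun s hs => (hd s hs).neg) (fun s hs => by have := hle s hs; linarith)
  linarith

theorem nic_fluct (f f' : ℝ → ℝ) (N c η : ℝ) (hη : 0 < η)
    (hc : ContinuousOn f (Ici N)) (hd : ∀ s, N < s → HasDerivAt f (f' s) s)
    (hfr : ∃ᶠ t in atTop, c < f t) : ∃ t, N < t ∧ c < f t ∧ - η ≤ f' t := by
  obtain ⟨t1, ht1, hct⟩ := (frequently_atTop.1 hfr) (N + 1 + |f N - c| / η)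
  have habs : 0 ≤ |f N - c| / η := by positivity
  have hN : N < t1 := by linarith
  obtain ⟨s, hs, hmax⟩ := isCompact_Icc.exists_isMaxOn (nonempty_Icc.2 hN.le)
    (f := fun s => f s + η * s)
    ((hc.mono Icc_subset_Ici_self).add (by fun_prop))
  have h1 := hmax (right_mem_Icc.2 hN.le)
  simp only [mem_ofPred_eq] at h1
  have hsN : N < s := by
    rcases lt_or_eq_of_le hs.1 with h | h
    · exact h
    · exfalso
      rw [← h] at h1
      have h2 : η * t1 ≥ η * (N + 1 + |f N - c| / η) := by gcongr
      have h3 : η * (N + 1 + |f N - c| / η) = η * N + η + |f N - c| := by field_simp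
      have := le_abs_self (f N - c)
      linarith
  refine ⟨s, hsN, ?_, ?_⟩
  · have : η * s ≤ η * t1 := by gcongr; exact hs.2
    linarith
  · have hder : HasDerivAt (fun s => f s + η * s) (f' s + η * 1) s :=
      (hd s hsN).add ((hasDerivAt_id s).const_mul η)
    have := nic_left_max _ _ N s hsN hder (fun u hu hus => hmax ⟨hu, hus.le.trans hs.2⟩)
    linarith

theorem nic_q (z : ℝ) (hz : 0 < z) : 1 / z - 1 / (Real.exp z - 1) < 1 / 2 := by
  have hmono : StrictMonoOn (fun z : ℝ => z + 2 + (z - 2) * Real.exp z) (Ici 0) := by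
    apply strictMonoOn_of_deriv_pos (convex_Ici 0) (by fun_prop)
    intro x hx
    rw [interior_Ici] at hx
    have hx : 0 < x := hx
    have hd : HasDerivAt (fun z : ℝ => z + 2 + (z - 2) * Real.exp z)
        (1 + (1 * Real.exp x + (x - 2) * Real.exp x)) x :=
      ((hasDerivAt_id x).add_const 2).add
        (((hasDerivAt_id x).sub_const 2).mul (Real.hasDerivAt_exp x))
    rw [hd.deriv]
    have h1 := Real.add_one_lt_exp (x := -x) (by linarith)
    have h2 : Real.exp (-x) * Real.exp x = 1 := by rw [← Real.exp_add]; simp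
    have h3 := Real.exp_pos x
    nlinarith
  have h := hmono (mem_Ici.2 (le_refl (0:ℝ))) (mem_Ici.2 hz.le) hz
  simp at h
  have he : 0 < Real.exp z - 1 := by have := Real.add_one_lt_exp hz.ne'; linarith
  rw [div_sub_div _ _ hz.ne' he.ne', div_lt_div_iff₀ (by positivity) (by norm_num)]
  nlinarith

theorem nic_alg (L S i E : ℝ) (hL : 0 < L) (hi : 0 < i) (hiL : i ≤ L) (hLS : L ≤ S)
    (hLE : E * L ≤ 1)
    (h1 : S - S * (Real.exp (L - i) - 1) * E ≤ L)
    (h2 : L ≤ i * (1 + E * (1 - Real.exp (L - S)))) : S = L ∧ i = L := by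
  obtain ⟨u, hu⟩ : ∃ u, u = S - L := ⟨_, rfl⟩
  obtain ⟨w, hw⟩ : ∃ w, w = L - i := ⟨_, rfl⟩
  have hS : S = L + u := by linarith
  have hi' : i = L - w := by linarith
  have hSp : 0 < S := by linarith
  have hu0 : 0 ≤ u := by linarith
  have hw0 : 0 ≤ w := by linarith
  rw [← hw] at h1
  rw [show L - S = -u by linarith] at h2
  obtain ⟨A, hA⟩ : ∃ A, A = Real.exp w - 1 := ⟨_, rfl⟩
  obtain ⟨B, hB⟩ : ∃ B, B = 1 - Real.exp (-u) := ⟨_, rfl⟩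
  rw [← hA] at h1
  rw [← hB] at h2
  have hA0 : 0 ≤ A := by have := Real.add_one_le_exp w; linarith
  have hB0 : 0 ≤ B := by
    have : Real.exp (-u) ≤ 1 := Real.exp_le_one_iff.2 (by linarith)
    linarith
  have k1 : L * u ≤ S * A := by
    have : L * u ≤ (S * A) * (E * L) := by nlinarith
    have h3 : (S * A) * (E * L) ≤ S * A * 1 := mul_le_mul_of_nonneg_left hLE (by positivity)
    linarith
  have k2 : L * w ≤ i * B := by
    have : L * w ≤ (i * B) * (E * L) := by nlinarith
    have h3 : (i * B) * (E * L) ≤ i * B * 1 := mul_le_mul_of_nonneg_left hLE (by positivity)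
    linarith
  rcases eq_or_lt_of_le hu0 with h | hup
  · have : B = 0 := by rw [hB, ← h]; simp
    rw [this] at k2
    have : w ≤ 0 := by nlinarith
    constructor <;> linarith
  rcases eq_or_lt_of_le hw0 with h | hwp
  · have : A = 0 := by rw [hA, ← h]; simp
    rw [this] at k1
    have : u ≤ 0 := by nlinarith
    constructor <;> linarith
  exfalso
  have hAp : 0 < A := by have := Real.add_one_lt_exp hwp.ne'; linarith
  have hBp : 0 < B := by
    have : Real.exp (-u) < 1 := Real.exp_lt_one_iff.2 (by linarith)
    linarith
  rw [hS] at k1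
  rw [hi'] at k2
  have hBw : 0 < B - w := by
    have : 0 < L * (B - w) := by nlinarith [mul_pos hwp hBp]
    exact pos_of_mul_pos_right this hL.le
  have key : (u - A) * (w * B) ≤ u * A * (B - w) := by
    rcases le_or_gt u A with h | h
    · have : (u - A) * (w * B) ≤ 0 := mul_nonpos_of_nonpos_of_nonneg (by linarith) (by positivity)
      have : 0 ≤ u * A * (B - w) := by positivity
      linarith
    · have e1 : (u - A) * (w * B) ≤ (u - A) * (L * (B - w)) :=
        mul_le_mul_of_nonneg_left (by nlinarith) (by linarith)
      have e2 : (L * (u - A)) * (B - w) ≤ u * A * (B - w) :=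
        mul_le_mul_of_nonneg_right (by nlinarith) hBw.le
      linarith
  have q1 := nic_q u hup
  have q2 := nic_q w hwp
  rw [← hA] at q2
  have hinv : 1 / B = 1 + 1 / (Real.exp u - 1) := by
    have e0 : 0 < Real.exp u - 1 := by have := Real.add_one_lt_exp hup.ne'; linarith
    rw [hB, Real.exp_neg]
    have e1 := Real.exp_pos u
    have : 1 - (Real.exp u)⁻¹ = (Real.exp u - 1) / Real.exp u := by field_simp
    rw [this]; field_simp; ring
  have hfin : 1 / A + 1 / B ≤ 1 / u + 1 / w := by
    have : 1 / u + 1 / w - (1 / A + 1 / B) = (u * A * (B - w) - (u - A) * (w * B)) / (u * w * A * B) := by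
      field_simp; ring
    have h3 : 0 ≤ (u * A * (B - w) - (u - A) * (w * B)) / (u * w * A * B) :=
      div_nonneg (by linarith) (by positivity)
    linarith
  linarith

structure NicDel (T r0 s0 : ℝ) (g h : ℝ → ℝ) : Prop where
  hr : r0 ≤ s0
  hT : 0 ≤ T
  g0 : ∀ s, s0 < s → r0 ≤ g s
  gT : ∀ s, s0 < s → s - T ≤ g s
  gs : ∀ s, s0 < s → g s ≤ s
  h0 : ∀ s, s0 < s → r0 ≤ h s
  hhT : ∀ s, s0 < s → s - T ≤ h s
  hs : ∀ s, s0 < s → h s ≤ s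

structure NicSol (L r0 s0 : ℝ) (g h x : ℝ → ℝ) : Prop where
  cont : ContinuousOn x (Ici r0)
  der : ∀ s, s0 < s → HasDerivAt x (x (g s) * Real.exp (L - x (h s)) - x s) s
  nn : ∀ s, r0 ≤ s → s < s0 → 0 ≤ x s
  pos : 0 < x s0

theorem nic_pos {L T r0 s0 : ℝ} {g h x : ℝ → ℝ} (D : NicDel T r0 s0 g h)
    (X : NicSol L r0 s0 g h x) : ∀ s, s0 ≤ s → 0 < x s := by
  apply nic_first_pos x s0 (X.cont.mono (Ici_subset_Ici.2 D.hr)) X.pos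
  intro t ht hb hnn
  have hn : ∀ s, r0 ≤ s → s < t → 0 ≤ x s := by
    intro s h1 h2
    rcases lt_or_ge s s0 with h | h
    · exact X.nn s h1 h
    · exact (hb s h h2).le
  have := nic_cmp_down x _ 0 s0 t ht.le
    (X.cont.mono (fun z hz => D.hr.trans hz.1)) (fun s hs => X.der s hs.1) (fun s hs => by
      have h1 := hn (g s) (D.g0 s hs.1) ((D.gs s hs.1).trans_lt hs.2)
      have := mul_nonneg h1 (Real.exp_pos (L - x (h s))).le
      linarith)
  have h2 := X.pos
  rcases eq_or_lt_of_le hnn with h | h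
  · rw [← h] at this; simp at this; linarith
  · exact h

theorem nic_nonneg {L T r0 s0 : ℝ} {g h x : ℝ → ℝ} (D : NicDel T r0 s0 g h)
    (X : NicSol L r0 s0 g h x) : ∀ s, r0 ≤ s → 0 ≤ x s := by
  intro s h1
  rcases lt_or_ge s s0 with h | h
  · exact X.nn s h1 h
  · exact (nic_pos D X s h).le

theorem nic_decay {L T r0 s0 : ℝ} {g h x : ℝ → ℝ} (D : NicDel T r0 s0 g h)
    (X : NicSol L r0 s0 g h x) (r t : ℝ) (hr : s0 ≤ r) (hrt : r ≤ t) :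
    x r ≤ x t * Real.exp (t - r) := by
  have := nic_cmp_down x _ 0 r t hrt
    (X.cont.mono (fun z hz => (D.hr.trans hr).trans hz.1))
    (fun s hs => X.der s (hr.trans_lt hs.1)) (fun s hs => by
      have h1 := nic_nonneg D X (g s) (D.g0 s (hr.trans_lt hs.1))
      have := mul_nonneg h1 (Real.exp_pos (L - x (h s))).le
      linarith)
  linarith

theorem nic_bdd {L T r0 s0 : ℝ} {g h x : ℝ → ℝ} (hL : 0 < L) (D : NicDel T r0 s0 g h)
    (X : NicSol L r0 s0 g h x) : ∃ A, ∀ s, r0 ≤ s → x s < A := by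
  obtain ⟨I, hI⟩ := isCompact_Icc.bddAbove_image (X.cont.mono (Icc_subset_Ici_self : Icc r0 s0 ⊆ Ici r0))
  have hI : ∀ s, r0 ≤ s → s ≤ s0 → x s ≤ I := fun s h1 h2 => hI ⟨s, ⟨h1, h2⟩, rfl⟩
  have hIp : 0 < I := X.pos.trans_le (hI s0 D.hr le_rfl)
  have hexp1 : ∀ z : ℝ, 0 ≤ z → 1 ≤ Real.exp z := fun z hz => Real.one_le_exp hz
  obtain ⟨Q, hQ⟩ : ∃ Q, Q = I + L * Real.exp T + 1 := ⟨_, rfl⟩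
  have hLT : 0 < L * Real.exp T := by positivity
  obtain ⟨c, hc⟩ : ∃ c, c = Real.exp L := ⟨_, rfl⟩
  have hcp : 0 < c := by rw [hc]; positivity
  have hQp : 0 < Q := by linarith
  obtain ⟨A, hA⟩ : ∃ A, A = Q * Real.exp (c * T) := ⟨_, rfl⟩
  have hQA : Q ≤ A := by
    rw [hA]; have := hexp1 (c * T) (mul_nonneg hcp.le D.hT); nlinarith
  have hmain : ∀ t, s0 ≤ t → 0 < A - x t := by
    apply nic_first_pos (fun s => A - x s) s0
      (continuousOn_const.sub (X.cont.mono (Ici_subset_Ici.2 D.hr)))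
    · have := hI s0 D.hr le_rfl
      linarith
    intro t ht hb hnn
    by_contra hcon
    have hxt : A ≤ x t := by linarith
    have hlt : ∀ s, r0 ≤ s → s ≤ t → x s ≤ x t := by
      intro s h1 h2
      rcases eq_or_lt_of_le h2 with h | h
      · rw [h]
      rcases lt_or_ge s s0 with h' | h'
      · have := hI s h1 h'.le
        linarith
      · have := hb s h' h
        linarith
    have hd := nic_left_max x _ s0 t ht (X.der t ht)
      (fun s h1 h2 => hlt s (D.hr.trans h1) h2.le)
    have hg := hlt (g t) (D.g0 t ht) (D.gs t ht)
    have hxh : x (h t) ≤ L := by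
      by_contra hh
      push Not at hh
      have h1 : Real.exp (L - x (h t)) < 1 := Real.exp_lt_one_iff.2 (by linarith)
      have h2 := nic_nonneg D X (g t) (D.g0 t ht)
      have h3 := Real.exp_pos (L - x (h t))
      nlinarith
    -- window bound
    have hwin : ∀ u, r0 ≤ u → h t - T ≤ u → u ≤ h t → x u < Q := by
      intro u h1 h2 h3
      rcases le_or_gt u s0 with h' | h'
      · have := hI u h1 h'; linarith
      · have e1 := nic_decay D X u (h t) h'.le h3
        have e2 : Real.exp (h t - u) ≤ Real.exp T := Real.exp_le_exp.2 (by linarith)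
        have e3 : x (h t) * Real.exp (h t - u) ≤ L * Real.exp T :=
          mul_le_mul hxh e2 (Real.exp_pos _).le hL.le
        linarith
    have hgrow : ∀ s, max s0 (h t) ≤ s → 0 < Q * Real.exp (c * (s - h t)) - x s := by
      have hstart : max s0 (h t) ≤ max s0 (h t) := le_rfl
      have hcont : ContinuousOn (fun s => Q * Real.exp (c * (s - h t)) - x s) (Ici r0) :=
        ContinuousOn.sub (by fun_prop) X.cont
      have hmr : r0 ≤ max s0 (h t) := D.hr.trans (le_max_left _ _)
      have hQexp : ∀ s, h t ≤ s → Q ≤ Q * Real.exp (c * (s - h t)) := by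
        intro s hs
        have := hexp1 (c * (s - h t)) (mul_nonneg hcp.le (by linarith))
        nlinarith
      have hlow : ∀ u, r0 ≤ u → h t - T ≤ u → u ≤ max s0 (h t) → x u < Q := by
        intro u h1 h2 h3
        rcases le_or_gt u s0 with h' | h'
        · have := hI u h1 h'; linarith
        · rcases le_max_iff.1 h3 with h4 | h4
          · linarith
          · exact hwin u h1 h2 h4
      have hstartpos : 0 < Q * Real.exp (c * (max s0 (h t) - h t)) - x (max s0 (h t)) := by
        have e1 := hQexp (max s0 (h t)) (le_max_right _ _)
        have e2 := hlow (max s0 (h t)) hmr (by have := le_max_right s0 (h t); linarith [D.hT]) le_rfl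
        linarith
      apply nic_first_pos _ _ (hcont.mono (Ici_subset_Ici.2 hmr)) hstartpos
      intro v hv hbv _
      have hmono : MonotoneOn (fun s => Q * Real.exp (c * (s - h t)) - x s)
          (Icc (max s0 (h t)) v) := by
        apply monotoneOn_of_hasDerivWithinAt_nonneg (convex_Icc _ _)
          (f' := fun s => Q * (Real.exp (c * (s - h t)) * (c * 1)) -
            (x (g s) * Real.exp (L - x (h s)) - x s))
          (hcont.mono (fun z hz => hmr.trans hz.1))
        · intro s hs
          rw [interior_Icc] at hs
          have hs0 : s0 < s := (le_max_left _ _).trans_lt hs.1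
          have e1 : HasDerivAt (fun s => Q * Real.exp (c * (s - h t)))
              (Q * (Real.exp (c * (s - h t)) * (c * 1))) s :=
            ((((hasDerivAt_id s).sub_const (h t)).const_mul c).exp).const_mul Q
          exact (e1.sub (X.der s hs0)).hasDerivWithinAt
        · intro s hs
          rw [interior_Icc] at hs
          have hs0 : s0 < s := (le_max_left _ _).trans_lt hs.1
          have hhs : h t ≤ s := ((le_max_right _ _).trans_lt hs.1).le
          have hgn := nic_nonneg D X (g s) (D.g0 s hs0)
          have hhn := nic_nonneg D X (h s) (D.h0 s hs0)
          have hsn := nic_nonneg D X s (D.hr.trans hs0.le)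
          have hgb : x (g s) ≤ Q * Real.exp (c * (s - h t)) := by
            rcases le_or_gt (g s) (max s0 (h t)) with h' | h'
            · have e1 := hlow (g s) (D.g0 s hs0) (by have := D.gT s hs0; linarith) h'
              have e2 := hQexp s hhs
              linarith
            · have e1 := hbv (g s) h'.le ((D.gs s hs0).trans_lt hs.2)
              have e2 : Real.exp (c * (g s - h t)) ≤ Real.exp (c * (s - h t)) :=
                Real.exp_le_exp.2 (by have := D.gs s hs0; nlinarith)
              nlinarith
          have he : Real.exp (L - x (h s)) ≤ c := by
            rw [hc]; exact Real.exp_le_exp.2 (by linarith)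
          have := mul_le_mul hgb he (Real.exp_pos _).le (hgn.trans hgb)
          linarith
      have := hmono (left_mem_Icc.2 hv.le) (right_mem_Icc.2 hv.le) hv.le
      simp only at this
      linarith
    have e1 := hgrow t (max_le ht.le (D.hs t ht))
    have e2 : Real.exp (c * (t - h t)) ≤ Real.exp (c * T) :=
      Real.exp_le_exp.2 (by have := D.hhT t ht; nlinarith)
    have : Q * Real.exp (c * (t - h t)) ≤ A := by rw [hA]; nlinarith
    linarith
  refine ⟨A, fun s hs => ?_⟩
  rcases lt_or_ge s s0 with h' | h'
  · have := hI s hs h'.le; linarith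
  · have := hmain s h'; linarith

theorem nic_low {L T r0 s0 : ℝ} {g h x : ℝ → ℝ} (hL : 0 < L) (D : NicDel T r0 s0 g h)
    (X : NicSol L r0 s0 g h x) : ∃ q > 0, ∀ s, s0 ≤ s → q < x s := by
  have hp1 : 0 < x s0 * Real.exp (-(T + 1)) := mul_pos X.pos (Real.exp_pos _)
  have hp2 : 0 < L * Real.exp (-T) := mul_pos hL (Real.exp_pos _)
  obtain ⟨q, hq0, hq⟩ := exists_between (lt_min hp1 hp2)
  have hq1 := hq.trans_le (min_le_left _ _)
  have hq2 := hq.trans_le (min_le_right _ _)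
  have hearly : ∀ s, s0 ≤ s → s ≤ s0 + T + 1 → q < x s := by
    intro s h1 h2
    have e := nic_decay D X s0 s le_rfl h1
    have e2 : x s0 * Real.exp (-(s - s0)) ≤ x s := by
      have : Real.exp (s - s0) * Real.exp (-(s - s0)) = 1 := by rw [← Real.exp_add]; simp
      have e3 := mul_le_mul_of_nonneg_right e (Real.exp_pos (-(s - s0))).le
      rw [mul_assoc, this, mul_one] at e3
      exact e3
    have e3 : Real.exp (-(T + 1)) ≤ Real.exp (-(s - s0)) := Real.exp_le_exp.2 (by linarith)
    have := mul_le_mul_of_nonneg_left e3 X.pos.le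
    linarith
  refine ⟨q, hq0, ?_⟩
  have : ∀ s, s0 ≤ s → 0 < x s - q := by
    apply nic_first_pos (fun s => x s - q) s0
      ((X.cont.mono (Ici_subset_Ici.2 D.hr)).sub continuousOn_const)
    · have := hearly s0 le_rfl (by linarith [D.hT])
      linarith
    intro t ht hb hnn
    rcases le_or_gt t (s0 + T + 1) with h1 | h1
    · have := hearly t ht.le h1
      linarith
    by_contra hcon
    have hlt : ∀ s, s0 ≤ s → s ≤ t → x t ≤ x s := by
      intro s h1 h2
      rcases eq_or_lt_of_le h2 with h | h
      · rw [h]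
      · have := hb s h1 h
        linarith
    have hd := nic_left_max (fun s => - x s) _ s0 t ht (X.der t ht).neg
      (fun s h1 h2 => by have := hlt s h1 h2.le; linarith)
    have hgt : s0 ≤ g t := by have := D.gT t ht; linarith
    have hht : s0 ≤ h t := by have := D.hhT t ht; linarith
    have hg := hlt (g t) hgt (D.gs t ht)
    have hxg := nic_pos D X (g t) hgt
    have hxh : L ≤ x (h t) := by
      by_contra hh
      push Not at hh
      have h1 : 1 < Real.exp (L - x (h t)) := Real.one_lt_exp_iff.2 (by linarith)
      nlinarith
    have e1 := nic_decay D X (h t) t hht (D.hs t ht)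
    have e2 : Real.exp (t - h t) ≤ Real.exp T := Real.exp_le_exp.2 (by linarith [D.hhT t ht])
    have hxt := nic_pos D X t ht.le
    have e3 : L ≤ x t * Real.exp T := by nlinarith
    have e4 : Real.exp T * Real.exp (-T) = 1 := by rw [← Real.exp_add]; simp
    have e5 := mul_le_mul_of_nonneg_right e3 (Real.exp_pos (-T)).le
    rw [mul_assoc, e4] at e5
    linarith
  intro s hs
  have := this s hs
  linarith

theorem nic_conv {L T r0 s0 ζ : ℝ} {g h x : ℝ → ℝ} (hL : 0 < L)
    (hcond : (Real.exp ζ - 1) * L ≤ 1) (D : NicDel T r0 s0 g h)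
    (hdel : ∀ ε > 0, ∃ N, ∀ s, N ≤ s → s - h s ≤ ζ + ε)
    (X : NicSol L r0 s0 g h x) : Tendsto x atTop (𝓝 L) := by
  obtain ⟨A, hA⟩ := nic_bdd hL D X
  obtain ⟨q, hq0, hq⟩ := nic_low hL D X
  have hbu : IsBoundedUnder (· ≤ ·) atTop x :=
    isBoundedUnder_of_eventually_le (a := A)
      ((eventually_ge_atTop r0).mono fun s hs => (hA s hs).le)
  have hbl : IsBoundedUnder (· ≥ ·) atTop x :=
    isBoundedUnder_of_eventually_ge (a := q)
      ((eventually_ge_atTop s0).mono fun s hs => (hq s hs).le)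
  obtain ⟨S, hS⟩ : ∃ S, S = limsup x atTop := ⟨_, rfl⟩
  obtain ⟨i, hi⟩ : ∃ i, i = liminf x atTop := ⟨_, rfl⟩
  have hiS : i ≤ S := by rw [hi, hS]; exact liminf_le_limsup hbu hbl
  have hqi : q ≤ i := by
    rw [hi]
    exact le_liminf_of_le hbu.isCoboundedUnder_ge
      ((eventually_ge_atTop s0).mono fun s hs => (hq s hs).le)
  have hip : 0 < i := hq0.trans_le hqi
  have hSp : 0 < S := hip.trans_le hiS
  -- uniform window facts
  have hwin : ∀ ε > 0, ∃ N, s0 ≤ N ∧ ∀ s, N < s →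
      x (g s) ≤ S + ε ∧ x (h s) ≤ S + ε ∧ i - ε ≤ x (g s) ∧ i - ε ≤ x (h s) ∧ s - h s ≤ ζ + ε ∧
      (∀ r, h s ≤ r → r ≤ s → s0 < r ∧ x (g r) ≤ S + ε ∧ x (h r) ≤ S + ε ∧ i - ε ≤ x (g r)
        ∧ i - ε ≤ x (h r)) := by
    intro ε hε
    have e1 : ∀ᶠ s in atTop, x s < S + ε :=
      eventually_lt_of_limsup_lt (by rw [← hS]; linarith) hbu
    have e2 : ∀ᶠ s in atTop, i - ε < x s :=
      eventually_lt_of_lt_liminf (by rw [← hi]; linarith) hbl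
    obtain ⟨N1, hN1⟩ := eventually_atTop.1 (e1.and e2)
    obtain ⟨N2, hN2⟩ := hdel ε hε
    have hT := D.hT
    have hb : ∀ s, max N1 s0 + T < s → x (g s) ≤ S + ε ∧ x (h s) ≤ S + ε ∧ i - ε ≤ x (g s)
        ∧ i - ε ≤ x (h s) := by
      intro s hs
      have h1 := le_max_left N1 s0
      have h2 := le_max_right N1 s0
      have hs0 : s0 < s := by linarith
      have k1 := hN1 (g s) (by linarith [D.gT s hs0])
      have k2 := hN1 (h s) (by linarith [D.hhT s hs0])
      exact ⟨k1.1.le, k2.1.le, k1.2.le, k2.2.le⟩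
    refine ⟨max (max N1 s0 + T + T) N2, ?_, ?_⟩
    · have h2 := le_max_right N1 s0
      have h3 := le_max_left (max N1 s0 + T + T) N2
      linarith
    · intro s hs
      have h2 := le_max_right N1 s0
      have h3 := le_max_left (max N1 s0 + T + T) N2
      have h4 := le_max_right (max N1 s0 + T + T) N2
      obtain ⟨k1, k2, k3, k4⟩ := hb s (by linarith)
      refine ⟨k1, k2, k3, k4, hN2 s (by linarith), ?_⟩
      intro r hr1 hr2
      have := D.hhT s (by linarith)
      exact ⟨by linarith, hb r (by linarith)⟩
  have hup : ∀ ε > 0, ∃ v θ, 0 ≤ θ ∧ θ ≤ ζ + ε ∧ i - ε ≤ v ∧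
      (S - 2 * ε) * Real.exp v ≤ (S + ε) * Real.exp L ∧
      (S + ε) * Real.exp (L - i + ε) - ((S + ε) * Real.exp (L - i + ε) - (S - ε)) * Real.exp θ
        ≤ v := by
    intro ε hε
    obtain ⟨N, hN0, hN⟩ := hwin ε hε
    obtain ⟨t, htN, hxt, hdt⟩ := nic_fluct x _ N (S - ε) ε hε
      (X.cont.mono (Ici_subset_Ici.2 (D.hr.trans hN0)))
      (fun s hs => X.der s (hN0.trans_lt hs))
      (frequently_lt_of_lt_limsup hbl.isCoboundedUnder_le (by rw [← hS]; linarith))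
    obtain ⟨k1, k2, k3, k4, k5, k6⟩ := hN t htN
    have ht0 : s0 < t := hN0.trans_lt htN
    refine ⟨x (h t), t - h t, by linarith [D.hs t ht0], k5, k4, ?_, ?_⟩
    · have e1 : Real.exp (L - x (h t)) * Real.exp (x (h t)) = Real.exp L := by
        rw [← Real.exp_add]; ring_nf
      have e2 := Real.exp_pos (x (h t))
      have e3 : S - 2 * ε ≤ (S + ε) * Real.exp (L - x (h t)) := by
        have := mul_le_mul_of_nonneg_right k1 (Real.exp_pos (L - x (h t))).le
        linarith
      have e4 := mul_le_mul_of_nonneg_right e3 e2.le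
      rw [mul_assoc, e1] at e4
      exact e4
    · have hc := nic_cmp_up x _ ((S + ε) * Real.exp (L - i + ε)) (h t) t (D.hs t ht0)
        (X.cont.mono (fun z hz => (D.h0 t ht0).trans hz.1))
        (fun s hs => X.der s (k6 s hs.1.le hs.2.le).1)
        (fun s hs => by
          obtain ⟨_, m1, m2, m3, m4⟩ := k6 s hs.1.le hs.2.le
          have e1 : Real.exp (L - x (h s)) ≤ Real.exp (L - i + ε) :=
            Real.exp_le_exp.2 (by linarith)
          have := mul_le_mul m1 e1 (Real.exp_pos _).le (by linarith)
          linarith)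
      have e1 := Real.exp_pos (t - h t)
      nlinarith
  have hdown : ∀ ε > 0, ε < i → ∃ v θ, 0 ≤ θ ∧ θ ≤ ζ + ε ∧ v ≤ S + ε ∧
      (i - ε) * Real.exp L ≤ (i + 2 * ε) * Real.exp v ∧
      v ≤ (i - ε) * Real.exp (L - S - ε) + (i + ε - (i - ε) * Real.exp (L - S - ε)) * Real.exp θ
        := by
    intro ε hε hεi
    obtain ⟨N, hN0, hN⟩ := hwin ε hε
    obtain ⟨t, htN, hxt, hdt⟩ := nic_fluct (fun s => - x s) _ N (-(i + ε)) ε hε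
      (X.cont.mono (Ici_subset_Ici.2 (D.hr.trans hN0))).neg
      (fun s hs => (X.der s (hN0.trans_lt hs)).neg)
      ((frequently_lt_of_liminf_lt hbu.isCoboundedUnder_ge
        (by rw [← hi]; linarith : liminf x atTop < i + ε)).mono (fun s hs => by linarith))
    obtain ⟨k1, k2, k3, k4, k5, k6⟩ := hN t htN
    have ht0 : s0 < t := hN0.trans_lt htN
    refine ⟨x (h t), t - h t, by linarith [D.hs t ht0], k5, k2, ?_, ?_⟩
    · have e1 : Real.exp (L - x (h t)) * Real.exp (x (h t)) = Real.exp L := by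
        rw [← Real.exp_add]; ring_nf
      have e2 := Real.exp_pos (x (h t))
      have e3 : (i - ε) * Real.exp (L - x (h t)) ≤ i + 2 * ε := by
        have := mul_le_mul_of_nonneg_right k3 (Real.exp_pos (L - x (h t))).le
        linarith
      have e4 := mul_le_mul_of_nonneg_right e3 e2.le
      rw [mul_assoc, e1] at e4
      exact e4
    · have hc := nic_cmp_down x _ ((i - ε) * Real.exp (L - S - ε)) (h t) t (D.hs t ht0)
        (X.cont.mono (fun z hz => (D.h0 t ht0).trans hz.1))
        (fun s hs => X.der s (k6 s hs.1.le hs.2.le).1)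
        (fun s hs => by
          obtain ⟨_, m1, m2, m3, m4⟩ := k6 s hs.1.le hs.2.le
          have e1 : Real.exp (L - S - ε) ≤ Real.exp (L - x (h s)) :=
            Real.exp_le_exp.2 (by linarith)
          have := mul_le_mul m3 e1 (Real.exp_pos _).le (by linarith)
          linarith)
      have e1 := Real.exp_pos (t - h t)
      nlinarith
  have hlim : ∀ (f1 f2 : ℝ → ℝ), Continuous f1 → Continuous f2 →
      (∀ ε > 0, ε < i / 2 → f1 ε ≤ f2 ε) → f1 0 ≤ f2 0 := by
    intro f1 f2 c1 c2 hle
    refine le_of_tendsto_of_tendsto (b := 𝓝[>] (0:ℝ)) ((c1.tendsto 0).mono_left nhdsWithin_le_nhds)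
      ((c2.tendsto 0).mono_left nhdsWithin_le_nhds) ?_
    filter_upwards [Ioo_mem_nhdsGT (show (0:ℝ) < i / 2 by linarith)] with ε hε
    exact hle ε hε.1 hε.2
  have hiL : i ≤ L := by
    have := hlim (fun ε => (S - 2 * ε) * Real.exp (i - ε)) (fun ε => (S + ε) * Real.exp L)
      (by fun_prop) (by fun_prop) (fun ε h1 h2 => by
        obtain ⟨v, θ, _, _, a1, a2, _⟩ := hup ε h1
        have := Real.exp_le_exp.2 a1
        have := mul_le_mul_of_nonneg_left this (show 0 ≤ S - 2 * ε by linarith)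
        linarith)
    simp only [mul_zero, sub_zero, add_zero] at this
    exact Real.exp_le_exp.1 (le_of_mul_le_mul_left this hSp)
  have hLS : L ≤ S := by
    have := hlim (fun ε => (i - ε) * Real.exp L) (fun ε => (i + 2 * ε) * Real.exp (S + ε))
      (by fun_prop) (by fun_prop) (fun ε h1 h2 => by
        obtain ⟨v, θ, _, _, a1, a2, _⟩ := hdown ε h1 (by linarith)
        have := Real.exp_le_exp.2 a1
        have := mul_le_mul_of_nonneg_left this (show 0 ≤ i + 2 * ε by linarith)
        linarith)
    simp only [mul_zero, sub_zero, add_zero] at this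
    exact Real.exp_le_exp.1 (le_of_mul_le_mul_left this hip)
  have f1 : S * Real.exp (L - i) - (S * Real.exp (L - i) - S) * Real.exp ζ ≤ L := by
    have := hlim (fun ε => (S - 2 * ε) * Real.exp ((S + ε) * Real.exp (L - i + ε) -
        ((S + ε) * Real.exp (L - i + ε) - (S - ε)) * Real.exp (ζ + ε)))
      (fun ε => (S + ε) * Real.exp L)
      (by fun_prop) (by fun_prop) (fun ε h1 h2 => by
        obtain ⟨v, θ, a0, a1, _, a2, a3⟩ := hup ε h1
        have e1 : 1 ≤ Real.exp (L - i + ε) := Real.one_le_exp (by linarith)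
        have e2 : S - ε ≤ (S + ε) * Real.exp (L - i + ε) := by nlinarith
        have e3 : Real.exp θ ≤ Real.exp (ζ + ε) := Real.exp_le_exp.2 a1
        have e4 := mul_le_mul_of_nonneg_left e3 (sub_nonneg.2 e2)
        have := Real.exp_le_exp.2 (le_trans (by linarith) a3 :
          (S + ε) * Real.exp (L - i + ε) -
          ((S + ε) * Real.exp (L - i + ε) - (S - ε)) * Real.exp (ζ + ε) ≤ v)
        have := mul_le_mul_of_nonneg_left this (show 0 ≤ S - 2 * ε by linarith)
        linarith)
    simp only [mul_zero, sub_zero, add_zero] at this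
    exact Real.exp_le_exp.1 (le_of_mul_le_mul_left this hSp)
  have f2 : L ≤ i * Real.exp (L - S) + (i - i * Real.exp (L - S)) * Real.exp ζ := by
    have := hlim (fun ε => (i - ε) * Real.exp L) (fun ε => (i + 2 * ε) * Real.exp (
        (i - ε) * Real.exp (L - S - ε) + (i + ε - (i - ε) * Real.exp (L - S - ε)) *
          Real.exp (ζ + ε)))
      (by fun_prop) (by fun_prop) (fun ε h1 h2 => by
        obtain ⟨v, θ, a0, a1, _, a2, a3⟩ := hdown ε h1 (by linarith)
        have e1 : Real.exp (L - S - ε) ≤ 1 := Real.exp_le_one_iff.2 (by linarith)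
        have e2 : (i - ε) * Real.exp (L - S - ε) ≤ i + ε := by nlinarith
        have e3 : Real.exp θ ≤ Real.exp (ζ + ε) := Real.exp_le_exp.2 a1
        have e4 := mul_le_mul_of_nonneg_left e3 (sub_nonneg.2 e2)
        have := Real.exp_le_exp.2 (le_trans a3 (by linarith) :
          v ≤ (i - ε) * Real.exp (L - S - ε) + (i + ε - (i - ε) * Real.exp (L - S - ε)) *
          Real.exp (ζ + ε))
        have := mul_le_mul_of_nonneg_left this (show 0 ≤ i + 2 * ε by linarith)
        linarith)
    simp only [mul_zero, sub_zero, add_zero] at this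
    exact Real.exp_le_exp.1 (le_of_mul_le_mul_left this hip)
  have hfin := nic_alg L S i (Real.exp ζ - 1) hL hip hiL hLS
    hcond (by linarith) (by linarith)
  exact tendsto_of_liminf_eq_limsup (by rw [← hi, hfin.2]) (by rw [← hS, hfin.1]) hbu hbl

set_option maxHeartbeats 1000000 in
theorem nic_lin (L ζ : ℝ) (hL : 0 < L) (hζ : 0 ≤ ζ) (hcond : (Real.exp ζ - 1) * L ≤ 1) :
    ∃ η > 0, η ≤ 1 ∧ ∀ (y y' g h : ℝ → ℝ) (t : ℝ),
      (∀ s, t - (ζ + 2) ≤ s → s ≤ t → HasDerivAt y (y' s) s ∧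
        |y' s - (y (g s) - L * y (h s) - y s)| ≤ η ∧ |y s| ≤ 1 + η ∧ |y (g s)| ≤ 1 + η ∧
        |y (h s)| ≤ 1 + η ∧ s - (ζ + η) ≤ h s ∧ h s ≤ s) →
      y t = 1 → -η ≤ y' t → False := by
  obtain ⟨c, hc⟩ : ∃ c, c = 1 / (4 * (2 + L)) := ⟨_, rfl⟩
  have hcL : (2 + L) * c = 1 / 4 := by rw [hc]; field_simp
  have hc0 : 0 < c := by rw [hc]; positivity
  have hc1 : c ≤ 1 / 8 := by nlinarith
  have hec : L * (Real.exp c - 1) ≤ 1 := by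
    have h1 := Real.add_one_le_exp (-c)
    have h2 : Real.exp (-c) * Real.exp c = 1 := by rw [← Real.exp_add]; simp
    have h3 := Real.exp_pos c
    have h4 : (1 - c) * Real.exp c ≤ 1 := by nlinarith
    have h5 : Real.exp c - 1 ≤ 2 * c := by nlinarith
    nlinarith
  let F : ℝ → ℝ := fun η => (1 + L) * (1 + η) + η
  let F2 : ℝ → ℝ := fun η => 1 + L / 2 + 2 * η
  have ea : ∀ᶠ η in 𝓝[>] (0:ℝ), -(1/2) < F η - (F η - 1) * Real.exp (ζ + η) -
      ((2 + L) * (1 + η) + η) * c := by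
    refine Tendsto.eventually_const_lt (v := F 0 - (F 0 - 1) * Real.exp (ζ + 0) -
      ((2 + L) * (1 + 0) + 0) * c) ?_ ((Continuous.tendsto (by fun_prop) 0).mono_left nhdsWithin_le_nhds)
    simp only [F, add_zero, mul_one]
    rw [hcL]; linarith
  have eb : ∀ᶠ η in 𝓝[>] (0:ℝ), 0 < L * (F η - (F η - F2 η + (F2 η - 1) * Real.exp c) *
      Real.exp (ζ + η - c)) - 3 * η := by
    refine Tendsto.eventually_const_lt (v := L * (F 0 - (F 0 - F2 0 + (F2 0 - 1) * Real.exp c) *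
      Real.exp (ζ + 0 - c)) - 3 * 0) ?_
      ((Continuous.tendsto (by fun_prop) 0).mono_left nhdsWithin_le_nhds)
    simp only [F, F2, add_zero, mul_one, mul_zero, sub_zero]
    apply mul_pos hL
    have h1 : Real.exp c * Real.exp (ζ - c) = Real.exp ζ := by rw [← Real.exp_add]; ring_nf
    have h2 : Real.exp (ζ - c) < Real.exp ζ := Real.exp_lt_exp.2 (by linarith)
    nlinarith
  have ec : ∀ᶠ η in 𝓝[>] (0:ℝ), 0 < L * (F2 η - (F2 η - 1) * Real.exp c) - 3 * η := by
    refine Tendsto.eventually_const_lt (v := L * (F2 0 - (F2 0 - 1) * Real.exp c) - 3 * 0) ?_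
      ((Continuous.tendsto (by fun_prop) 0).mono_left nhdsWithin_le_nhds)
    simp only [F2, add_zero, mul_zero, sub_zero]
    apply mul_pos hL
    nlinarith
  have ed : ∀ᶠ η in 𝓝[>] (0:ℝ), η ∈ Ioo (0:ℝ) 1 := Ioo_mem_nhdsGT one_pos
  obtain ⟨η, ha, hb, hcc, hη⟩ := (ea.and (eb.and (ec.and ed))).exists
  refine ⟨η, hη.1, hη.2.le, ?_⟩
  intro y y' g h t H hyt hdt
  have hη0 := hη.1
  have hη1 := hη.2
  obtain ⟨Fv, hF⟩ : ∃ Fv, Fv = F η := ⟨_, rfl⟩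
  obtain ⟨Gv, hG⟩ : ∃ Gv, Gv = F2 η := ⟨_, rfl⟩
  rw [← hF] at ha hb
  rw [← hG] at hb hcc
  simp only [F] at hF
  simp only [F2] at hG
  have hF1 : 1 ≤ Fv := by nlinarith
  have hG1 : 1 ≤ Gv := by linarith
  have hFG : Gv ≤ Fv := by nlinarith
  have hcont : ∀ r u, t - (ζ + 2) ≤ r → u ≤ t → ContinuousOn y (Icc r u) := fun r u hr hu s hs =>
    (H s (hr.trans hs.1) (hs.2.trans hu)).1.continuousAt.continuousWithinAt
  -- upper bound on y'
  have hup : ∀ s, t - (ζ + 2) ≤ s → s ≤ t → y' s ≤ Fv - y s := by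
    intro s h1 h2
    obtain ⟨_, k1, k2, k3, k4, _, _⟩ := H s h1 h2
    have := abs_le.1 k1
    have := abs_le.1 k3
    have := abs_le.1 k4
    nlinarith
  have hlip : ∀ s, t - (ζ + 2) ≤ s → s ≤ t → y' s ≤ (2 + L) * (1 + η) + η := by
    intro s h1 h2
    obtain ⟨_, k1, k2, k3, k4, _, _⟩ := H s h1 h2
    have := abs_le.1 k1
    have := abs_le.1 k2
    have := abs_le.1 k3
    have := abs_le.1 k4
    nlinarith
  have hfinal : L * y (h t) ≤ 3 * η := by
    obtain ⟨_, k1, k2, k3, k4, _, _⟩ := H t (by linarith) le_rfl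
    have := abs_le.1 k1
    have := abs_le.1 k3
    linarith
  -- first lower bound
  have hlow1 : ∀ r, t - (ζ + η) ≤ r → r ≤ t → Fv - (Fv - 1) * Real.exp (ζ + η) ≤ y r := by
    intro r h1 h2
    have := nic_cmp_up y y' Fv r t h2 (hcont r t (by linarith) le_rfl)
      (fun s hs => (H s (by linarith [hs.1]) hs.2.le).1)
      (fun s hs => hup s (by linarith [hs.1]) hs.2.le)
    rw [hyt] at this
    have e : Real.exp (t - r) ≤ Real.exp (ζ + η) := Real.exp_le_exp.2 (by linarith)
    have := mul_le_mul_of_nonneg_left e (sub_nonneg.2 hF1)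
    linarith
  have hlow2 : ∀ r, t - (ζ + η) - c ≤ r → r ≤ t → -(1/2) ≤ y r := by
    intro r h1 h2
    have hΛ : 0 ≤ ((2 + L) * (1 + η) + η) * c := by positivity
    rcases le_or_gt (t - (ζ + η)) r with h3 | h3
    · have := hlow1 r h3 h2
      linarith
    · have k := hlow1 (t - (ζ + η)) le_rfl (by linarith)
      have hm : AntitoneOn (fun s => y s - ((2 + L) * (1 + η) + η) * s) (Icc r (t - (ζ + η))) := by
        apply antitoneOn_of_hasDerivWithinAt_nonpos (convex_Icc _ _)
          (f' := fun s => y' s - ((2 + L) * (1 + η) + η) * 1)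
        · exact (hcont r _ (by linarith) (by linarith)).sub (by fun_prop)
        · intro s hs
          rw [interior_Icc] at hs
          exact ((H s (by linarith [hs.1]) (by linarith [hs.2])).1.sub
            ((hasDerivAt_id s).const_mul _)).hasDerivWithinAt
        · intro s hs
          rw [interior_Icc] at hs
          have := hlip s (by linarith [hs.1]) (by linarith [hs.2])
          linarith
      have := hm (left_mem_Icc.2 h3.le) (right_mem_Icc.2 h3.le) h3.le
      simp only at this
      have e : ((2 + L) * (1 + η) + η) * (t - (ζ + η) - r) ≤ ((2 + L) * (1 + η) + η) * c :=
        mul_le_mul_of_nonneg_left (by linarith) (by positivity)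
      linarith
  have hup2 : ∀ s, t - c ≤ s → s ≤ t → y' s ≤ Gv - y s := by
    intro s h1 h2
    obtain ⟨_, k1, k2, k3, k4, k5, k6⟩ := H s (by linarith) h2
    have := abs_le.1 k1
    have := abs_le.1 k3
    have := hlow2 (h s) (by linarith) (by linarith)
    nlinarith
  have hlow3 : ∀ r, t - c ≤ r → r ≤ t → Gv - (Gv - 1) * Real.exp c ≤ y r := by
    intro r h1 h2
    have := nic_cmp_up y y' Gv r t h2 (hcont r t (by linarith) le_rfl)
      (fun s hs => (H s (by linarith [hs.1]) hs.2.le).1)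
      (fun s hs => hup2 s (by linarith [hs.1]) hs.2.le)
    rw [hyt] at this
    have e : Real.exp (t - r) ≤ Real.exp c := Real.exp_le_exp.2 (by linarith)
    have := mul_le_mul_of_nonneg_left e (sub_nonneg.2 hG1)
    linarith
  obtain ⟨_, _, _, _, _, k5, k6⟩ := H t (by linarith) le_rfl
  rcases le_or_gt (t - c) (h t) with h1 | h1
  · have := mul_le_mul_of_nonneg_left (hlow3 (h t) h1 k6) hL.le
    linarith
  · have hk := nic_cmp_up y y' Fv (h t) (t - c) h1.le (hcont _ _ (by linarith) (by linarith))
      (fun s hs => (H s (by linarith [hs.1]) (by linarith [hs.2])).1)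
      (fun s hs => hup s (by linarith [hs.1]) (by linarith [hs.2]))
    have e0 := hlow3 (t - c) le_rfl (by linarith)
    have e1 : Real.exp (t - c - h t) ≤ Real.exp (ζ + η - c) := Real.exp_le_exp.2 (by linarith)
    have e2 : Fv - y (t - c) ≤ Fv - Gv + (Gv - 1) * Real.exp c := by linarith
    have e3 : 0 ≤ Fv - Gv + (Gv - 1) * Real.exp c :=
      add_nonneg (by linarith) (mul_nonneg (by linarith) (Real.exp_pos _).le)
    have e4 := mul_le_mul e2 e1 (Real.exp_pos _).le e3
    have := mul_le_mul_of_nonneg_left (show Fv - (Fv - Gv + (Gv - 1) * Real.exp c) *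
      Real.exp (ζ + η - c) ≤ y (h t) by linarith) hL.le
    linarith

theorem nic_rem (L a b m : ℝ) (hL : 0 < L) (hm : m ≤ 1) (ha : |a| ≤ m) (hb : |b| ≤ m) :
    |((L + a) * Real.exp (-b) - L) - (a - L * b)| ≤ (L + 2) * m ^ 2 := by
  have hm0 : 0 ≤ m := (abs_nonneg a).trans ha
  have h1 : |Real.exp (-b) - 1 - (-b)| ≤ (-b) ^ 2 :=
    Real.abs_exp_sub_one_sub_id_le (by rw [abs_neg]; linarith)
  have h2 : |Real.exp (-b) - 1| ≤ 2 * |(-b)| :=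
    Real.abs_exp_sub_one_le (by rw [abs_neg]; linarith)
  rw [abs_neg] at h2
  have h3 : (-b) ^ 2 ≤ m ^ 2 := by rw [neg_sq]; exact sq_le_sq' (by linarith [abs_le.1 hb]) (abs_le.1 hb).2
  have e : ((L + a) * Real.exp (-b) - L) - (a - L * b) =
    L * (Real.exp (-b) - 1 - (-b)) + a * (Real.exp (-b) - 1) := by ring
  rw [e]
  calc _ ≤ |L * (Real.exp (-b) - 1 - (-b))| + |a * (Real.exp (-b) - 1)| := abs_add_le _ _
    _ = L * |Real.exp (-b) - 1 - (-b)| + |a| * |Real.exp (-b) - 1| := by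
      rw [abs_mul, abs_mul, abs_of_pos hL]
    _ ≤ L * m ^ 2 + m * (2 * m) := by
      gcongr
      · linarith
      · linarith
    _ = (L + 2) * m ^ 2 := by ring

theorem nic_cross (y W : ℝ → ℝ) (d w s0 t : ℝ) (ht : s0 < t)
    (hb : ∀ s, s0 ≤ s → s < t → |y s| < W s) (heq : |y t| = W t)
    (hd : HasDerivAt y d t) (hW : HasDerivAt W w t) :
    ∃ σ : ℝ, |σ| = 1 ∧ σ * y t = W t ∧ w ≤ σ * d := by
  have key : ∀ σ : ℝ, |σ| = 1 → σ * y t = W t → w ≤ σ * d := by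
    intro σ h1 h2
    have := nic_left_max (fun s => σ * y s - W s) _ s0 t ht ((hd.const_mul σ).sub hW)
      (fun s k1 k2 => by
        have e1 := hb s k1 k2
        have e2 : σ * y s ≤ |y s| := by
          calc σ * y s ≤ |σ * y s| := le_abs_self _
            _ = |y s| := by rw [abs_mul, h1, one_mul]
        linarith)
    linarith
  rcases abs_choice (y t) with h | h
  · refine ⟨1, by simp, by linarith, key 1 (by simp) (by linarith)⟩
  · refine ⟨-1, by simp, by linarith, key (-1) (by simp) (by linarith)⟩

set_option maxHeartbeats 1000000 in
theorem nic_local {L T r0 s0 ζ : ℝ} {g h : ℝ → ℝ} (hL : 0 < L) (hζ : 0 ≤ ζ)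
    (hcond : (Real.exp ζ - 1) * L ≤ 1) (D : NicDel T r0 s0 g h)
    (hdel : ∀ ε > 0, ∃ N, ∀ s, N ≤ s → s - h s ≤ ζ + ε) :
    ∃ ε > 0, ∃ M ≥ (1:ℝ), ∃ lam > 0, ∀ x : ℝ → ℝ, NicSol L r0 s0 g h x → ∀ ι, ι ≤ ε →
      (∀ s, r0 ≤ s → s ≤ s0 → |x s - L| ≤ ι) →
      ∀ s, s0 ≤ s → |x s - L| ≤ M * Real.exp (-lam * (s - s0)) * ι := by
  obtain ⟨η, hη0, hη1, hlin⟩ := nic_lin L ζ hL hζ hcond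
  obtain ⟨N, hN⟩ := hdel η hη0
  have hT := D.hT
  obtain ⟨s1, hs1⟩ : ∃ s1, s1 = max N (s0 + T + 1) := ⟨_, rfl⟩
  have hs1N : N ≤ s1 := by rw [hs1]; exact le_max_left _ _
  have hs1T : s0 + T + 1 ≤ s1 := by rw [hs1]; exact le_max_right _ _
  obtain ⟨s2, hs2⟩ : ∃ s2, s2 = s1 + (ζ + 2) := ⟨_, rfl⟩
  have h02 : s0 < s2 := by linarith
  have hRT : 0 < ζ + 2 + T := by linarith
  have hlog : 0 < Real.log (1 + η) := Real.log_pos (by linarith)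
  obtain ⟨lam, hlam⟩ : ∃ lam, lam = min η (Real.log (1 + η) / (ζ + 2 + T)) := ⟨_, rfl⟩
  have hlam0 : 0 < lam := by rw [hlam]; exact lt_min hη0 (by positivity)
  have hlamη : lam ≤ η := by rw [hlam]; exact min_le_left _ _
  have hlamexp : Real.exp (lam * (ζ + 2 + T)) ≤ 1 + η := by
    have h1 : lam ≤ Real.log (1 + η) / (ζ + 2 + T) := by rw [hlam]; exact min_le_right _ _
    rw [le_div_iff₀ hRT] at h1
    calc _ ≤ Real.exp (Real.log (1 + η)) := Real.exp_le_exp.2 h1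
      _ = 1 + η := Real.exp_log (by linarith)
  obtain ⟨Λ, hΛ⟩ : ∃ Λ, Λ = 2 * (L + 2) + 1 := ⟨_, rfl⟩
  have hΛ0 : 0 < Λ := by linarith
  obtain ⟨P, hP⟩ : ∃ P, P = Real.exp (Λ * (s2 - s0)) := ⟨_, rfl⟩
  have hP1 : 1 ≤ P := by rw [hP]; exact Real.one_le_exp (mul_nonneg hΛ0.le (by linarith))
  have hP0 : 0 < P := by linarith
  obtain ⟨κ, hκ⟩ : ∃ κ, κ = min (1 / 2) (η / (4 * (L + 2))) := ⟨_, rfl⟩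
  have hκ0 : 0 < κ := by rw [hκ]; exact lt_min (by norm_num) (by positivity)
  have hκ1 : κ ≤ 1 / 2 := by rw [hκ]; exact min_le_left _ _
  have hκ2 : 4 * (L + 2) * κ ≤ η := by
    have : κ ≤ η / (4 * (L + 2)) := by rw [hκ]; exact min_le_right _ _
    rw [le_div_iff₀ (by positivity)] at this
    linarith
  refine ⟨κ / P / 2, by positivity, P * Real.exp (lam * (s2 - s0)), ?_, lam, hlam0, ?_⟩
  · have : 1 ≤ Real.exp (lam * (s2 - s0)) :=
      Real.one_le_exp (mul_nonneg hlam0.le (by linarith))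
    nlinarith
  intro x X ι hιε hinit
  have hι0 : 0 ≤ ι := (abs_nonneg _).trans (hinit s0 D.hr le_rfl)
  have hcy : ContinuousOn (fun s => x s - L) (Ici s0) :=
    (X.cont.mono (Ici_subset_Ici.2 D.hr)).sub continuousOn_const
  have hdy : ∀ s, s0 < s → HasDerivAt (fun s => x s - L)
      (((L + (x (g s) - L)) * Real.exp (-(x (h s) - L)) - L) - (x s - L)) s := by
    intro s hs
    have := (X.der s hs).sub_const L
    have e : ((L + (x (g s) - L)) * Real.exp (-(x (h s) - L)) - L) - (x s - L) =
        x (g s) * Real.exp (L - x (h s)) - x s := by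
      rw [show -(x (h s) - L) = L - x (h s) by ring]
      ring
    rw [e]
    exact this
  -- the main claim with strict constant
  have hmain : ∀ j, ι < j → j ≤ κ / P → ∀ s, s0 ≤ s →
      |x s - L| ≤ P * Real.exp (lam * (s2 - s0)) * Real.exp (-lam * (s - s0)) * j := by
    intro j hj1 hj2
    have hj0 : 0 < j := by linarith
    have hjP : j * P ≤ κ := by rwa [le_div_iff₀ hP0] at hj2
    -- phase 1
    obtain ⟨y, hy⟩ : ∃ y : ℝ → ℝ, y = fun s => x s - L := ⟨_, rfl⟩
    have hyv : ∀ s, y s = x s - L := fun s => by rw [hy]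
    rw [← hy] at hcy hdy
    simp only [← hyv] at hdy hinit
    have hph1 : ∀ s, s0 ≤ s → s ≤ s2 → |y s| < j * Real.exp (Λ * (s - s0)) := by
      intro s hs hss
      have := nic_first_pos_b (fun s => j * Real.exp (Λ * (s - s0)) - |y s|) s0 s hs
        (ContinuousOn.sub (by fun_prop) hcy.abs)
        (by
          have := hinit s0 D.hr le_rfl
          simp only [sub_self, mul_zero, Real.exp_zero, mul_one]
          linarith)
        (by
          intro t ht hts hb hnn
          by_contra hcon
          have hbt : ∀ u, s0 ≤ u → u < t → |y u| < j * Real.exp (Λ * (u - s0)) :=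
            fun u h1 h2 => by have := hb u h1 h2; linarith
          have heq : |y t| = j * Real.exp (Λ * (t - s0)) := by linarith
          have hWd : HasDerivAt (fun s => j * Real.exp (Λ * (s - s0)))
              (j * (Real.exp (Λ * (t - s0)) * (Λ * 1))) t :=
            ((((hasDerivAt_id t).sub_const s0).const_mul Λ).exp).const_mul j
          obtain ⟨σ, hσ, e1, e2⟩ := nic_cross y (fun s => j * Real.exp (Λ * (s - s0))) _ _ s0 t ht
            hbt heq (hdy t ht) hWd
          obtain ⟨m, hm⟩ : ∃ m, m = j * Real.exp (Λ * (t - s0)) := ⟨_, rfl⟩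
          have hjm : j ≤ m := by
            have : 1 ≤ Real.exp (Λ * (t - s0)) :=
              Real.one_le_exp (mul_nonneg hΛ0.le (by linarith))
            rw [hm]; nlinarith
          have hm1 : m ≤ 1 := by
            have : Real.exp (Λ * (t - s0)) ≤ P := by
              rw [hP]; exact Real.exp_le_exp.2 (mul_le_mul_of_nonneg_left (by linarith) hΛ0.le)
            have := mul_le_mul_of_nonneg_left this hj0.le
            linarith
          have hbd : ∀ u, r0 ≤ u → u ≤ t → |y u| ≤ m := by
            intro u h1 h2
            rcases lt_or_ge u s0 with h3 | h3
            · have := hinit u h1 h3.le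
              linarith
            rcases eq_or_lt_of_le h2 with h4 | h4
            · rw [h4, heq, hm]
            · have k1 := hbt u h3 h4
              have : Real.exp (Λ * (u - s0)) ≤ Real.exp (Λ * (t - s0)) :=
                Real.exp_le_exp.2 (mul_le_mul_of_nonneg_left (by linarith) hΛ0.le)
              have := mul_le_mul_of_nonneg_left this hj0.le
              linarith
          have hg := hbd (g t) (D.g0 t ht) (D.gs t ht)
          have hh := hbd (h t) (D.h0 t ht) (D.hs t ht)
          have ht' := hbd t (D.hr.trans ht.le) le_rfl
          have hr := abs_le.1 (nic_rem L (y (g t)) (y (h t)) m hL hm1 hg hh)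
          have hmm : (L + 2) * m ^ 2 ≤ (L + 2) * m :=
            mul_le_mul_of_nonneg_left (by nlinarith) (by linarith)
          have hg := abs_le.1 hg
          have hh := abs_le.1 hh
          have ht' := abs_le.1 ht'
          have hLh1 : L * y (h t) ≤ L * m := mul_le_mul_of_nonneg_left hh.2 hL.le
          have hLh2 : L * (-m) ≤ L * y (h t) := mul_le_mul_of_nonneg_left hh.1 hL.le
          have hD : |((L + y (g t)) * Real.exp (-y (h t)) - L) - y t| ≤ 2 * (L + 2) * m := by
            rw [abs_le]
            constructor <;> linarith
          have hσD : σ * (((L + y (g t)) * Real.exp (-y (h t)) - L) - y t) ≤ 2 * (L + 2) * m := by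
            refine le_trans (le_abs_self _) ?_
            rw [abs_mul, hσ, one_mul]
            exact hD
          have : j * (Real.exp (Λ * (t - s0)) * (Λ * 1)) = m * (2 * (L + 2) + 1) := by
            rw [hm, hΛ]; ring
          rw [this] at e2
          linarith)
      linarith
    -- phase 2
    obtain ⟨w, hw⟩ : ∃ w : ℝ → ℝ, w = fun s => j * P * Real.exp (-lam * (s - s2)) := ⟨_, rfl⟩
    have hwv : ∀ s, w s = j * P * Real.exp (-lam * (s - s2)) := fun s => by rw [hw]
    have hjP0 : 0 < j * P := by positivity
    have hwpos : ∀ s, 0 < w s := fun s => by rw [hwv]; positivity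
    have hearly : ∀ s, s0 ≤ s → s ≤ s2 → |y s| < w s := by
      intro s h1 h2
      have k1 := hph1 s h1 h2
      have k2 : Real.exp (Λ * (s - s0)) ≤ P := by
        rw [hP]; exact Real.exp_le_exp.2 (mul_le_mul_of_nonneg_left (by linarith) hΛ0.le)
      have k3 := mul_le_mul_of_nonneg_left k2 hj0.le
      have k4 : 1 ≤ Real.exp (-lam * (s - s2)) := Real.one_le_exp (by nlinarith)
      rw [hwv]
      nlinarith
    have hph2 : ∀ s, s0 ≤ s → 0 < w s - |y s| := by
      apply nic_first_pos _ s0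
      · exact ContinuousOn.sub (by rw [hw]; fun_prop) hcy.abs
      · have := hearly s0 le_rfl h02.le
        linarith
      intro t ht hb hnn
      rcases le_or_gt t s2 with h1 | h1
      · have := hearly t ht.le h1
        linarith
      by_contra hcon
      have hbt : ∀ u, s0 ≤ u → u < t → |y u| < w u := fun u h1 h2 => by
        have := hb u h1 h2; linarith
      have heq : |y t| = w t := by linarith
      have hWd : HasDerivAt w (j * P * (Real.exp (-lam * (t - s2)) * (-lam * 1))) t := by
        rw [hw]
        exact ((((hasDerivAt_id t).sub_const s2).const_mul (-lam)).exp).const_mul (j * P)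
      obtain ⟨σ, hσ, e1, e2⟩ := nic_cross y w _ _ s0 t ht hbt heq (hdy t ht) hWd
      obtain ⟨m, hm⟩ : ∃ m, m = w t := ⟨_, rfl⟩
      have hm0 : 0 < m := hm ▸ hwpos t
      have hmκ : m ≤ κ := by
        have : Real.exp (-lam * (t - s2)) ≤ 1 := Real.exp_le_one_iff.2 (by nlinarith)
        rw [hm, hwv]
        nlinarith
      have hdw : j * P * (Real.exp (-lam * (t - s2)) * (-lam * 1)) = -lam * m := by
        rw [hm, hwv]; ring
      rw [hdw] at e2
      have hbd : ∀ u, s0 ≤ u → t - (ζ + 2 + T) ≤ u → u ≤ t → |y u| ≤ (1 + η) * m := by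
        intro u k1 k2 k3
        have k4 : |y u| ≤ w u := by
          rcases eq_or_lt_of_le k3 with h4 | h4
          · rw [h4, heq]
          · exact (hbt u k1 h4).le
        have k5 : w u = m * Real.exp (lam * (t - u)) := by
          rw [hm, hwv, hwv, mul_assoc (j * P), ← Real.exp_add]; ring_nf
        have k6 : Real.exp (lam * (t - u)) ≤ 1 + η := by
          refine le_trans (Real.exp_le_exp.2 ?_) hlamexp
          exact mul_le_mul_of_nonneg_left (by linarith) hlam0.le
        have := mul_le_mul_of_nonneg_left k6 hm0.le
        linarith
      have habs : ∀ z b : ℝ, |z| ≤ b * m → |σ * z / m| ≤ b := by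
        intro z b hz
        rw [abs_div, abs_mul, hσ, one_mul, abs_of_pos hm0, div_le_iff₀ hm0]
        exact hz
      refine hlin (fun s => σ * y s / m)
        (fun s => σ * (((L + y (g s)) * Real.exp (-y (h s)) - L) - y s) / m) g h t ?_ ?_ ?_
      · intro s k1 k2
        have hss1 : s1 ≤ s := by linarith
        have hs0 : s0 < s := by linarith
        have a1 := D.gT s hs0
        have a2 := D.gs s hs0
        have a3 := D.hhT s hs0
        have a4 := D.hs s hs0
        have b1 := hbd s hs0.le (by linarith) k2
        have b2 := hbd (g s) (by linarith) (by linarith) (by linarith)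
        have b3 := hbd (h s) (by linarith) (by linarith) (by linarith)
        refine ⟨((hdy s hs0).const_mul σ).div_const m, ?_, habs _ _ b1, habs _ _ b2, habs _ _ b3,
          ?_, a4⟩
        · have hr := nic_rem L (y (g s)) (y (h s)) ((1 + η) * m) hL (by nlinarith) b2 b3
          have hr2 : (L + 2) * ((1 + η) * m) ^ 2 ≤ η * m := by
            have c1 : (1 + η) * m ≤ 2 * m := by nlinarith
            have c2 : ((1 + η) * m) ^ 2 ≤ (2 * m) ^ 2 :=
              pow_le_pow_left₀ (by positivity) c1 2
            have c3 := mul_le_mul_of_nonneg_left c2 (show 0 ≤ L + 2 by linarith)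
            have c4 : 4 * (L + 2) * m ≤ η :=
              le_trans (mul_le_mul_of_nonneg_left hmκ (by positivity)) hκ2
            have c5 := mul_le_mul_of_nonneg_right c4 hm0.le
            linarith
          have := habs _ _ (hr.trans hr2)
          convert this using 2
          field_simp
          ring
        · have := hN s (by linarith)
          linarith
      · show σ * y t / m = 1
        rw [e1, ← hm]; exact div_self hm0.ne'
      · show -η ≤ σ * _ / m
        rw [le_div_iff₀ hm0]
        nlinarith
    intro s hs
    have := hph2 s hs
    rw [← hyv]
    have e : P * Real.exp (lam * (s2 - s0)) * Real.exp (-lam * (s - s0)) * j = w s := by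
      rw [hwv, mul_assoc P, ← Real.exp_add]; ring_nf
    rw [e]; linarith
  intro s hs
  have hc : Continuous (fun j => P * Real.exp (lam * (s2 - s0)) * Real.exp (-lam * (s - s0)) * j) :=
    by fun_prop
  refine ge_of_tendsto (x := 𝓝[>] ι) ((hc.tendsto ι).mono_left nhdsWithin_le_nhds) ?_
  have : ι < κ / P := by
    have : 0 < κ / P := by positivity
    linarith
  filter_upwards [Ioo_mem_nhdsGT this] with j hj
  exact hmain j hj.1 hj.2.le s hs

theorem nic_time (b : ℝ → ℝ) (hb : Continuous b) (b0 b1 t0 : ℝ) (hb0 : 0 < b0)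
    (hlo : ∀ t, b0 ≤ b t) (hhi : ∀ t, b t ≤ b1) :
    ∃ B φ : ℝ → ℝ, B t0 = 0 ∧ (∀ s, B (φ s) = s) ∧ (∀ t, φ (B t) = t) ∧ Continuous φ ∧
      StrictMono φ ∧ StrictMono B ∧
      (∀ s, HasDerivAt φ (b (φ s))⁻¹ s) ∧ (∀ u t, u ≤ t → b0 * (t - u) ≤ B t - B u) ∧
      (∀ u t, u ≤ t → B t - B u ≤ b1 * (t - u)) ∧ (∀ u t, B t - B u = ∫ s in u..t, b s) := by
  obtain ⟨B, hB⟩ : ∃ B : ℝ → ℝ, B = fun t => ∫ s in t0..t, b s := ⟨_, rfl⟩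
  have hBd : ∀ t, HasDerivAt B (b t) t := fun t => by
    rw [hB]; exact (hb.integral_hasStrictDerivAt t0 t).hasDerivAt
  have hdiff : Differentiable ℝ B := fun t => (hBd t).differentiableAt
  have hsm : StrictMono B := strictMono_of_deriv_pos (fun t => by
    rw [(hBd t).deriv]; exact hb0.trans_le (hlo t))
  have hgrow : ∀ u t, u ≤ t → b0 * (t - u) ≤ B t - B u := fun u t hut =>
    mul_sub_le_image_sub_of_le_deriv hdiff (fun t => by rw [(hBd t).deriv]; exact hlo t) hut
  have hgrow2 : ∀ u t, u ≤ t → B t - B u ≤ b1 * (t - u) := fun u t hut =>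
    image_sub_le_mul_sub_of_deriv_le hdiff (fun t => by rw [(hBd t).deriv]; exact hhi t) hut
  have hB0 : B t0 = 0 := by rw [hB]; simp
  have hsurj : Function.Surjective B := by
    apply hdiff.continuous.surjective
    · have : Tendsto (fun t => b0 * (t - t0)) atTop atTop :=
        (tendsto_atTop_add_const_right _ (-t0) tendsto_id).const_mul_atTop hb0
      refine tendsto_atTop_mono' _ ?_ this
      filter_upwards [eventually_ge_atTop t0] with t ht
      have := hgrow t0 t ht
      linarith
    · have : Tendsto (fun t => b0 * (t - t0)) atBot atBot :=
        (tendsto_atBot_add_const_right _ (-t0) tendsto_id).const_mul_atBot hb0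
      refine tendsto_atBot_mono' _ ?_ this
      filter_upwards [eventually_le_atBot t0] with t ht
      have := hgrow t t0 ht
      linarith
  let e := hsm.orderIsoOfSurjective B hsurj
  have h1 : ∀ s, B (e.symm s) = s := fun s => e.apply_symm_apply s
  have h2 : ∀ t, e.symm (B t) = t := fun t => e.symm_apply_apply t
  refine ⟨B, e.symm, hB0, h1, h2, e.symm.continuous, e.symm.strictMono, hsm, ?_, hgrow, hgrow2, ?_⟩
  · intro s
    exact HasDerivAt.of_local_left_inverse e.symm.continuous.continuousAt (hBd _)
      (hb0.trans_le (hlo _)).ne' (Eventually.of_forall h1)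
  · intro u t
    rw [hB]
    exact intervalIntegral.integral_interval_sub_left (hb.intervalIntegrable _ _)
      (hb.intervalIntegrable _ _)

/- STATEMENT 9 (Theorem 3.2): for the one-pair Nicholson equation with p > δ > 0,
   with ζ_M := limsup_{t→∞} ∫_{t−σ(t)}^t β(s) ds, if either
   (i) log(p/δ) ≤ 2δζ_M/(e^{δζ_M} − δζ_M − 1) and δζ_M(2 + log(p/δ)) < 1, or
   (ii) log(p/δ) > 2δζ_M/(e^{δζ_M} − δζ_M − 1) and (e^{δζ_M} − 1) log(p/δ) ≤ 1,
   then K = (1/a) log(p/δ) is globally asymptotically stable: K is locally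
   exponentially stable and every solution with admissible data converges to K. -/
theorem nicholson_one_pair_global_asymptotic_stability
    (p a δ : ℝ) (hδ : 0 < δ) (hpδ : δ < p) (ha : 0 < a)
    (t₀ : ℝ) (β τ σ : ℝ → ℝ)
    (hβc : ContinuousOn β (Set.Ici t₀))
    (hτc : ContinuousOn τ (Set.Ici t₀)) (hσc : ContinuousOn σ (Set.Ici t₀))
    (hτ0 : ∀ t ∈ Set.Ici t₀, 0 ≤ τ t) (hσ0 : ∀ t ∈ Set.Ici t₀, 0 ≤ σ t)
    (βminus : ℝ) (hβminus : IsGLB (β '' Set.Ici t₀) βminus) (hβmpos : 0 < βminus)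
    (hβub : ∃ B, ∀ t ∈ Set.Ici t₀, β t ≤ B)
    (τbar : ℝ) (hτbar : IsLUB (τ '' Set.Ici t₀ ∪ σ '' Set.Ici t₀) τbar)
    (ζM : ℝ)
    (hζM : ζM = Filter.limsup (fun t => ∫ s in (t - σ t)..t, β s) Filter.atTop)
    (hcond :
      (Real.log (p / δ) ≤ 2 * δ * ζM / (Real.exp (δ * ζM) - δ * ζM - 1) ∧
        δ * ζM * (2 + Real.log (p / δ)) < 1) ∨
      (2 * δ * ζM / (Real.exp (δ * ζM) - δ * ζM - 1) < Real.log (p / δ) ∧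
        (Real.exp (δ * ζM) - 1) * Real.log (p / δ) ≤ 1))
    (K : ℝ) (hKdef : K = (1 / a) * Real.log (p / δ)) :
    LocallyExpStable1 p a δ t₀ τbar β τ σ K ∧
    ∀ x : ℝ → ℝ, NicholsonSolution1 p a δ t₀ τbar β τ σ x →
      Filter.Tendsto x Filter.atTop (nhds K) := by
  obtain ⟨Bub, hBub⟩ := hβub
  replace hBub : ∀ t, t₀ ≤ t → β t ≤ Bub := fun t ht => hBub t (mem_Ici.2 ht)
  replace hτ0 : ∀ t, t₀ ≤ t → 0 ≤ τ t := fun t ht => hτ0 t (mem_Ici.2 ht)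
  replace hσ0 : ∀ t, t₀ ≤ t → 0 ≤ σ t := fun t ht => hσ0 t (mem_Ici.2 ht)
  obtain ⟨L, hLdef⟩ : ∃ L, L = Real.log (p / δ) := ⟨_, rfl⟩
  rw [← hLdef] at hcond hKdef
  have hp : 0 < p := hδ.trans hpδ
  have hL : 0 < L := by rw [hLdef]; exact Real.log_pos ((one_lt_div hδ).2 hpδ)
  have hexpL : Real.exp L = p / δ := by rw [hLdef]; exact Real.exp_log (by positivity)
  have haK : a * K = L := by rw [hKdef]; field_simp
  have hτle : ∀ t, t₀ ≤ t → τ t ≤ τbar := fun t ht => hτbar.1 (Or.inl ⟨t, mem_Ici.2 ht, rfl⟩)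
  have hσle : ∀ t, t₀ ≤ t → σ t ≤ τbar := fun t ht => hτbar.1 (Or.inr ⟨t, mem_Ici.2 ht, rfl⟩)
  have hτbar0 : 0 ≤ τbar := (hτ0 t₀ le_rfl).trans (hτle t₀ le_rfl)
  have hβlo : ∀ t, t₀ ≤ t → βminus ≤ β t := fun t ht => hβminus.1 ⟨t, mem_Ici.2 ht, rfl⟩
  have hBub0 : 0 < Bub := hβmpos.trans_le ((hβlo t₀ le_rfl).trans (hBub t₀ le_rfl))
  have hbcont : Continuous (fun t => δ * β (max t t₀)) := by
    apply Continuous.mul continuous_const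
    exact hβc.comp_continuous (by fun_prop) (fun t => mem_Ici.2 (le_max_right _ _))
  obtain ⟨B, φ, hB0, hBφ, hφB, hφc, hφm, hBm, hφd, hBlo, hBhi, hBint⟩ :=
    nic_time (fun t => δ * β (max t t₀)) hbcont (δ * βminus) (δ * Bub) t₀ (by positivity)
      (fun t => mul_le_mul_of_nonneg_left (hβlo _ (le_max_right _ _)) hδ.le)
      (fun t => mul_le_mul_of_nonneg_left (hBub _ (le_max_right _ _)) hδ.le)
  have hφ0 : φ 0 = t₀ := by rw [← hB0, hφB]
  have hφpos : ∀ s, 0 < s → t₀ < φ s := fun s hs => by rw [← hφ0]; exact hφm hs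
  have hBint' : ∀ u t, t₀ ≤ u → u ≤ t → B t - B u = δ * ∫ s in u..t, β s := by
    intro u t hu hut
    rw [hBint, intervalIntegral.integral_const_mul]
    congr 1
    apply intervalIntegral.integral_congr
    intro s hs
    rw [uIcc_of_le hut] at hs
    simp only
    rw [max_eq_left (hu.trans hs.1)]
  have D : NicDel (δ * Bub * τbar) (B (t₀ - τbar)) 0 (fun s => B (φ s - τ (φ s)))
      (fun s => B (φ s - σ (φ s))) := by
    have aux : ∀ d : ℝ → ℝ, (∀ t, t₀ ≤ t → 0 ≤ d t) → (∀ t, t₀ ≤ t → d t ≤ τbar) →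
        ∀ s, 0 < s → B (t₀ - τbar) ≤ B (φ s - d (φ s)) ∧
          s - δ * Bub * τbar ≤ B (φ s - d (φ s)) ∧ B (φ s - d (φ s)) ≤ s := by
      intro d hd0 hd1 s hs
      have h1 := hφpos s hs
      have h2 := hd0 (φ s) h1.le
      have h3 := hd1 (φ s) h1.le
      refine ⟨hBm.monotone (by linarith), ?_, ?_⟩
      · have := hBhi (φ s - d (φ s)) (φ s) (by linarith)
        rw [hBφ] at this
        have h4 : δ * Bub * (φ s - (φ s - d (φ s))) ≤ δ * Bub * τbar :=
          mul_le_mul_of_nonneg_left (by linarith) (by positivity)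
        linarith
      · calc _ ≤ B (φ s) := hBm.monotone (by linarith)
          _ = s := hBφ s
    exact ⟨by rw [← hB0]; exact hBm.monotone (by linarith), by positivity,
      fun s hs => (aux τ hτ0 hτle s hs).1, fun s hs => (aux τ hτ0 hτle s hs).2.1,
      fun s hs => (aux τ hτ0 hτle s hs).2.2, fun s hs => (aux σ hσ0 hσle s hs).1,
      fun s hs => (aux σ hσ0 hσle s hs).2.1, fun s hs => (aux σ hσ0 hσle s hs).2.2⟩
  -- limsup facts
  have hI : ∀ t, t₀ + τbar ≤ t → δ * (∫ s in (t - σ t)..t, β s) = B t - B (t - σ t) := by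
    intro t ht
    have h1 := hσle t (by linarith)
    have h2 := hσ0 t (show t₀ ≤ t by linarith)
    rw [hBint' (t - σ t) t (by linarith) (by linarith)]
  have hIlo : ∀ t, t₀ + τbar ≤ t → 0 ≤ ∫ s in (t - σ t)..t, β s := by
    intro t ht
    have h2 := hσ0 t (show t₀ ≤ t by linarith)
    have := hI t ht
    have h3 : B (t - σ t) ≤ B t := hBm.monotone (by linarith)
    by_contra hc
    push Not at hc
    have := mul_neg_of_pos_of_neg hδ hc
    linarith
  have hIhi : ∀ t, t₀ + τbar ≤ t → (∫ s in (t - σ t)..t, β s) ≤ Bub * τbar := by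
    intro t ht
    have h1 := hσle t (by linarith)
    have h2 := hσ0 t (show t₀ ≤ t by linarith)
    have h3 := hBhi (t - σ t) t (by linarith)
    have h4 : δ * Bub * (t - (t - σ t)) ≤ δ * Bub * τbar :=
      mul_le_mul_of_nonneg_left (by linarith) (by positivity)
    have := hI t ht
    exact le_of_mul_le_mul_left (by linarith : δ * _ ≤ δ * _) hδ
  have hIbu : IsBoundedUnder (· ≤ ·) atTop (fun t => ∫ s in (t - σ t)..t, β s) :=
    isBoundedUnder_of_eventually_le (a := Bub * τbar)
      ((eventually_ge_atTop (t₀ + τbar)).mono fun t ht => hIhi t ht)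
  have hζ0 : 0 ≤ ζM := by
    rw [hζM]
    exact le_limsup_of_frequently_le
      (((eventually_ge_atTop (t₀ + τbar)).mono fun t ht => hIlo t ht).frequently) hIbu
  have hdel : ∀ ε > 0, ∃ N, ∀ s, N ≤ s → s - B (φ s - σ (φ s)) ≤ δ * ζM + ε := by
    intro ε hε
    have hεδ : 0 < ε / δ := by positivity
    have h1 : ∀ᶠ t in atTop, (∫ s in (t - σ t)..t, β s) < ζM + ε / δ :=
      eventually_lt_of_limsup_lt (by rw [← hζM]; linarith) hIbu
    obtain ⟨N, hN⟩ := eventually_atTop.1 (h1.and (eventually_ge_atTop (t₀ + τbar)))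
    refine ⟨B N, fun s hs => ?_⟩
    have h2 : N ≤ φ s := by rw [← hφB N]; exact hφm.monotone hs
    obtain ⟨h3, h4⟩ := hN (φ s) h2
    have h5 := hI (φ s) h4
    rw [hBφ] at h5
    rw [← h5]
    have h6 := mul_le_mul_of_nonneg_left h3.le hδ.le
    have h7 : δ * (ζM + ε / δ) = δ * ζM + ε := by field_simp
    linarith
  have hζ : 0 ≤ δ * ζM := by positivity
  -- both alternatives give the sharp condition
  have hC : (Real.exp (δ * ζM) - 1) * L ≤ 1 := by
    rcases hcond with ⟨h1, h2⟩ | ⟨_, h2⟩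
    · rcases eq_or_lt_of_le hζ with h | h
      · rw [← h]; simp
      · have h3 : 0 < Real.exp (δ * ζM) - δ * ζM - 1 := by
          have := Real.add_one_lt_exp h.ne'
          linarith
        rw [le_div_iff₀ h3] at h1
        linarith
    · exact h2
  have hX : ∀ x : ℝ → ℝ, NicholsonSolution1 p a δ t₀ τbar β τ σ x →
      NicSol L (B (t₀ - τbar)) 0 (fun s => B (φ s - τ (φ s))) (fun s => B (φ s - σ (φ s)))
        (fun s => a * x (φ s)) := by
    rintro x ⟨x1, x2, x3, x4⟩
    refine ⟨?_, ?_, ?_, ?_⟩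
    · apply ContinuousOn.mul continuousOn_const
      apply x1.comp hφc.continuousOn
      intro s hs
      have := hφm.monotone (show B (t₀ - τbar) ≤ s from hs)
      rw [hφB] at this
      exact this
    · intro s hs
      have h1 := hφpos s hs
      have h2 := (x2 (φ s) (mem_Ici.2 h1.le)).hasDerivAt (Ici_mem_nhds h1)
      have h3 := (h2.comp s (hφd s)).const_mul a
      simp only [max_eq_left h1.le] at h3
      have hβp : 0 < β (φ s) := hβmpos.trans_le (hβlo _ h1.le)
      have e : a * (x (φ (B (φ s - τ (φ s))))) *
          Real.exp (L - a * x (φ (B (φ s - σ (φ s))))) - a * x (φ s) =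
          a * (β (φ s) * (p * x (φ s - τ (φ s)) * Real.exp (-a * x (φ s - σ (φ s))) -
            δ * x (φ s)) * (δ * β (φ s))⁻¹) := by
        rw [hφB, hφB, sub_eq_add_neg L, Real.exp_add, hexpL, ← neg_mul]
        field_simp
      rw [e]
      exact h3
    · intro s h1 h2
      have h3 := hφm.monotone h1
      rw [hφB] at h3
      have h4 := hφm h2
      rw [hφ0] at h4
      exact mul_nonneg ha.le (x3 _ h3 h4)
    · rw [hφ0]; exact mul_pos ha x4
  constructor
  · obtain ⟨ε, hε, M, hM, lam, hlam, H⟩ := nic_local hL hζ hC D hdel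
    refine ⟨ε / a, by positivity, M, hM, lam * (δ * βminus), by positivity, ?_⟩
    intro x hx hsup t ht
    have ht : t₀ ≤ t := ht
    obtain ⟨I, hIdef⟩ : ∃ I, I = sSup ((fun s => |x s - K|) '' Set.Icc (t₀ - τbar) t₀) := ⟨_, rfl⟩
    rw [← hIdef] at hsup ⊢
    have hbdd : BddAbove ((fun s => |x s - K|) '' Set.Icc (t₀ - τbar) t₀) :=
      isCompact_Icc.bddAbove_image
        ((hx.1.mono Icc_subset_Ici_self).sub continuousOn_const).abs
    have hle : ∀ s, t₀ - τbar ≤ s → s ≤ t₀ → |x s - K| ≤ I := fun s h1 h2 => by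
      rw [hIdef]; exact le_csSup hbdd ⟨s, ⟨h1, h2⟩, rfl⟩
    have hI0 : 0 ≤ I := (abs_nonneg _).trans (hle t₀ (by linarith) le_rfl)
    have habs : ∀ z, |a * z - L| = a * |z - K| := fun z => by
      rw [← haK, ← mul_sub, abs_mul, abs_of_pos ha]
    have := H _ (hX x hx) (a * I) (by rw [le_div_iff₀ ha] at hsup; linarith)
      (fun s h1 h2 => by
        have h3 := hφm.monotone h1
        rw [hφB] at h3
        have h4 := hφm.monotone h2
        rw [hφ0] at h4
        rw [habs]
        exact mul_le_mul_of_nonneg_left (hle _ h3 h4) ha.le) (B t)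
      (by rw [← hB0]; exact hBm.monotone ht)
    rw [hφB, habs, sub_zero] at this
    have h5 : |x t - K| ≤ M * Real.exp (-lam * B t) * I :=
      le_of_mul_le_mul_left (by linarith) ha
    refine h5.trans ?_
    have h6 := hBlo t₀ t ht
    rw [hB0, sub_zero] at h6
    have h7 : Real.exp (-lam * B t) ≤ Real.exp (-(lam * (δ * βminus)) * (t - t₀)) :=
      Real.exp_le_exp.2 (by nlinarith)
    gcongr
  · intro x hx
    have h1 := nic_conv hL hC D hdel (hX x hx)
    have hBt : Tendsto B atTop atTop := by
      rw [tendsto_atTop_atTop]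
      intro c
      refine ⟨φ c, fun t ht => ?_⟩
      rw [← hBφ c]; exact hBm.monotone ht
    have h2 := (h1.comp hBt).const_mul a⁻¹
    have h3 : a⁻¹ * L = K := by rw [← haK]; field_simp
    rw [h3] at h2
    refine h2.congr (fun t => ?_)
    simp only [Function.comp, hφB]
    field_simp
end

section
/- (Theorem 3.3, main result.) Consider the Nicholson equation with m pairs of delays. Assume p := Σ_{j=1}^m p_j > δ, let K > 0 satisfy Σ_j p_j e^{−a_j K} = δ, let a⁺ := max_j a_j, a⁻ := min_j a_j and ζ_M := max_{1≤j≤m} limsup_{t→∞} ∫_{t−σ_j(t)}^{t} β(s) ds. If (H1) a⁺/a⁻ < 3/2 and (H2) a⁺K(e^{δζ_M} − 1) ≤ 1, then K is globally attractive: every solution x with admissible initial data satisfies lim_{t→∞} x(t) = K. -/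
/-- A solution of the Nicholson equation
`x'(t) = β(t)(Σ_j p_j x(t−τ_j(t)) e^{−a_j x(t−σ_j(t))} − δ x(t))`, `t ≥ t₀`,
defined on `[t₀ − τbar, ∞)`, with admissible initial data. -/
def NicholsonSolution (m : ℕ) (p a : Fin m → ℝ) (δ t₀ τbar : ℝ)
    (β : ℝ → ℝ) (τ σ : Fin m → ℝ → ℝ) (x : ℝ → ℝ) : Prop :=
  ContinuousOn x (Set.Ici (t₀ - τbar)) ∧
  (∀ t ∈ Set.Ici t₀, HasDerivWithinAt x
      (β t * ((∑ j, p j * x (t - τ j t) * Real.exp (-(a j) * x (t - σ j t))) - δ * x t))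
      (Set.Ici t₀) t) ∧
  (∀ s, t₀ - τbar ≤ s → s < t₀ → 0 ≤ x s) ∧
  0 < x t₀

open Set Filter Topology in
lemma nic_duhamel (x A β G : ℝ → ℝ) (c k s1 s2 : ℝ) (h12 : s1 ≤ s2)
    (hx : ContinuousOn x (Icc s1 s2))
    (hxd : ∀ s ∈ Ioo s1 s2, HasDerivAt x (β s * G s) s)
    (hA : ∀ s, HasDerivAt A (β s) s) (hβ : ∀ s ∈ Ioo s1 s2, 0 ≤ β s)
    (h : ∀ s ∈ Ioo s1 s2, G s + k * (x s - c) ≤ 0) :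
    (x s2 - c) * Real.exp (k * (A s2 - A s1)) ≤ x s1 - c := by
  have hAc : Continuous A := continuous_iff_continuousAt.2 fun s => (hA s).continuousAt
  have key : AntitoneOn (fun s => (x s - c) * Real.exp (k * (A s - A s1))) (Icc s1 s2) := by
    apply antitoneOn_of_hasDerivWithinAt_nonpos (convex_Icc _ _)
      (f' := fun s => β s * G s * Real.exp (k * (A s - A s1)) +
        (x s - c) * (Real.exp (k * (A s - A s1)) * (k * β s)))
    · apply ContinuousOn.mul (hx.sub continuousOn_const)
      fun_prop
    · intro s hs
      rw [interior_Icc] at hs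
      have h1 := (hxd s hs).sub_const c
      have h2 := (((hA s).sub_const (A s1)).const_mul k).exp
      exact (h1.mul h2).hasDerivWithinAt
    · intro s hs
      rw [interior_Icc] at hs
      have e : β s * G s * Real.exp (k * (A s - A s1)) +
        (x s - c) * (Real.exp (k * (A s - A s1)) * (k * β s))
        = (β s * Real.exp (k * (A s - A s1))) * (G s + k * (x s - c)) := by ring
      simp only [e]
      exact mul_nonpos_of_nonneg_of_nonpos (mul_nonneg (hβ s hs) (Real.exp_pos _).le) (h s hs)
  have := key (left_mem_Icc.2 h12) (right_mem_Icc.2 h12) h12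
  simpa using this

open Set Filter Topology in
lemma nic_duhamel' (x A β G : ℝ → ℝ) (c k s1 s2 : ℝ) (h12 : s1 ≤ s2)
    (hx : ContinuousOn x (Icc s1 s2))
    (hxd : ∀ s ∈ Ioo s1 s2, HasDerivAt x (β s * G s) s)
    (hA : ∀ s, HasDerivAt A (β s) s) (hβ : ∀ s ∈ Ioo s1 s2, 0 ≤ β s)
    (h : ∀ s ∈ Ioo s1 s2, 0 ≤ G s + k * (x s - c)) :
    x s1 - c ≤ (x s2 - c) * Real.exp (k * (A s2 - A s1)) := by
  have := nic_duhamel (fun s => - x s) A β (fun s => - G s) (-c) k s1 s2 h12 hx.neg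
    (fun s hs => by rw [mul_neg]; exact (hxd s hs).neg) hA hβ (fun s hs => by linarith [h s hs])
  linarith

open Set Filter Topology in
lemma nic_fluct_s10 (f f' : ℝ → ℝ) (t₀ Lo c η T : ℝ) (hd : ∀ t > t₀, HasDerivAt f (f' t) t)
    (hlo : ∀ t > t₀, Lo ≤ f t) (hfr : ∀ T, ∃ t ≥ T, c < f t) (hη : 0 < η) :
    ∃ t ≥ T, c ≤ f t ∧ -η ≤ f' t := by
  by_contra! hcon
  set T' := max T (t₀ + 1) with hT'
  have hTt : t₀ < T' := lt_of_lt_of_le (by linarith) (le_max_right _ _)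
  have hTT : T ≤ T' := le_max_left _ _
  have hcont : ∀ t, ∀ s, T' ≤ t → ContinuousOn f (Icc t s) := fun t s ht u hu =>
    (hd u (by linarith [hu.1])).continuousAt.continuousWithinAt
  have h2 : ∃ t2 ≥ T', f t2 ≤ c := by
    by_contra! h
    set S := T' + (f T' - Lo) / η + 1 with hS
    have hpos : 0 ≤ (f T' - Lo) / η := div_nonneg (by linarith [hlo T' hTt]) hη.le
    have hTS : T' ≤ S := by linarith
    have := image_le_of_deriv_right_lt_deriv_boundary (f := f) (f' := f') (a := T') (b := S)
      (B := fun t => f T' - η * (t - T')) (B' := fun t => -η)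
      (hcont T' S le_rfl)
      (fun t ht => (hd t (by linarith [ht.1])).hasDerivWithinAt) (by simp)
      (fun t => by
        have := (((hasDerivAt_id t).sub_const T').const_mul η).const_sub (f T')
        simpa using this)
      (fun t ht _ => hcon t (by linarith [ht.1]) (h t ht.1).le)
      (right_mem_Icc.2 hTS)
    have h3 := hlo S (by linarith)
    have h4 : η * (S - T') = f T' - Lo + η := by
      rw [hS]; field_simp; ring
    linarith
  obtain ⟨t2, ht2, hf2⟩ := h2
  obtain ⟨t3, ht3, hf3⟩ := hfr t2
  have := image_le_of_deriv_right_lt_deriv_boundary (f := f) (f' := f') (a := t2) (b := t3)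
      (B := fun t => c) (B' := fun t => 0)
      (hcont t2 t3 ht2)
      (fun t ht => (hd t (by linarith [ht.1])).hasDerivWithinAt) (by simpa using hf2)
      (fun t => hasDerivAt_const _ _)
      (fun t ht he => by linarith [hcon t (by linarith [ht.1]) he.ge])
      (right_mem_Icc.2 ht3)
  linarith

lemma nic_g (s : ℝ) (hs : 0 < s) : (Real.exp s - 1) * (2 - s) < 2 * s := by
  have key : StrictMonoOn (fun s : ℝ => 2 * s - (Real.exp s - 1) * (2 - s)) (Set.Ici 0) := by
    apply strictMonoOn_of_hasDerivWithinAt_pos (convex_Ici 0)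
      (f' := fun s => 2 - (Real.exp s * (2 - s) + (Real.exp s - 1) * (-1)))
    · fun_prop
    · intro s _
      have h1 := ((hasDerivAt_id s).const_mul (2:ℝ))
      have h2 := (Real.hasDerivAt_exp s).sub_const 1
      have h3 := (hasDerivAt_id s).const_sub 2
      have := h1.sub (h2.mul h3)
      simp only [mul_one] at this
      exact this.hasDerivWithinAt
    · intro s hs
      rw [interior_Ici] at hs
      have hs : 0 < s := hs
      have h1 : -s + 1 < Real.exp (-s) := Real.add_one_lt_exp (by linarith)
      have h2 : Real.exp s * Real.exp (-s) = 1 := by rw [← Real.exp_add]; simp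
      have h3 := Real.exp_pos s
      nlinarith
  have := key (Set.mem_Ici.2 le_rfl) (Set.mem_Ici.2 hs.le) hs
  simp at this
  linarith

lemma nic_alg_s10 (M l K q E : ℝ) (hl : 0 < l) (hlK : l ≤ K) (hKM : K ≤ M) (hq : 0 < q)
    (hE : q * K * E ≤ 1)
    (h1 : K - l ≤ l * (1 - Real.exp (-(q * (M - K)))) * E)
    (h2 : M - K ≤ M * (Real.exp (q * (K - l)) - 1) * E) : M = K ∧ l = K := by
  have hK : 0 < K := by linarith
  rcases hKM.eq_or_lt with h | hu
  · subst h
    simp at h1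
    exact ⟨rfl, by linarith⟩
  rcases hlK.eq_or_lt with h | hv
  · subst h
    simp at h2
    exact ⟨by linarith, rfl⟩
  exfalso
  set u := q * (M - K) with hud
  set v := q * (K - l) with hvd
  set A := q * K with hAd
  have hu0 : 0 < u := mul_pos hq (by linarith)
  have hv0 : 0 < v := mul_pos hq (by linarith)
  have hA0 : 0 < A := mul_pos hq hK
  set w := 1 - Real.exp (-u) with hw
  set r := Real.exp v - 1 with hr
  have hw0 : 0 < w := by
    have : Real.exp (-u) < 1 := by rw [← Real.exp_zero]; exact Real.exp_lt_exp.2 (by linarith)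
    linarith
  have hr0 : 0 < r := by
    have := Real.add_one_lt_exp hv0.ne'
    linarith
  have e1 : v * A ≤ (A - v) * w := by
    have hl' : A - v = q * l := by rw [hAd, hvd]; ring
    rw [hl']
    calc v * A = q * A * (K - l) := by rw [hvd]; ring
      _ ≤ q * A * (l * w * E) := by gcongr
      _ = (q * l * w) * (A * E) := by ring
      _ ≤ (q * l * w) * 1 := by gcongr
      _ = _ := by ring
  have hM : 0 < M := by linarith
  have e2 : u * A ≤ (A + u) * r := by
    have hl' : A + u = q * M := by rw [hAd, hud]; ring
    rw [hl']
    calc u * A = q * A * (M - K) := by rw [hud]; ring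
      _ ≤ q * A * (M * r * E) := by gcongr
      _ = (q * M * r) * (A * E) := by ring
      _ ≤ (q * M * r) * 1 := by gcongr
      _ = _ := by ring
  have g1 := nic_g v hv0
  rw [← hr] at g1
  have g2 : 2 * (u - w) > u * w := by
    have := nic_g u hu0
    have h5 : Real.exp u * Real.exp (-u) = 1 := by rw [← Real.exp_add]; simp
    have h6 : Real.exp u * w = Real.exp u - 1 := by rw [hw]; linarith
    have h7 := Real.exp_pos u
    have h8 : Real.exp u * (w * (2 - u)) < Real.exp u * (2 * u * (1 - w)) := by
      have : Real.exp u * (1 - w) = 1 := by rw [mul_sub, h6]; ring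
      calc _ = (Real.exp u * w) * (2 - u) := by ring
        _ < 2 * u := by rw [h6]; linarith
        _ = 2 * u * (Real.exp u * (1 - w)) := by rw [this]; ring
        _ = _ := by ring
    have := lt_of_mul_lt_mul_left h8 h7.le
    linarith
  have i1 : 1 / A ≤ 1 / v - 1 / w := by
    rw [div_sub_div _ _ hv0.ne' hw0.ne', div_le_div_iff₀ hA0 (by positivity)]
    linarith
  have i2 : 1 / r - 1 / u ≤ 1 / A := by
    rw [div_sub_div _ _ hr0.ne' hu0.ne', div_le_div_iff₀ (by positivity) hA0]
    linarith
  have i3 : 1 / v - 1 / r < 1 / 2 := by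
    rw [div_sub_div _ _ hv0.ne' hr0.ne', div_lt_div_iff₀ (by positivity) (by norm_num)]
    linarith
  have i4 : 1 / 2 < 1 / w - 1 / u := by
    rw [div_sub_div _ _ hw0.ne' hu0.ne', div_lt_div_iff₀ (by norm_num) (by positivity)]
    linarith
  linarith

open Set Filter Topology in
lemma nic_cpt (S : Set (ℝ × ℝ)) (hS : IsCompact S) (C : Set (ℝ × ℝ × ℝ)) (hC : IsClosed C)
    (l : ℝ) (hl : 0 < l) (h : ∀ ε, 0 < ε → ε < l → ∃ z ∈ S, (ε, z) ∈ C) :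
    ∃ z ∈ S, ((0:ℝ), z) ∈ C := by
  have hpos : ∀ n : ℕ, 0 < l / 2 * (1 / ((n:ℝ) + 1)) := fun n => by positivity
  have hlt : ∀ n : ℕ, l / 2 * (1 / ((n:ℝ) + 1)) < l := fun n => by
    have : 1 / ((n:ℝ) + 1) ≤ 1 := by
      rw [div_le_one (by positivity)]
      have : (0:ℝ) ≤ n := by positivity
      linarith
    nlinarith
  choose z hzS hzC using fun n : ℕ => h _ (hpos n) (hlt n)
  obtain ⟨z0, hz0, φ, hφ, hlim⟩ := hS.tendsto_subseq hzS
  refine ⟨z0, hz0, ?_⟩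
  have h0 : Tendsto (fun n : ℕ => l / 2 * (1 / ((n:ℝ) + 1))) atTop (𝓝 0) := by
    have := (tendsto_one_div_add_atTop_nhds_zero_nat (𝕜 := ℝ)).const_mul (l / 2)
    simpa using this
  have h1 := (h0.comp hφ.tendsto_atTop).prodMk_nhds hlim
  exact hC.mem_of_tendsto h1 (Eventually.of_forall fun n => hzC (φ n))

structure NicSetup {m : ℕ} (p a : Fin m → ℝ) (δ t₀ T b Bm : ℝ) (β A : ℝ → ℝ)
    (τ σ : Fin m → ℝ → ℝ) (x : ℝ → ℝ) : Prop where
  hm : 1 ≤ m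
  hp : ∀ j, 0 < p j
  ha : ∀ j, 0 < a j
  hδ : 0 < δ
  hb : 0 < b
  hβb : ∀ t, t₀ ≤ t → b ≤ β t
  hβB : ∀ t, t₀ ≤ t → β t ≤ Bm
  hT : 0 ≤ T
  hτ0 : ∀ j t, t₀ ≤ t → 0 ≤ τ j t
  hτT : ∀ j t, t₀ ≤ t → τ j t ≤ T
  hσ0 : ∀ j t, t₀ ≤ t → 0 ≤ σ j t
  hσT : ∀ j t, t₀ ≤ t → σ j t ≤ T
  hA : ∀ t, HasDerivAt A (β t) t
  xc : ContinuousOn x (Set.Ici (t₀ - T))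
  xd : ∀ t, t₀ < t → HasDerivAt x
    (β t * ((∑ j, p j * x (t - τ j t) * Real.exp (-(a j) * x (t - σ j t))) - δ * x t)) t
  x0 : ∀ s, t₀ - T ≤ s → s < t₀ → 0 ≤ x s
  xt0 : 0 < x t₀

namespace NicSetup
open Set Filter Topology

variable {m : ℕ} {p a : Fin m → ℝ} {δ t₀ T b Bm : ℝ} {β A : ℝ → ℝ}
    {τ σ : Fin m → ℝ → ℝ} {x : ℝ → ℝ}

lemma contIcc (h : NicSetup p a δ t₀ T b Bm β A τ σ x) (u v : ℝ) (hu : t₀ - T ≤ u) :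
    ContinuousOn x (Icc u v) := h.xc.mono fun s hs => le_trans hu hs.1

lemma βnn (h : NicSetup p a δ t₀ T b Bm β A τ σ x) (t : ℝ) (ht : t₀ ≤ t) : 0 < β t :=
  h.hb.trans_le (h.hβb t ht)

lemma Amono (h : NicSetup p a δ t₀ T b Bm β A τ σ x) (u v : ℝ) (hu : t₀ ≤ u) (huv : u ≤ v) :
    0 ≤ A v - A u := by
  have : MonotoneOn A (Ici t₀) := by
    apply monotoneOn_of_hasDerivWithinAt_nonneg (convex_Ici _) (f' := β)
    · exact fun t _ => (h.hA t).continuousAt.continuousWithinAt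
    · exact fun t _ => (h.hA t).hasDerivWithinAt
    · intro t ht
      rw [interior_Ici] at ht
      exact (h.βnn t (le_of_lt ht)).le
  linarith [this (mem_Ici.2 hu) (mem_Ici.2 (hu.trans huv)) huv]

lemma Aub (h : NicSetup p a δ t₀ T b Bm β A τ σ x) (u v : ℝ) (hu : t₀ ≤ u) (huv : u ≤ v) :
    A v - A u ≤ Bm * (v - u) := by
  have : MonotoneOn (fun t => Bm * t - A t) (Ici t₀) := by
    apply monotoneOn_of_hasDerivWithinAt_nonneg (convex_Ici _) (f' := fun t => Bm - β t)
    · exact fun t _ => ((continuous_const.mul continuous_id).continuousAt.sub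
        (h.hA t).continuousAt).continuousWithinAt
    · intro t _
      have := ((hasDerivAt_id t).const_mul Bm).sub (h.hA t)
      simp only [mul_one] at this
      exact this.hasDerivWithinAt
    · intro t ht
      rw [interior_Ici] at ht
      linarith [h.hβB t (le_of_lt ht)]
  have := this (mem_Ici.2 hu) (mem_Ici.2 (hu.trans huv)) huv
  simp only at this
  linarith

lemma BmPos (h : NicSetup p a δ t₀ T b Bm β A τ σ x) : 0 < Bm :=
  (h.βnn t₀ le_rfl).trans_le (h.hβB t₀ le_rfl)

lemma pos (h : NicSetup p a δ t₀ T b Bm β A τ σ x) : ∀ t, t₀ ≤ t → 0 < x t := by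
  by_contra! hcon
  obtain ⟨t1, ht1, hx1⟩ := hcon
  set Z := Ici t₀ ∩ x ⁻¹' (Iic 0) with hZ
  have hT := h.hT
  have hZc : IsClosed Z :=
    (h.xc.mono (fun s (hs : t₀ ≤ s) => (by linarith : t₀ - T ≤ s))).preimage_isClosed_of_isClosed
      isClosed_Ici isClosed_Iic
  have hZb : BddBelow Z := ⟨t₀, fun s hs => hs.1⟩
  have hmem := hZc.csInf_mem ⟨t1, ht1, hx1⟩ hZb
  set t2 := sInf Z
  have ht2 : t₀ ≤ t2 := hmem.1
  have hx2 : x t2 ≤ 0 := hmem.2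
  have hbefore : ∀ s, t₀ - T ≤ s → s < t2 → 0 ≤ x s := by
    intro s hs hst
    rcases lt_or_ge s t₀ with h1 | h1
    · exact h.x0 s hs h1
    · by_contra! h3
      have : s ∈ Z := ⟨h1, h3.le⟩
      linarith [csInf_le hZb this]
  have := nic_duhamel' x A β _ 0 δ t₀ t2 ht2 (h.contIcc t₀ t2 (by linarith))
    (fun s hs => h.xd s hs.1) h.hA (fun s hs => (h.βnn s hs.1.le).le) (by
      intro s hs
      have : 0 ≤ ∑ j, p j * x (s - τ j s) * Real.exp (-(a j) * x (s - σ j s)) := by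
        apply Finset.sum_nonneg
        intro j _
        have h1 := h.hτ0 j s hs.1.le
        have h2 := h.hτT j s hs.1.le
        have := hbefore (s - τ j s) (by linarith [hs.1]) (by linarith [hs.2])
        have := (h.hp j).le
        positivity
      linarith)
  have h4 := Real.exp_pos (δ * (A t2 - A t₀))
  nlinarith [h.xt0]

lemma nn (h : NicSetup p a δ t₀ T b Bm β A τ σ x) : ∀ t, t₀ - T ≤ t → 0 ≤ x t := by
  intro t ht
  rcases lt_or_ge t t₀ with h1 | h1
  · exact h.x0 t ht h1
  · exact (h.pos t h1).le

lemma ratio (h : NicSetup p a δ t₀ T b Bm β A τ σ x) (u v : ℝ) (hu : t₀ ≤ u) (huv : u ≤ v)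
    (hvT : v - u ≤ T) : x u ≤ x v * Real.exp (δ * (Bm * T)) := by
  have := nic_duhamel' x A β _ 0 δ u v huv (h.contIcc u v (by linarith [h.hT]))
    (fun s hs => h.xd s (by linarith [hs.1])) h.hA
    (fun s hs => (h.βnn s (by linarith [hs.1])).le) (by
      intro s hs
      have hs0 : t₀ ≤ s := by linarith [hs.1]
      have : 0 ≤ ∑ j, p j * x (s - τ j s) * Real.exp (-(a j) * x (s - σ j s)) := by
        apply Finset.sum_nonneg
        intro j _
        have h2 := h.hτT j s hs0
        have := h.nn (s - τ j s) (by linarith [hs.1])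
        have := (h.hp j).le
        positivity
      linarith)
  have h1 := h.Aub u v hu huv
  have h2 : A v - A u ≤ Bm * T := h1.trans (mul_le_mul_of_nonneg_left hvT h.BmPos.le)
  have h3 := h.pos v (hu.trans huv)
  have h4 : Real.exp (δ * (A v - A u)) ≤ Real.exp (δ * (Bm * T)) :=
    Real.exp_le_exp.2 (mul_le_mul_of_nonneg_left h2 h.hδ.le)
  nlinarith

lemma growth (h : NicSetup p a δ t₀ T b Bm β A τ σ x) : ∃ C, 0 < C ∧
    ∀ u v, t₀ + T ≤ u → u ≤ v → v - u ≤ T → x v ≤ x u * C := by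
  set k := (∑ j, p j) * Real.exp (δ * (Bm * T)) with hk
  have hk0 : 0 ≤ k := mul_nonneg (Finset.sum_nonneg fun j _ => (h.hp j).le) (Real.exp_pos _).le
  refine ⟨Real.exp (k * (Bm * T)), Real.exp_pos _, fun u v hu huv hvT => ?_⟩
  have hT := h.hT
  have := nic_duhamel x A β _ 0 (-k) u v huv (h.contIcc u v (by linarith [h.hT]))
    (fun s hs => h.xd s (by linarith [hs.1])) h.hA
    (fun s hs => (h.βnn s (by linarith [hs.1])).le) (by
      intro s hs
      have hs0 : t₀ + T ≤ s := by linarith [hs.1]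
      have h5 : ∑ j, p j * x (s - τ j s) * Real.exp (-(a j) * x (s - σ j s)) ≤ k * x s := by
        have : k * x s = ∑ j, p j * (x s * Real.exp (δ * (Bm * T))) * 1 := by
          rw [hk, Finset.sum_mul, Finset.sum_mul]
          exact Finset.sum_congr rfl fun j _ => by ring
        rw [this]
        apply Finset.sum_le_sum
        intro j _
        have h2 := h.hτT j s (by linarith)
        have h3 := h.hτ0 j s (by linarith)
        have h2' := h.hσT j s (by linarith)
        have h6 := h.nn (s - σ j s) (by linarith)
        have h7 := h.nn (s - τ j s) (by linarith)
        have h8 := h.nn s (by linarith)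
        have h9 := (h.hp j).le
        have h10 := (h.ha j).le
        have := h.ratio (s - τ j s) s (by linarith) (by linarith) (by linarith)
        gcongr
        rw [Real.exp_le_one_iff]
        nlinarith
      have := h.pos s (by linarith)
      have := h.hδ
      nlinarith)
  have h1 := h.Aub u v (by linarith) huv
  have h2 : A v - A u ≤ Bm * T := h1.trans (mul_le_mul_of_nonneg_left hvT h.BmPos.le)
  have h3 := h.pos u (by linarith)
  have h3' := h.pos v (by linarith)
  have h4 : Real.exp (-(k * (Bm * T))) ≤ Real.exp (-k * (A v - A u)) :=
    Real.exp_le_exp.2 (by nlinarith)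
  have h5 : x v * Real.exp (-(k * (Bm * T))) ≤ x u := by nlinarith
  rw [Real.exp_neg] at h5
  rwa [← div_eq_mul_inv, div_le_iff₀ (Real.exp_pos _)] at h5

end NicSetup

lemma nic_deriv_nonneg (f : ℝ → ℝ) (d u t : ℝ) (hut : u < t) (hd : HasDerivAt f d t)
    (h : ∀ s, u ≤ s → s ≤ t → f s ≤ f t) : 0 ≤ d := by
  by_contra! hneg
  have := (hasDerivAt_iff_tendsto_slope_left_right.1 hd).1
  have h1 : ∀ᶠ s in nhdsWithin t (Set.Iio t), slope f t s < 0 := this.eventually (gt_mem_nhds hneg)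
  have h2 : ∀ᶠ s in nhdsWithin t (Set.Iio t), s ∈ Set.Ioo u t := Ioo_mem_nhdsLT hut
  obtain ⟨s, hs1, hs2⟩ := (h1.and h2).exists
  rw [slope_def_field] at hs1
  have h3 := h s hs2.1.le hs2.2.le
  have := div_nonneg_of_nonpos (by linarith : f s - f t ≤ 0) (by linarith [hs2.2] : s - t ≤ 0)
  linarith

lemma nic_F_anti {m : ℕ} (hm : 1 ≤ m) (p a : Fin m → ℝ) (hp : ∀ j, 0 < p j) (ha : ∀ j, 0 < a j)
    (u v : ℝ) (huv : u < v) :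
    ∑ j, p j * Real.exp (-(a j) * v) < ∑ j, p j * Real.exp (-(a j) * u) := by
  apply Finset.sum_lt_sum_of_nonempty
  · exact ⟨⟨0, hm⟩, Finset.mem_univ _⟩
  · intro j _
    apply mul_lt_mul_of_pos_left _ (hp j)
    apply Real.exp_lt_exp.2
    nlinarith [ha j]

namespace NicSetup
open Set Filter Topology

variable {m : ℕ} {p a : Fin m → ℝ} {δ t₀ T b Bm : ℝ} {β A : ℝ → ℝ}
    {τ σ : Fin m → ℝ → ℝ} {x : ℝ → ℝ}

/-- if delayed values are at most `X`, the production term is bounded through the least delayed value -/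
lemma prodUp (h : NicSetup p a δ t₀ T b Bm β A τ σ x) (t X : ℝ) (ht : t₀ ≤ t) (hX : 0 ≤ X)
    (hb : ∀ j, x (t - τ j t) ≤ X) : ∃ j,
    ∑ j, p j * x (t - τ j t) * Real.exp (-(a j) * x (t - σ j t)) ≤
      X * ∑ i, p i * Real.exp (-(a i) * x (t - σ j t)) := by
  have hne : (Finset.univ : Finset (Fin m)).Nonempty := ⟨⟨0, h.hm⟩, Finset.mem_univ _⟩
  obtain ⟨j, _, hj⟩ := Finset.exists_min_image Finset.univ (fun j => x (t - σ j t)) hne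
  refine ⟨j, ?_⟩
  rw [Finset.mul_sum]
  apply Finset.sum_le_sum
  intro i _
  have h1 := hj i (Finset.mem_univ _)
  have h2 := (h.hp i).le
  have h3 := (h.ha i).le
  have h4 : Real.exp (-(a i) * x (t - σ i t)) ≤ Real.exp (-(a i) * x (t - σ j t)) :=
    Real.exp_le_exp.2 (by nlinarith)
  calc p i * x (t - τ i t) * Real.exp (-(a i) * x (t - σ i t))
      ≤ p i * X * Real.exp (-(a i) * x (t - σ j t)) := by
        gcongr
        exact hb i
    _ = _ := by ring

lemma prodLo (h : NicSetup p a δ t₀ T b Bm β A τ σ x) (t X : ℝ) (ht : t₀ ≤ t) (hX : 0 ≤ X)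
    (hb : ∀ j, X ≤ x (t - τ j t)) : ∃ j,
      X * ∑ i, p i * Real.exp (-(a i) * x (t - σ j t)) ≤
    ∑ j, p j * x (t - τ j t) * Real.exp (-(a j) * x (t - σ j t)) := by
  have hne : (Finset.univ : Finset (Fin m)).Nonempty := ⟨⟨0, h.hm⟩, Finset.mem_univ _⟩
  obtain ⟨j, _, hj⟩ := Finset.exists_max_image Finset.univ (fun j => x (t - σ j t)) hne
  refine ⟨j, ?_⟩
  rw [Finset.mul_sum]
  apply Finset.sum_le_sum
  intro i _
  have h1 := hj i (Finset.mem_univ _)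
  have h2 := (h.hp i).le
  have h3 := (h.ha i).le
  have h4 : Real.exp (-(a i) * x (t - σ j t)) ≤ Real.exp (-(a i) * x (t - σ i t)) :=
    Real.exp_le_exp.2 (by nlinarith)
  have h5 := hb i
  calc X * (p i * Real.exp (-(a i) * x (t - σ j t)))
       = p i * X * Real.exp (-(a i) * x (t - σ j t)) := by ring
    _ ≤ p i * x (t - τ i t) * Real.exp (-(a i) * x (t - σ i t)) := by
        have := mul_nonneg h2 (hX.trans h5)
        gcongr

lemma bddAbove (h : NicSetup p a δ t₀ T b Bm β A τ σ x) (K : ℝ)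
    (hK : ∑ j, p j * Real.exp (-(a j) * K) = δ) : ∃ H, ∀ t, t₀ ≤ t → x t ≤ H := by
  obtain ⟨C, hC, hg⟩ := h.growth
  have hT := h.hT
  obtain ⟨H, hH⟩ := (isCompact_Icc.bddAbove_image (h.contIcc (t₀ - T) (t₀ + 2 * T) le_rfl))
  refine ⟨max H (K * C), fun t ht => ?_⟩
  obtain ⟨t1, ht1, hmax⟩ := isCompact_Icc.exists_isMaxOn (nonempty_Icc.2 (by linarith : t₀ - T ≤ t))
    (h.contIcc (t₀ - T) t le_rfl)
  have hmax' : ∀ s, t₀ - T ≤ s → s ≤ t → x s ≤ x t1 := fun s h1 h2 => hmax ⟨h1, h2⟩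
  refine (hmax' t (by linarith) le_rfl).trans ?_
  rcases le_or_gt t1 (t₀ + 2 * T) with h1 | h1
  · exact le_max_of_le_left (hH ⟨t1, ⟨ht1.1, h1⟩, rfl⟩)
  apply le_max_of_le_right
  have hd := nic_deriv_nonneg x _ t₀ t1 (by linarith) (h.xd t1 (by linarith))
    (fun s h2 h3 => hmax' s (by linarith) (by linarith [ht1.2]))
  have hβ := h.βnn t1 (by linarith)
  have hd' := nonneg_of_mul_nonneg_right hd hβ
  have hx := h.pos t1 (by linarith)
  obtain ⟨j, hj⟩ := h.prodUp t1 (x t1) (by linarith) hx.le (fun j => by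
    have h2 := h.hτT j t1 (by linarith)
    have h3 := h.hτ0 j t1 (by linarith)
    exact hmax' _ (by linarith) (by linarith [ht1.2]))
  have h2 := h.hσT j t1 (by linarith)
  have h3 := h.hσ0 j t1 (by linarith)
  have hy : x (t1 - σ j t1) ≤ K := by
    by_contra! hc
    have := nic_F_anti h.hm p a h.hp h.ha _ _ hc
    rw [hK] at this
    nlinarith
  have := hg (t1 - σ j t1) t1 (by linarith) (by linarith) (by linarith)
  nlinarith

lemma bddBelow (h : NicSetup p a δ t₀ T b Bm β A τ σ x) (K : ℝ) (hK0 : 0 < K)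
    (hK : ∑ j, p j * Real.exp (-(a j) * K) = δ) : ∃ L, 0 < L ∧ ∀ t, t₀ ≤ t → L ≤ x t := by
  have hT := h.hT
  obtain ⟨t2, ht2, hmin2⟩ := isCompact_Icc.exists_isMinOn
    (nonempty_Icc.2 (by linarith : t₀ ≤ t₀ + 2 * T)) (h.contIcc t₀ (t₀ + 2 * T) (by linarith))
  have hE := Real.exp_pos (δ * (Bm * T))
  refine ⟨min (x t2) (K / Real.exp (δ * (Bm * T))),
    lt_min (h.pos t2 ht2.1) (by positivity), fun t ht => ?_⟩
  obtain ⟨t1, ht1, hmin⟩ := isCompact_Icc.exists_isMinOn (nonempty_Icc.2 ht)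
    (h.contIcc t₀ t (by linarith))
  have hmin' : ∀ s, t₀ ≤ s → s ≤ t → x t1 ≤ x s := fun s h1 h2 => hmin ⟨h1, h2⟩
  refine le_trans ?_ (hmin' t ht le_rfl)
  rcases le_or_gt t1 (t₀ + 2 * T) with h1 | h1
  · exact min_le_of_left_le (hmin2 ⟨ht1.1, h1⟩)
  apply min_le_of_right_le
  have hd := nic_deriv_nonneg (fun s => - x s) _ t₀ t1 (by linarith) (h.xd t1 (by linarith)).neg
    (fun s h2 h3 => neg_le_neg (hmin' s (by linarith) (by linarith [ht1.2])))
  have hβ := h.βnn t1 (by linarith)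
  rw [← mul_neg] at hd
  have hd' := nonneg_of_mul_nonneg_right hd hβ
  have hx := h.pos t1 (by linarith)
  obtain ⟨j, hj⟩ := h.prodLo t1 (x t1) (by linarith) hx.le (fun j => by
    have h2 := h.hτT j t1 (by linarith)
    have h3 := h.hτ0 j t1 (by linarith)
    exact hmin' _ (by linarith) (by linarith [ht1.2]))
  have h2 := h.hσT j t1 (by linarith)
  have h3 := h.hσ0 j t1 (by linarith)
  have hy : K ≤ x (t1 - σ j t1) := by
    by_contra! hc
    have := nic_F_anti h.hm p a h.hp h.ha _ _ hc
    rw [hK] at this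
    nlinarith
  have := h.ratio (t1 - σ j t1) t1 (by linarith) (by linarith) (by linarith)
  rw [div_le_iff₀ hE]
  linarith

lemma upEps (h : NicSetup p a δ t₀ T b Bm β A τ σ x) (l M ζM ε : ℝ) (hε : 0 < ε) (hεl : ε < l)
    (hlM : l ≤ M)
    (hlo : ∀ᶠ t in atTop, l - ε ≤ x t) (hhi : ∀ᶠ t in atTop, x t ≤ M + ε)
    (hζ : ∀ j, ∀ᶠ t in atTop, A t - A (t - σ j t) ≤ ζM + ε)
    (hfr : ∃ᶠ t in atTop, M - ε < x t) :
    ∃ y ζ, l - ε ≤ y ∧ y ≤ M + ε ∧ 0 ≤ ζ ∧ ζ ≤ ζM + ε ∧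
      δ * (M - ε) - ε ≤ (M + ε) * ∑ i, p i * Real.exp (-(a i) * y) ∧
      (M - ε - (M + ε) * (∑ i, p i * Real.exp (-(a i) * (l - ε))) / δ) * Real.exp (δ * ζ) ≤
        y - (M + ε) * (∑ i, p i * Real.exp (-(a i) * (l - ε))) / δ := by
  have hT := h.hT
  obtain ⟨S, hS⟩ := eventually_atTop.1 (hlo.and (hhi.and (eventually_all.2 hζ)))
  set S' := max S t₀ with hS'
  have hSS : S ≤ S' := le_max_left _ _
  have hSt : t₀ ≤ S' := le_max_right _ _
  obtain ⟨t, ht, hxt, hdt⟩ := nic_fluct_s10 x _ t₀ 0 (M - ε) (ε * b) (S' + 2 * T + 1)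
    (fun t ht => h.xd t ht) (fun t ht => (h.pos t ht.le).le) (frequently_atTop.1 hfr)
    (mul_pos hε h.hb)
  have hG : -ε ≤ (∑ j, p j * x (t - τ j t) * Real.exp (-(a j) * x (t - σ j t))) - δ * x t := by
    have := h.hβb t (by linarith)
    have := h.hb
    by_contra! hc
    nlinarith
  obtain ⟨j, hj⟩ := h.prodUp t (M + ε) (by linarith) (by linarith) (fun j => by
    have h2 := h.hτT j t (by linarith)
    exact (hS _ (by linarith)).2.1)
  have h2 := h.hσT j t (by linarith)
  have h3 := h.hσ0 j t (by linarith)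
  have hδ := h.hδ
  refine ⟨x (t - σ j t), A t - A (t - σ j t), (hS _ (by linarith)).1, (hS _ (by linarith)).2.1,
    h.Amono _ _ (by linarith) (by linarith), (hS _ (by linarith)).2.2 j, ?_, ?_⟩
  · nlinarith
  · set C := (M + ε) * (∑ i, p i * Real.exp (-(a i) * (l - ε))) / δ with hC
    have hCδ : δ * C = (M + ε) * (∑ i, p i * Real.exp (-(a i) * (l - ε))) := by
      rw [hC, mul_comm, div_mul_cancel₀ _ hδ.ne']
    have := nic_duhamel x A β _ C δ (t - σ j t) t (by linarith)
      (h.contIcc _ t (by linarith [h.hT]))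
      (fun s hs => h.xd s (by linarith [hs.1])) h.hA
      (fun s hs => (h.βnn s (by linarith [hs.1])).le) (by
        intro s hs
        have hs0 : S' + T ≤ s := by linarith [hs.1]
        have : ∑ j, p j * x (s - τ j s) * Real.exp (-(a j) * x (s - σ j s)) ≤ δ * C := by
          rw [hCδ, Finset.mul_sum]
          apply Finset.sum_le_sum
          intro i _
          have g1 := h.hτT i s (by linarith)
          have g2 := h.hσT i s (by linarith)
          have g3 := (hS (s - τ i s) (by linarith)).2.1
          have g4 := (hS (s - σ i s) (by linarith)).1
          have g5 := (h.hp i).le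
          have g6 := (h.ha i).le
          have g7 : Real.exp (-(a i) * x (s - σ i s)) ≤ Real.exp (-(a i) * (l - ε)) :=
            Real.exp_le_exp.2 (by nlinarith)
          calc p i * x (s - τ i s) * Real.exp (-(a i) * x (s - σ i s))
              ≤ p i * (M + ε) * Real.exp (-(a i) * (l - ε)) := by
                have : 0 ≤ M + ε := by linarith
                gcongr
            _ = _ := by ring
        linarith)
    refine le_trans ?_ this
    gcongr

lemma loEps (h : NicSetup p a δ t₀ T b Bm β A τ σ x) (l M ζM ε : ℝ) (hε : 0 < ε) (hεl : ε < l)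
    (hlM : l ≤ M)
    (hlo : ∀ᶠ t in atTop, l - ε ≤ x t) (hhi : ∀ᶠ t in atTop, x t ≤ M + ε)
    (hζ : ∀ j, ∀ᶠ t in atTop, A t - A (t - σ j t) ≤ ζM + ε)
    (hfr : ∃ᶠ t in atTop, x t < l + ε) (H : ℝ) (hH : ∀ t, t₀ ≤ t → x t ≤ H) :
    ∃ y ζ, l - ε ≤ y ∧ y ≤ M + ε ∧ 0 ≤ ζ ∧ ζ ≤ ζM + ε ∧
      (l - ε) * ∑ i, p i * Real.exp (-(a i) * y) ≤ δ * (l + ε) + ε ∧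
        y - (l - ε) * (∑ i, p i * Real.exp (-(a i) * (M + ε))) / δ ≤ 
      (l + ε - (l - ε) * (∑ i, p i * Real.exp (-(a i) * (M + ε))) / δ) * Real.exp (δ * ζ) := by
  have hT := h.hT
  obtain ⟨S, hS⟩ := eventually_atTop.1 (hlo.and (hhi.and (eventually_all.2 hζ)))
  set S' := max S t₀ with hS'
  have hSS : S ≤ S' := le_max_left _ _
  have hSt : t₀ ≤ S' := le_max_right _ _
  obtain ⟨t, ht, hxt, hdt⟩ := nic_fluct_s10 (fun t => - x t) _ t₀ (-H) (-(l + ε)) (ε * b)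
    (S' + 2 * T + 1)
    (fun t ht => (h.xd t ht).neg) (fun t ht => neg_le_neg (hH t ht.le))
    (by simpa using frequently_atTop.1 hfr)
    (mul_pos hε h.hb)
  have hG : (∑ j, p j * x (t - τ j t) * Real.exp (-(a j) * x (t - σ j t))) - δ * x t ≤ ε := by
    have := h.hβb t (by linarith)
    have := h.hb
    by_contra! hc
    nlinarith
  obtain ⟨j, hj⟩ := h.prodLo t (l - ε) (by linarith) (by linarith) (fun j => by
    have h2 := h.hτT j t (by linarith)
    exact (hS _ (by linarith)).1)
  have h2 := h.hσT j t (by linarith)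
  have h3 := h.hσ0 j t (by linarith)
  have hδ := h.hδ
  refine ⟨x (t - σ j t), A t - A (t - σ j t), (hS _ (by linarith)).1, (hS _ (by linarith)).2.1,
    h.Amono _ _ (by linarith) (by linarith), (hS _ (by linarith)).2.2 j, ?_, ?_⟩
  · nlinarith
  · set C := (l - ε) * (∑ i, p i * Real.exp (-(a i) * (M + ε))) / δ with hC
    have hCδ : δ * C = (l - ε) * (∑ i, p i * Real.exp (-(a i) * (M + ε))) := by
      rw [hC, mul_comm, div_mul_cancel₀ _ hδ.ne']
    have := nic_duhamel' x A β _ C δ (t - σ j t) t (by linarith)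
      (h.contIcc _ t (by linarith [h.hT]))
      (fun s hs => h.xd s (by linarith [hs.1])) h.hA
      (fun s hs => (h.βnn s (by linarith [hs.1])).le) (by
        intro s hs
        have hs0 : S' + T ≤ s := by linarith [hs.1]
        have : δ * C ≤ ∑ j, p j * x (s - τ j s) * Real.exp (-(a j) * x (s - σ j s)) := by
          rw [hCδ, Finset.mul_sum]
          apply Finset.sum_le_sum
          intro i _
          have g1 := h.hτT i s (by linarith)
          have g2 := h.hσT i s (by linarith)
          have g3 := (hS (s - τ i s) (by linarith)).1
          have g4 := (hS (s - σ i s) (by linarith)).2.1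
          have g5 := (h.hp i).le
          have g6 := (h.ha i).le
          have g7 : Real.exp (-(a i) * (M + ε)) ≤ Real.exp (-(a i) * x (s - σ i s)) :=
            Real.exp_le_exp.2 (by nlinarith)
          calc (l - ε) * (p i * Real.exp (-(a i) * (M + ε)))
              = p i * (l - ε) * Real.exp (-(a i) * (M + ε)) := by ring
            _ ≤ p i * x (s - τ i s) * Real.exp (-(a i) * x (s - σ i s)) := by
                have : 0 ≤ p i * x (s - τ i s) := mul_nonneg g5 (by linarith)
                gcongr
        linarith)
    refine le_trans this ?_
    have : x t ≤ l + ε := by linarith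
    gcongr

theorem main (h : NicSetup p a δ t₀ T b Bm β A τ σ x) (K q ζM : ℝ) (hK0 : 0 < K)
    (hK : ∑ j, p j * Real.exp (-(a j) * K) = δ) (hq : ∀ j, a j ≤ q)
    (hζ : ∀ ε > 0, ∀ j, ∀ᶠ t in atTop, A t - A (t - σ j t) ≤ ζM + ε)
    (hE : q * K * (Real.exp (δ * ζM) - 1) ≤ 1) : Tendsto x atTop (𝓝 K) := by
  obtain ⟨H, hH⟩ := h.bddAbove K hK
  obtain ⟨L, hL0, hL⟩ := h.bddBelow K hK0 hK
  have hδ := h.hδ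
  have hq0 : 0 < q := (h.ha ⟨0, h.hm⟩).trans_le (hq _)
  have hle : IsBoundedUnder (· ≤ ·) atTop x := ⟨H, eventually_map.2 ((eventually_ge_atTop t₀).mono hH)⟩
  have hge : IsBoundedUnder (· ≥ ·) atTop x := ⟨L, eventually_map.2 ((eventually_ge_atTop t₀).mono hL)⟩
  set M := limsup x atTop with hM
  set l := liminf x atTop with hl
  have hlM : l ≤ M := liminf_le_limsup hle hge
  have hl0 : 0 < l := hL0.trans_le
    (le_liminf_of_le hle.isCoboundedUnder_ge ((eventually_ge_atTop t₀).mono hL))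
  have hM0 : 0 < M := hl0.trans_le hlM
  have hlo : ∀ ε > 0, ∀ᶠ t in atTop, l - ε ≤ x t := fun ε hε =>
    (eventually_lt_of_lt_liminf (by linarith : l - ε < liminf x atTop) hge).mono fun _ h => h.le
  have hhi : ∀ ε > 0, ∀ᶠ t in atTop, x t ≤ M + ε := fun ε hε =>
    (eventually_lt_of_limsup_lt (by linarith : limsup x atTop < M + ε) hle).mono fun _ h => h.le
  have hf1 : ∀ ε > 0, ∃ᶠ t in atTop, M - ε < x t := fun ε hε =>
    frequently_lt_of_lt_limsup hge.isCoboundedUnder_le (by linarith : M - ε < limsup x atTop)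
  have hf2 : ∀ ε > 0, ∃ᶠ t in atTop, x t < l + ε := fun ε hε =>
    frequently_lt_of_liminf_lt hle.isCoboundedUnder_ge (by linarith : liminf x atTop < l + ε)
  have hS : IsCompact (Icc (0:ℝ) (M + l) ×ˢ Icc (0:ℝ) (ζM + l)) := isCompact_Icc.prod isCompact_Icc
  set F : ℝ → ℝ := fun y => ∑ i, p i * Real.exp (-(a i) * y) with hF
  have hFc : Continuous F := by fun_prop
  have up : ∃ y ζ, l ≤ y ∧ y ≤ M ∧ 0 ≤ ζ ∧ ζ ≤ ζM ∧ δ * M ≤ M * F y ∧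
      (M - M * F l / δ) * Real.exp (δ * ζ) ≤ y - M * F l / δ := by
    have hC : IsClosed {w : ℝ × ℝ × ℝ | l - w.1 ≤ w.2.1 ∧ w.2.1 ≤ M + w.1 ∧ 0 ≤ w.2.2 ∧
        w.2.2 ≤ ζM + w.1 ∧ δ * (M - w.1) - w.1 ≤ (M + w.1) * F w.2.1 ∧
        (M - w.1 - (M + w.1) * F (l - w.1) / δ) * Real.exp (δ * w.2.2) ≤
          w.2.1 - (M + w.1) * F (l - w.1) / δ} := by
      refine IsClosed.and (isClosed_le (by fun_prop) (by fun_prop)) ?_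
      refine IsClosed.and (isClosed_le (by fun_prop) (by fun_prop)) ?_
      refine IsClosed.and (isClosed_le (by fun_prop) (by fun_prop)) ?_
      refine IsClosed.and (isClosed_le (by fun_prop) (by fun_prop)) ?_
      refine IsClosed.and (isClosed_le (by fun_prop) (by fun_prop)) ?_
      exact isClosed_le (by fun_prop) (by fun_prop)
    obtain ⟨⟨y, ζ⟩, -, hz⟩ := nic_cpt _ hS _ hC l hl0 (fun ε hε hεl => by
      obtain ⟨y, ζ, h1, h2, h3, h4, h5, h6⟩ := h.upEps l M ζM ε hε hεl hlM (hlo ε hε) (hhi ε hε)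
        (hζ ε hε) (hf1 ε hε)
      exact ⟨(y, ζ), ⟨⟨by simp only; linarith, by simp only; linarith⟩,
        ⟨h3, by simp only; linarith⟩⟩, h1, h2, h3, h4, h5, h6⟩)
    obtain ⟨h1, h2, h3, h4, h5, h6⟩ := hz
    exact ⟨y, ζ, by simpa using h1, by simpa using h2, by simpa using h3, by simpa using h4,
      by simpa using h5, by simpa using h6⟩
  have lo : ∃ y ζ, l ≤ y ∧ y ≤ M ∧ 0 ≤ ζ ∧ ζ ≤ ζM ∧ l * F y ≤ δ * l ∧
      y - l * F M / δ ≤ (l - l * F M / δ) * Real.exp (δ * ζ) := by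
    have hC : IsClosed {w : ℝ × ℝ × ℝ | l - w.1 ≤ w.2.1 ∧ w.2.1 ≤ M + w.1 ∧ 0 ≤ w.2.2 ∧
        w.2.2 ≤ ζM + w.1 ∧ (l - w.1) * F w.2.1 ≤ δ * (l + w.1) + w.1 ∧
          w.2.1 - (l - w.1) * F (M + w.1) / δ ≤
        (l + w.1 - (l - w.1) * F (M + w.1) / δ) * Real.exp (δ * w.2.2)} := by
      refine IsClosed.and (isClosed_le (by fun_prop) (by fun_prop)) ?_
      refine IsClosed.and (isClosed_le (by fun_prop) (by fun_prop)) ?_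
      refine IsClosed.and (isClosed_le (by fun_prop) (by fun_prop)) ?_
      refine IsClosed.and (isClosed_le (by fun_prop) (by fun_prop)) ?_
      refine IsClosed.and (isClosed_le (by fun_prop) (by fun_prop)) ?_
      exact isClosed_le (by fun_prop) (by fun_prop)
    obtain ⟨⟨y, ζ⟩, -, hz⟩ := nic_cpt _ hS _ hC l hl0 (fun ε hε hεl => by
      obtain ⟨y, ζ, h1, h2, h3, h4, h5, h6⟩ := h.loEps l M ζM ε hε hεl hlM (hlo ε hε) (hhi ε hε)
        (hζ ε hε) (hf2 ε hε) H hH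
      exact ⟨(y, ζ), ⟨⟨by simp only; linarith, by simp only; linarith⟩,
        ⟨h3, by simp only; linarith⟩⟩, h1, h2, h3, h4, h5, h6⟩)
    obtain ⟨h1, h2, h3, h4, h5, h6⟩ := hz
    exact ⟨y, ζ, by simpa using h1, by simpa using h2, by simpa using h3, by simpa using h4,
      by simpa using h5, by simpa using h6⟩
  obtain ⟨y, ζ, hy1, hy2, hζ0, hζ1, hy3, hy4⟩ := up
  obtain ⟨z, ξ, hz1, hz2, hξ0, hξ1, hz3, hz4⟩ := lo
  have hFK : F K = δ := hK
  have hyK : y ≤ K := by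
    by_contra! hc
    have : F y < F K := nic_F_anti h.hm p a h.hp h.ha _ _ hc
    nlinarith
  have hzK : K ≤ z := by
    by_contra! hc
    have : F K < F z := nic_F_anti h.hm p a h.hp h.ha _ _ hc
    nlinarith
  have hFl : F l / δ ≤ Real.exp (q * (K - l)) := by
    rw [div_le_iff₀ hδ, ← hFK, Finset.mul_sum]
    apply Finset.sum_le_sum
    intro i _
    have := (h.hp i).le
    have e : Real.exp (-(a i) * l) ≤ Real.exp (q * (K - l)) * Real.exp (-(a i) * K) := by
      rw [← Real.exp_add]
      apply Real.exp_le_exp.2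
      nlinarith [hq i]
    calc p i * Real.exp (-(a i) * l) ≤ p i * (Real.exp (q * (K - l)) * Real.exp (-(a i) * K)) := by
          gcongr
      _ = _ := by ring
  have hFM : Real.exp (-(q * (M - K))) ≤ F M / δ := by
    rw [le_div_iff₀ hδ, ← hFK, Finset.mul_sum]
    apply Finset.sum_le_sum
    intro i _
    have := (h.hp i).le
    have e : Real.exp (-(q * (M - K))) * Real.exp (-(a i) * K) ≤ Real.exp (-(a i) * M) := by
      rw [← Real.exp_add]
      apply Real.exp_le_exp.2
      nlinarith [hq i]
    calc _ = p i * (Real.exp (-(q * (M - K))) * Real.exp (-(a i) * K)) := by ring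
      _ ≤ _ := by gcongr
  have eζ : Real.exp (δ * ζ) ≤ Real.exp (δ * ζM) := Real.exp_le_exp.2 (by gcongr)
  have eξ : Real.exp (δ * ξ) ≤ Real.exp (δ * ζM) := Real.exp_le_exp.2 (by gcongr)
  have eζ1 : 1 ≤ Real.exp (δ * ζ) := Real.one_le_exp (by positivity)
  have eξ1 : 1 ≤ Real.exp (δ * ξ) := Real.one_le_exp (by positivity)
  have r1 : 0 ≤ Real.exp (q * (K - l)) - 1 := by
    have := Real.one_le_exp (mul_nonneg hq0.le (by linarith : 0 ≤ K - l))
    linarith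
  have r2 : 0 ≤ 1 - Real.exp (-(q * (M - K))) := by
    have := Real.exp_le_one_iff.2 (neg_nonpos.2 (mul_nonneg hq0.le (by linarith : 0 ≤ M - K)))
    linarith
  obtain ⟨hMK, hlK⟩ := nic_alg_s10 M l K q (Real.exp (δ * ζM) - 1) hl0 (by linarith) (by linarith) hq0
    hE
    (by
      rw [mul_div_assoc] at hz4
      calc K - l ≤ l * (1 - F M / δ) * (Real.exp (δ * ξ) - 1) := by linarith
        _ ≤ l * (1 - Real.exp (-(q * (M - K)))) * (Real.exp (δ * ξ) - 1) := by
          have : 0 ≤ Real.exp (δ * ξ) - 1 := by linarith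
          gcongr
        _ ≤ _ := by
          gcongr)
    (by
      rw [mul_div_assoc] at hy4
      calc M - K ≤ M * (F l / δ - 1) * (Real.exp (δ * ζ) - 1) := by linarith
        _ ≤ M * (Real.exp (q * (K - l)) - 1) * (Real.exp (δ * ζ) - 1) := by
          have : 0 ≤ Real.exp (δ * ζ) - 1 := by linarith
          gcongr
        _ ≤ _ := by
          gcongr)
  exact tendsto_of_liminf_eq_limsup hlK hMK hle hge

end NicSetup

/- STATEMENT 10 (Theorem 3.3, main result): assume p := Σ_j p_j > δ, let K > 0 be
   the positive equilibrium, a⁺ := max_j a_j, a⁻ := min_j a_j,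
   ζ_M := max_j limsup_{t→∞} ∫_{t−σ_j(t)}^t β(s) ds. If
   (H1) a⁺/a⁻ < 3/2 and (H2) a⁺K(e^{δζ_M} − 1) ≤ 1, then K is globally
   attractive: every solution with admissible initial data converges to K. -/
theorem nicholson_global_attractivity
    (m : ℕ) (hm : 1 ≤ m) (p a : Fin m → ℝ)
    (hp : ∀ j, 0 < p j) (ha : ∀ j, 0 < a j) (δ : ℝ) (hδ : 0 < δ)
    (t₀ : ℝ) (β : ℝ → ℝ) (τ σ : Fin m → ℝ → ℝ)
    (hβc : ContinuousOn β (Set.Ici t₀))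
    (hτc : ∀ j, ContinuousOn (τ j) (Set.Ici t₀))
    (hσc : ∀ j, ContinuousOn (σ j) (Set.Ici t₀))
    (hτ0 : ∀ j, ∀ t ∈ Set.Ici t₀, 0 ≤ τ j t)
    (hσ0 : ∀ j, ∀ t ∈ Set.Ici t₀, 0 ≤ σ j t)
    (βminus : ℝ) (hβminus : IsGLB (β '' Set.Ici t₀) βminus) (hβmpos : 0 < βminus)
    (hβub : ∃ B, ∀ t ∈ Set.Ici t₀, β t ≤ B)
    (τbar : ℝ)
    (hτbar : IsLUB ((⋃ j, τ j '' Set.Ici t₀) ∪ ⋃ j, σ j '' Set.Ici t₀) τbar)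
    -- p > δ and K is the positive equilibrium
    (hpδ : δ < ∑ j, p j)
    (K : ℝ) (hK0 : 0 < K) (hK : ∑ j, p j * Real.exp (-(a j) * K) = δ)
    -- a⁺ := max_j a_j, a⁻ := min_j a_j
    (aplus aminus : ℝ)
    (haplus : IsGreatest (Set.range a) aplus)
    (haminus : IsLeast (Set.range a) aminus)
    -- ζ_M := max_j limsup_{t→∞} ∫_{t−σ_j(t)}^t β(s) ds
    (ζM : ℝ)
    (hζM : IsGreatest (Set.range fun j =>
      Filter.limsup (fun t => ∫ s in (t - σ j t)..t, β s) Filter.atTop) ζM)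
    -- (H1) and (H2)
    (hH1 : aplus / aminus < 3 / 2)
    (hH2 : aplus * K * (Real.exp (δ * ζM) - 1) ≤ 1) :
    ∀ x : ℝ → ℝ, NicholsonSolution m p a δ t₀ τbar β τ σ x →
      Filter.Tendsto x Filter.atTop (nhds K) := by
  intro x hx
  obtain ⟨hxc, hxd, hx0, hxt0⟩ := hx
  obtain ⟨B, hB⟩ := hβub
  have hτT : ∀ j t, t₀ ≤ t → τ j t ≤ τbar := fun j t ht =>
    hτbar.1 (Or.inl (Set.mem_iUnion.2 ⟨j, t, ht, rfl⟩))
  have hσT : ∀ j t, t₀ ≤ t → σ j t ≤ τbar := fun j t ht =>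
    hτbar.1 (Or.inr (Set.mem_iUnion.2 ⟨j, t, ht, rfl⟩))
  have hT : 0 ≤ τbar := (hτ0 ⟨0, hm⟩ t₀ (Set.mem_Ici.2 le_rfl)).trans (hτT ⟨0, hm⟩ t₀ le_rfl)
  set β' : ℝ → ℝ := fun t => β (max t₀ t) with hβ'
  have hβ'c : Continuous β' :=
    hβc.comp_continuous (continuous_const.max continuous_id) (fun t => Set.mem_Ici.2 (le_max_left _ _))
  have hββ : ∀ t, t₀ ≤ t → β' t = β t := fun t ht => by simp only [hβ', max_eq_right ht]
  set A : ℝ → ℝ := fun t => ∫ s in t₀..t, β' s with hAdef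
  have hs : NicSetup p a δ t₀ τbar βminus B β' A τ σ x :=
    { hm := hm
      hp := hp
      ha := ha
      hδ := hδ
      hb := hβmpos
      hβb := fun t ht => by rw [hββ t ht]; exact hβminus.1 ⟨t, ht, rfl⟩
      hβB := fun t ht => by rw [hββ t ht]; exact hB t ht
      hT := hT
      hτ0 := fun j t ht => hτ0 j t ht
      hτT := hτT
      hσ0 := fun j t ht => hσ0 j t ht
      hσT := hσT
      hA := fun t => hβ'c.integral_hasStrictDerivAt t₀ t |>.hasDerivAt
      xc := hxc
      xd := fun t ht => by
        rw [hββ t ht.le]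
        exact (hxd t (Set.mem_Ici.2 ht.le)).hasDerivAt (Ici_mem_nhds ht)
      x0 := hx0
      xt0 := hxt0 }
  have hint : ∀ j, ∀ t, t₀ + τbar ≤ t → ∫ s in (t - σ j t)..t, β s = A t - A (t - σ j t) := by
    intro j t ht
    have h1 := hσT j t (by linarith)
    have h2 := hσ0 j t (Set.mem_Ici.2 (by linarith))
    have e : ∫ s in (t - σ j t)..t, β s = ∫ s in (t - σ j t)..t, β' s := by
      apply intervalIntegral.integral_congr
      intro s hs'
      rw [Set.uIcc_of_le (by linarith)] at hs'
      exact (hββ s (by linarith [hs'.1])).symm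
    rw [e, hAdef]
    exact (intervalIntegral.integral_interval_sub_left (hβ'c.intervalIntegrable _ _)
      (hβ'c.intervalIntegrable _ _)).symm
  refine hs.main K aplus ζM hK0 hK (fun j => haplus.2 ⟨j, rfl⟩) ?_ hH2
  intro ε hε j
  have hbd : Filter.IsBoundedUnder (· ≤ ·) Filter.atTop
      (fun t => ∫ s in (t - σ j t)..t, β s) := by
    refine ⟨B * τbar, Filter.eventually_map.2 ((Filter.eventually_ge_atTop (t₀ + τbar)).mono ?_)⟩
    intro t ht
    have h1 := hσT j t (by linarith)
    have h2 := hσ0 j t (Set.mem_Ici.2 (by linarith))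
    rw [hint j t ht]
    have h3 := hs.Aub (t - σ j t) t (by linarith) (by linarith)
    exact h3.trans (mul_le_mul_of_nonneg_left (by linarith) hs.BmPos.le)
  have hlim : Filter.limsup (fun t => ∫ s in (t - σ j t)..t, β s) Filter.atTop < ζM + ε :=
    lt_of_le_of_lt (hζM.2 ⟨j, rfl⟩) (by linarith)
  filter_upwards [Filter.eventually_lt_of_limsup_lt hlim hbd,
    Filter.eventually_ge_atTop (t₀ + τbar)] with t h1 h2
  rw [← hint j t h2]
  exact h1.le
end

section
/- (Corollary 3.1.) Consider the Nicholson equation with m pairs of delays. Assume p := Σ_{j=1}^m p_j > δ, let a⁺ := max_j a_j, a⁻ := min_j a_j and ζ_M := max_{1≤j≤m} limsup_{t→∞} ∫_{t−σ_j(t)}^{t} β(s) ds. If (H1) a⁺/a⁻ < 3/2 and (H2*) (a⁺/a⁻)(e^{δζ_M} − 1)·log(p/δ) ≤ 1, then the positive equilibrium K (defined by Σ_j p_j e^{−a_j K} = δ) is globally attractive: every solution with admissible initial data converges to K as t → ∞. -/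
namespace NichAux

lemma algebra_core {A u v : ℝ} (hA : 0 < A) (hu : 0 ≤ u) (huA : u < A) (hv : 0 ≤ v)
    (h1 : A * v ≤ (A + v) * (Real.exp u - 1))
    (h2 : A * u ≤ (A - u) * (1 - Real.exp (-v))) : u = 0 ∧ v = 0 := by
  have hAu : 0 < A - u := by linarith
  have hAv : 0 < A + v := by linarith
  have hv0 : v = 0 := by
    by_contra hne
    have hvp : 0 < v := lt_of_le_of_ne hv (Ne.symm hne)
    have hs : 0 < A * v / (A + v) := by positivity
    have e1 : 1 + A * v / (A + v) ≤ Real.exp u := by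
      have : A * v / (A + v) ≤ Real.exp u - 1 := by
        rw [div_le_iff₀ hAv]; linarith
      linarith
    have l1 := Real.lt_log_one_add_of_pos hs
    have l2 : Real.log (1 + A * v / (A + v)) ≤ u := by
      rw [Real.log_le_iff_le_exp (by linarith)]; exact e1
    have l3 : 2 * (A * v / (A + v)) / (A * v / (A + v) + 2) < u := lt_of_lt_of_le l1 l2
    have l4 : 2 * A * v < u * (A * v + 2 * (A + v)) := by
      have : 2 * (A * v / (A + v)) / (A * v / (A + v) + 2)
          = 2 * A * v / (A * v + 2 * (A + v)) := by field_simp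
      rw [this, div_lt_iff₀ (by positivity)] at l3
      exact l3
    have e2 : Real.exp (-v) ≤ 1 - A * u / (A - u) := by
      have : A * u / (A - u) ≤ 1 - Real.exp (-v) := by
        rw [div_le_iff₀ hAu]; linarith
      linarith
    set r := A * u / (A - u) with hr
    have hr0 : 0 ≤ r := by positivity
    have hr1 : 0 < 1 - r := lt_of_lt_of_le (Real.exp_pos _) e2
    have l5 := Real.le_log_one_add_of_nonneg (show 0 ≤ r / (1 - r) by positivity)
    have e3 : 1 + r / (1 - r) = (1 - r)⁻¹ := by field_simp; ring
    rw [e3, Real.log_inv] at l5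
    have l6 : -v ≤ Real.log (1 - r) := by
      rw [Real.le_log_iff_exp_le hr1]; exact e2
    have l7 : 2 * (r / (1 - r)) / (r / (1 - r) + 2) ≤ v := by linarith
    have e4 : 2 * (r / (1 - r)) / (r / (1 - r) + 2) = 2 * r / (2 - r) := by
      have : 2 - r ≠ 0 := by linarith
      have : r / (1 - r) + 2 = (2 - r) / (1 - r) := by field_simp; ring
      rw [this]; field_simp
    rw [e4, div_le_iff₀ (by linarith)] at l7
    have e5 : r * (A - u) = A * u := by rw [hr]; field_simp
    have l8 : 2 * (A * u) ≤ v * (2 * (A - u) - A * u) := by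
      have := mul_le_mul_of_nonneg_right l7 hAu.le
      nlinarith
    nlinarith
  refine ⟨?_, hv0⟩
  rw [hv0] at h2
  simp at h2
  nlinarith

lemma deriv_nonneg_of_left_max {f : ℝ → ℝ} {f' s t : ℝ} (hf : HasDerivAt f f' t) (hst : s < t)
    (h : ∀ r ∈ Set.Icc s t, f r ≤ f t) : 0 ≤ f' := by
  have h1 := (hasDerivWithinAt_iff_tendsto_slope' (s := Set.Iio t) (by simp)).1
    hf.hasDerivWithinAt
  refine ge_of_tendsto h1 ?_
  filter_upwards [Ioo_mem_nhdsLT hst] with r hr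
  rw [slope_def_field]
  have := h r ⟨hr.1.le, hr.2.le⟩
  exact div_nonneg_of_nonpos (by linarith) (by linarith [hr.2])

lemma compare {x D β G : ℝ → ℝ} {δ C s t : ℝ} (hst : s ≤ t)
    (hxc : ContinuousOn x (Set.Icc s t)) (hGc : Continuous G)
    (hx : ∀ r ∈ Set.Ioo s t, HasDerivAt x (D r) r)
    (hG : ∀ r ∈ Set.Ioo s t, HasDerivAt G (β r) r)
    (hD : ∀ r ∈ Set.Ioo s t, D r ≤ β r * (δ * C - δ * x r)) :
    x t ≤ C + (x s - C) * Real.exp (-(δ * (G t - G s))) := by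
  have hd : ∀ r ∈ Set.Ioo s t, HasDerivAt (fun r => (x r - C) * Real.exp (δ * G r))
      (D r * Real.exp (δ * G r) + (x r - C) * (Real.exp (δ * G r) * (δ * β r))) r := by
    intro r hr
    exact ((hx r hr).sub_const C).mul (((hG r hr).const_mul δ).exp)
  have hanti : AntitoneOn (fun r => (x r - C) * Real.exp (δ * G r)) (Set.Icc s t) := by
    apply antitoneOn_of_deriv_nonpos (convex_Icc s t)
    · exact (hxc.sub continuousOn_const).mul (by fun_prop)
    · intro r hr
      rw [interior_Icc] at hr
      exact (hd r hr).differentiableAt.differentiableWithinAt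
    · intro r hr
      rw [interior_Icc] at hr
      rw [(hd r hr).deriv]
      have h1 := hD r hr
      have h2 : D r + (x r - C) * (δ * β r) ≤ 0 := by linarith
      have := mul_nonpos_of_nonpos_of_nonneg h2 (Real.exp_pos (δ * G r)).le
      linarith
  have h := hanti (Set.left_mem_Icc.2 hst) (Set.right_mem_Icc.2 hst) hst
  simp only at h
  have h3 : x t - C ≤ (x s - C) * Real.exp (-(δ * (G t - G s))) := by
    have e : Real.exp (-(δ * (G t - G s))) = Real.exp (δ * G s) * (Real.exp (δ * G t))⁻¹ := by
      rw [← Real.exp_neg, ← Real.exp_add]; congr 1; ring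
    rw [e, ← mul_assoc, ← div_eq_mul_inv, le_div_iff₀ (Real.exp_pos _)]
    exact h
  linarith

lemma compare_low {x D β G : ℝ → ℝ} {δ C s t : ℝ} (hst : s ≤ t)
    (hxc : ContinuousOn x (Set.Icc s t)) (hGc : Continuous G)
    (hx : ∀ r ∈ Set.Ioo s t, HasDerivAt x (D r) r)
    (hG : ∀ r ∈ Set.Ioo s t, HasDerivAt G (β r) r)
    (hD : ∀ r ∈ Set.Ioo s t, β r * (δ * C - δ * x r) ≤ D r) :
    C + (x s - C) * Real.exp (-(δ * (G t - G s))) ≤ x t := by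
  have := compare (x := fun r => - x r) (D := fun r => - D r) (β := β) (G := G) (δ := δ)
    (C := -C) hst hxc.neg hGc (fun r hr => (hx r hr).neg) hG
    (fun r hr => by have := hD r hr; linarith)
  try simp only at this
  linarith

lemma fluct {x D : ℝ → ℝ} {t₀ L : ℝ} (hx : ∀ t, t₀ < t → HasDerivAt x (D t) t)
    (hL : ∀ ε > 0, ∃ᶠ t in Filter.atTop, L - ε < x t) (ε : ℝ) (hε : 0 < ε) :
    ∃ᶠ t in Filter.atTop, L - ε ≤ x t ∧ -ε ≤ D t := by
  by_contra hcon
  rw [Filter.not_frequently] at hcon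
  obtain ⟨T0, hT0⟩ := Filter.eventually_atTop.1 hcon
  set T := max T0 (t₀ + 1) with hT
  have hTt : t₀ < T := by have := le_max_right T0 (t₀ + 1); linarith
  have hTT : T0 ≤ T := le_max_left _ _
  by_cases hc : ∃ t2 ≥ T, x t2 ≤ L - ε
  · obtain ⟨t2, ht2, hx2⟩ := hc
    obtain ⟨t, ht, hxt⟩ := Filter.frequently_atTop.1 (hL ε hε) t2
    have := image_le_of_deriv_right_lt_deriv_boundary (f := x) (f' := D) (a := t2) (b := t)
      (B := fun _ => L - ε) (B' := fun _ => 0)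
      (fun r hr => (hx r (by linarith [hr.1])).continuousAt.continuousWithinAt)
      (fun r hr => (hx r (by linarith [hr.1])).hasDerivWithinAt) hx2
      (fun r => hasDerivAt_const _ _)
      (fun r hr hxr => by
        have h1 := hT0 r (by linarith [hr.1])
        by_contra hn
        exact h1 ⟨hxr.ge, by linarith⟩)
      (x := t) ⟨ht, le_refl _⟩
    linarith
  · push Not at hc
    have hDn : ∀ r ≥ T, D r ≤ -ε := by
      intro r hr
      by_contra hn
      exact hT0 r (by linarith) ⟨(hc r hr).le, by linarith⟩
    have hanti : AntitoneOn (fun r => x r + ε * r) (Set.Ici T) := by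
      have hd : ∀ r ≥ T, HasDerivAt (fun r => x r + ε * r) (D r + ε * 1) r := fun r hr =>
        (hx r (by linarith)).add ((hasDerivAt_id r).const_mul ε)
      apply antitoneOn_of_deriv_nonpos (convex_Ici T)
      · exact fun r hr => (hd r hr).continuousAt.continuousWithinAt
      · intro r hr
        rw [interior_Ici] at hr
        exact (hd r (le_of_lt hr)).differentiableAt.differentiableWithinAt
      · intro r hr
        rw [interior_Ici] at hr
        rw [(hd r (le_of_lt hr)).deriv]
        linarith [hDn r (le_of_lt hr)]
    have hxT := hc T le_rfl
    set t := T + (x T - (L - ε)) / ε with ht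
    have htT : T ≤ t := by
      have : 0 ≤ (x T - (L - ε)) / ε := div_nonneg (by linarith) hε.le
      linarith
    have h1 := hanti (Set.mem_Ici.2 le_rfl) (Set.mem_Ici.2 htT) htT
    simp only at h1
    have h2 : ε * t = ε * T + (x T - (L - ε)) := by rw [ht]; field_simp
    have := hc t htT
    linarith

structure Ctx (m : ℕ) (p a : Fin m → ℝ) (δ t₀ h : ℝ) (β : ℝ → ℝ) (τ σ : Fin m → ℝ → ℝ)
    (x G : ℝ → ℝ) (B b K : ℝ) : Prop where
  hp : ∀ j, 0 < p j
  ha : ∀ j, 0 < a j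
  hδ : 0 < δ
  hh : 0 ≤ h
  hτ0 : ∀ j t, t₀ ≤ t → 0 ≤ τ j t
  hσ0 : ∀ j t, t₀ ≤ t → 0 ≤ σ j t
  hτ1 : ∀ j t, t₀ ≤ t → τ j t ≤ h
  hσ1 : ∀ j t, t₀ ≤ t → σ j t ≤ h
  hb : 0 < b
  hβb : ∀ t, t₀ ≤ t → b ≤ β t
  hβB : ∀ t, t₀ ≤ t → β t ≤ B
  hGc : Continuous G
  hG : ∀ t, t₀ < t → HasDerivAt G (β t) t
  hxc : ContinuousOn x (Set.Ici t₀)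
  hx : ∀ t, t₀ < t → HasDerivAt x
    (β t * ((∑ j, p j * x (t - τ j t) * Real.exp (-(a j) * x (t - σ j t))) - δ * x t)) t
  hx0 : ∀ t, t₀ - h ≤ t → t < t₀ → 0 ≤ x t
  hxt0 : 0 < x t₀
  hK0 : 0 < K
  hK : ∑ j, p j * Real.exp (-(a j) * K) = δ

namespace Ctx

variable {m : ℕ} {p a : Fin m → ℝ} {δ t₀ h : ℝ} {β : ℝ → ℝ} {τ σ : Fin m → ℝ → ℝ}
    {x G : ℝ → ℝ} {B b K : ℝ}

lemma Gle (c : Ctx m p a δ t₀ h β τ σ x G B b K) {s t : ℝ} (hs : t₀ ≤ s) (hst : s ≤ t) :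
    G t - G s ≤ B * (t - s) := by
  have := (convex_Icc s t).image_sub_le_mul_sub_of_deriv_le (f := G) (C := B)
    c.hGc.continuousOn
    (fun r hr => by
      rw [interior_Icc] at hr
      exact (c.hG r (lt_of_le_of_lt hs hr.1)).differentiableAt.differentiableWithinAt)
    (fun r hr => by
      rw [interior_Icc] at hr
      rw [(c.hG r (lt_of_le_of_lt hs hr.1)).deriv]
      exact c.hβB r (by linarith [hr.1]))
    s (Set.left_mem_Icc.2 hst) t (Set.right_mem_Icc.2 hst) hst
  exact this

lemma ne (c : Ctx m p a δ t₀ h β τ σ x G B b K) : (Finset.univ : Finset (Fin m)).Nonempty := by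
  by_contra hn
  rw [Finset.not_nonempty_iff_eq_empty] at hn
  have := c.hK
  rw [hn] at this
  simp at this
  linarith [c.hδ]

lemma S_lt (c : Ctx m p a δ t₀ h β τ σ x G B b K) {y z : ℝ} (hyz : y < z) :
    ∑ j, p j * Real.exp (-(a j) * z) < ∑ j, p j * Real.exp (-(a j) * y) := by
  apply Finset.sum_lt_sum_of_nonempty c.ne
  intro j _
  apply mul_lt_mul_of_pos_left _ (c.hp j)
  apply Real.exp_lt_exp.2
  nlinarith [c.ha j]

lemma S_pos (c : Ctx m p a δ t₀ h β τ σ x G B b K) (y : ℝ) :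
    0 < ∑ j, p j * Real.exp (-(a j) * y) :=
  Finset.sum_pos (fun j _ => mul_pos (c.hp j) (Real.exp_pos _)) c.ne

/-- upper bound of the production term. -/
lemma prod_le (c : Ctx m p a δ t₀ h β τ σ x G B b K) {y z : Fin m → ℝ} {M k : ℝ}
    (hM : 0 ≤ M) (hy : ∀ j, y j ≤ M) (hz : ∀ j, k ≤ z j) :
    ∑ j, p j * y j * Real.exp (-(a j) * z j) ≤ M * ∑ j, p j * Real.exp (-(a j) * k) := by
  rw [Finset.mul_sum]
  apply Finset.sum_le_sum
  intro j _
  have h1 : Real.exp (-(a j) * z j) ≤ Real.exp (-(a j) * k) := by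
    apply Real.exp_le_exp.2
    nlinarith [c.ha j, hz j]
  calc p j * y j * Real.exp (-(a j) * z j) = p j * (y j * Real.exp (-(a j) * z j)) := by ring
    _ ≤ p j * (M * Real.exp (-(a j) * k)) := by
        apply mul_le_mul_of_nonneg_left _ (c.hp j).le
        exact mul_le_mul (hy j) h1 (Real.exp_pos _).le hM
    _ = _ := by ring

lemma le_prod (c : Ctx m p a δ t₀ h β τ σ x G B b K) {y z : Fin m → ℝ} {M k : ℝ}
    (hM : 0 ≤ M) (hy : ∀ j, M ≤ y j) (hz : ∀ j, z j ≤ k) :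
    M * ∑ j, p j * Real.exp (-(a j) * k) ≤ ∑ j, p j * y j * Real.exp (-(a j) * z j) := by
  rw [Finset.mul_sum]
  apply Finset.sum_le_sum
  intro j _
  have h1 : Real.exp (-(a j) * k) ≤ Real.exp (-(a j) * z j) := by
    apply Real.exp_le_exp.2
    nlinarith [c.ha j, hz j]
  calc M * (p j * Real.exp (-(a j) * k)) = p j * (M * Real.exp (-(a j) * k)) := by ring
    _ ≤ p j * (y j * Real.exp (-(a j) * z j)) := by
        apply mul_le_mul_of_nonneg_left _ (c.hp j).le
        exact mul_le_mul (hy j) h1 (Real.exp_pos _).le (hM.trans (hy j))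
    _ = _ := by ring

lemma decay_aux (c : Ctx m p a δ t₀ h β τ σ x G B b K) {s t : ℝ} (hs : t₀ ≤ s) (hst : s ≤ t)
    (hpos : ∀ r, t₀ - h ≤ r → r < t → 0 ≤ x r) :
    x s * Real.exp (-(δ * (G t - G s))) ≤ x t := by
  have := compare_low (x := x) (G := G) (β := β) (δ := δ) (C := 0) hst
    (c.hxc.mono (fun r hr => hs.trans hr.1)) c.hGc
    (fun r hr => c.hx r (lt_of_le_of_lt hs hr.1))
    (fun r hr => c.hG r (lt_of_le_of_lt hs hr.1))
    (fun r hr => by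
      have hr0 : t₀ ≤ r := by linarith [hr.1]
      apply mul_le_mul_of_nonneg_left _ (c.hb.le.trans (c.hβb r hr0))
      have : 0 ≤ ∑ j, p j * x (r - τ j r) * Real.exp (-(a j) * x (r - σ j r)) := by
        apply Finset.sum_nonneg
        intro j _
        have h1 := c.hτ1 j r hr0
        have h2 := c.hτ0 j r hr0
        have := hpos (r - τ j r) (by linarith) (by linarith [hr.2])
        have := c.hp j
        positivity
      linarith)
  linarith

lemma pos (c : Ctx m p a δ t₀ h β τ σ x G B b K) {t : ℝ} (ht : t₀ ≤ t) : 0 < x t := by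
  by_contra hn
  push Not at hn
  have hcl : IsClosed {s | s ∈ Set.Icc t₀ t ∧ x s ≤ 0} := by
    have := (c.hxc.mono (fun r (hr : r ∈ Set.Icc t₀ t) => hr.1)).preimage_isClosed_of_isClosed
      isClosed_Icc (isClosed_Iic (a := (0:ℝ)))
    exact this
  have hne : {s | s ∈ Set.Icc t₀ t ∧ x s ≤ 0}.Nonempty := ⟨t, ⟨ht, le_rfl⟩, hn⟩
  have hbd : BddBelow {s | s ∈ Set.Icc t₀ t ∧ x s ≤ 0} := ⟨t₀, fun s hs => hs.1.1⟩
  have hmem := hcl.csInf_mem hne hbd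
  set s1 := sInf {s | s ∈ Set.Icc t₀ t ∧ x s ≤ 0} with hs1
  have hbelow : ∀ r, t₀ - h ≤ r → r < s1 → 0 ≤ x r := by
    intro r h1 h2
    rcases lt_or_ge r t₀ with h3 | h3
    · exact c.hx0 r h1 h3
    · by_contra h4
      have : s1 ≤ r := csInf_le hbd ⟨⟨h3, h2.le.trans hmem.1.2⟩, by linarith⟩
      linarith
  have := c.decay_aux le_rfl hmem.1.1 hbelow
  have h5 := mul_pos c.hxt0 (Real.exp_pos (-(δ * (G s1 - G t₀))))
  linarith [hmem.2]

lemma decay (c : Ctx m p a δ t₀ h β τ σ x G B b K) {s t : ℝ} (hs : t₀ ≤ s) (hst : s ≤ t)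
    (hth : t - s ≤ h) : x s * Real.exp (-(δ * (B * h))) ≤ x t := by
  refine le_trans ?_ (c.decay_aux hs hst ?_)
  · apply mul_le_mul_of_nonneg_left _ (c.pos hs).le
    apply Real.exp_le_exp.2
    have h1 := c.Gle hs hst
    have hB : 0 ≤ B := c.hb.le.trans ((c.hβb s hs).trans (c.hβB s hs))
    have := mul_le_mul_of_nonneg_left hth hB
    have := mul_le_mul_of_nonneg_left (h1.trans this) c.hδ.le
    linarith
  · intro r h1 _
    rcases lt_or_ge r t₀ with h3 | h3
    · exact c.hx0 r h1 h3
    · exact (c.pos h3).le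

lemma bdd_below (c : Ctx m p a δ t₀ h β τ σ x G B b K) : ∃ k > 0, ∀ t, t₀ ≤ t → k ≤ x t := by
  have hcI : ∀ t, ContinuousOn x (Set.Icc t₀ t) := fun t => c.hxc.mono (fun r hr => hr.1)
  obtain ⟨t1, ht1, hm1⟩ := isCompact_Icc.exists_isMinOn
    (⟨t₀, le_rfl, by linarith [c.hh]⟩ : (Set.Icc t₀ (t₀ + h)).Nonempty) (hcI _)
  refine ⟨min (x t1) (K / 2 * Real.exp (-(δ * (B * h)))), ?_, ?_⟩
  · have := c.pos ht1.1
    have := c.hK0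
    positivity
  intro t ht
  obtain ⟨t2, ht2, hm2⟩ := isCompact_Icc.exists_isMinOn
    (⟨t₀, le_rfl, ht⟩ : (Set.Icc t₀ t).Nonempty) (hcI _)
  have hmin : ∀ r ∈ Set.Icc t₀ t, x t2 ≤ x r := fun r hr => hm2 hr
  refine le_trans ?_ (hmin t ⟨ht, le_rfl⟩)
  rcases le_or_gt t2 (t₀ + h) with h3 | h3
  · exact (min_le_left _ _).trans (hm1 ⟨ht2.1, h3⟩)
  · refine (min_le_right _ _).trans ?_
    have htt : t₀ < t2 := by linarith [c.hh]
    have hd := deriv_nonneg_of_left_max (c.hx t2 htt).neg htt (fun r hr => by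
      have := hmin r ⟨hr.1, hr.2.trans ht2.2⟩
      simp only [Pi.neg_apply]
      linarith)
    have hβ : 0 < β t2 := c.hb.trans_le (c.hβb t2 htt.le)
    have hS : (∑ j, p j * x (t2 - τ j t2) * Real.exp (-(a j) * x (t2 - σ j t2)))
        - δ * x t2 ≤ 0 := by
      by_contra hn
      push Not at hn
      have := mul_pos hβ hn
      linarith
    have hj : ∃ j, K / 2 < x (t2 - σ j t2) := by
      by_contra hn
      push Not at hn
      have h5 := c.le_prod (y := fun j => x (t2 - τ j t2)) (z := fun j => x (t2 - σ j t2))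
        (M := x t2) (k := K / 2) (c.pos htt.le).le
        (fun j => hmin _ ⟨by linarith [c.hτ1 j t2 htt.le],
          by linarith [c.hτ0 j t2 htt.le, ht2.2]⟩) hn
      have h6 := c.S_lt (y := K / 2) (z := K) (by linarith [c.hK0])
      rw [c.hK] at h6
      have := mul_lt_mul_of_pos_left h6 (c.pos htt.le)
      try simp only at h5
      linarith
    obtain ⟨j, hj⟩ := hj
    have h1 := c.hσ0 j t2 htt.le
    have h2 := c.hσ1 j t2 htt.le
    refine le_trans ?_ (c.decay (s := t2 - σ j t2) (t := t2) (by linarith) (by linarith)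
      (by linarith))
    exact mul_le_mul_of_nonneg_right hj.le (Real.exp_pos _).le

lemma bdd_above (c : Ctx m p a δ t₀ h β τ σ x G B b K) : ∃ M, ∀ t, t₀ ≤ t → x t ≤ M := by
  have hcI : ∀ s t, t₀ ≤ s → ContinuousOn x (Set.Icc s t) :=
    fun s t hs => c.hxc.mono (fun r hr => hs.trans hr.1)
  have hh := c.hh
  obtain ⟨t1, ht1, hm1⟩ := isCompact_Icc.exists_isMaxOn
    (⟨t₀, le_rfl, by linarith⟩ : (Set.Icc t₀ (t₀ + 2 * h)).Nonempty) (hcI _ _ le_rfl)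
  have hB : 0 ≤ B := c.hb.le.trans ((c.hβb t₀ le_rfl).trans (c.hβB t₀ le_rfl))
  set P := ∑ j, p j * Real.exp (-(a j) * 0) with hP
  have hP0 : 0 < P := c.S_pos 0
  set lam := B * P + 1 with hlam
  have hlam0 : 0 < lam := by positivity
  set C := 2 * K * Real.exp (δ * (B * h)) with hC
  have hC0 : 0 < C := by have := c.hK0; positivity
  refine ⟨max (x t1) (C * Real.exp (lam * h)), ?_⟩
  intro t ht
  obtain ⟨t2, ht2, hm2⟩ := isCompact_Icc.exists_isMaxOn
    (⟨t₀, le_rfl, ht⟩ : (Set.Icc t₀ t).Nonempty) (hcI _ _ le_rfl)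
  have hmax : ∀ r ∈ Set.Icc t₀ t, x r ≤ x t2 := fun r hr => hm2 hr
  refine (hmax t ⟨ht, le_rfl⟩).trans ?_
  rcases le_or_gt t2 (t₀ + 2 * h) with h3 | h3
  · exact le_trans (hm1 ⟨ht2.1, h3⟩) (le_max_left _ _)
  · refine le_trans ?_ (le_max_right _ _)
    have htt : t₀ < t2 := by linarith
    have hd := deriv_nonneg_of_left_max (c.hx t2 htt) htt (fun r hr =>
      hmax r ⟨hr.1, hr.2.trans ht2.2⟩)
    have hβ : 0 < β t2 := c.hb.trans_le (c.hβb t2 htt.le)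
    have hS := nonneg_of_mul_nonneg_right hd hβ
    have hj : ∃ j, x (t2 - σ j t2) < 2 * K := by
      by_contra hn
      push Not at hn
      have h5 := c.prod_le (y := fun j => x (t2 - τ j t2)) (z := fun j => x (t2 - σ j t2))
        (M := x t2) (k := 2 * K) (c.pos htt.le).le
        (fun j => hmax _ ⟨by linarith [c.hτ1 j t2 htt.le],
          by linarith [c.hτ0 j t2 htt.le, ht2.2]⟩) hn
      have h6 := c.S_lt (y := K) (z := 2 * K) (by linarith [c.hK0])
      rw [c.hK] at h6
      have := mul_lt_mul_of_pos_left h6 (c.pos htt.le)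
      try simp only at h5
      linarith
    obtain ⟨j, hj⟩ := hj
    have h1 := c.hσ0 j t2 htt.le
    have h2 := c.hσ1 j t2 htt.le
    set r0 := t2 - σ j t2 with hr0
    -- earlier values
    have hpast : ∀ r, r0 - h ≤ r → r ≤ r0 → x r ≤ C := by
      intro r hr1 hr2
      have h4 := c.decay (s := r) (t := r0) (by linarith) hr2 (by linarith)
      have h5 : x r * Real.exp (-(δ * (B * h))) ≤ 2 * K := by linarith
      rw [Real.exp_neg, ← div_eq_mul_inv, div_le_iff₀ (Real.exp_pos _)] at h5
      exact h5
    obtain ⟨s1, hs1, hm3⟩ := isCompact_Icc.exists_isMaxOn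
      (⟨r0, le_rfl, by linarith⟩ : (Set.Icc r0 t2).Nonempty)
      ((hcI r0 t2 (by linarith)).mul
        (show ContinuousOn (fun r => Real.exp (-(lam * r))) _ by fun_prop))
    have hmax3 : ∀ r ∈ Set.Icc r0 t2, x r * Real.exp (-(lam * r))
        ≤ x s1 * Real.exp (-(lam * s1)) := fun r hr => hm3 hr
    have hkey : x s1 ≤ C := by
      by_contra hn
      push Not at hn
      have hs1r : r0 < s1 := by
        rcases hs1.1.eq_or_lt with h4 | h4
        · have := hpast r0 (by linarith) le_rfl
          rw [← h4] at hn
          linarith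
        · exact h4
      have hs1t : t₀ < s1 := by linarith
      have hd3 := deriv_nonneg_of_left_max ((c.hx s1 hs1t).mul
        (((hasDerivAt_id s1).const_mul lam).neg.exp)) hs1r
        (fun r hr => hmax3 r ⟨hr.1, hr.2.trans hs1.2⟩)
      have h6 := c.prod_le (y := fun j => x (s1 - τ j s1)) (z := fun j => x (s1 - σ j s1))
        (M := x s1) (k := 0) (c.pos hs1t.le).le
        (fun i => by
          have h7 := c.hτ0 i s1 hs1t.le
          have h8 := c.hτ1 i s1 hs1t.le
          rcases le_or_gt (s1 - τ i s1) r0 with h9 | h9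
          · exact (hpast _ (by linarith) h9).trans hn.le
          · have h10 := hmax3 _ ⟨h9.le, by linarith [hs1.2]⟩
            have h11 : Real.exp (-(lam * s1)) ≤ Real.exp (-(lam * (s1 - τ i s1))) := by
              apply Real.exp_le_exp.2
              nlinarith
            have h12 : x (s1 - τ i s1) * Real.exp (-(lam * s1)) ≤ x s1 * Real.exp (-(lam * s1)) :=
              (mul_le_mul_of_nonneg_left h11 (c.pos (by linarith)).le).trans h10
            exact le_of_mul_le_mul_right h12 (Real.exp_pos _))
        (fun i => (c.pos (by linarith [c.hσ1 i s1 hs1t.le])).le)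
      try simp only at h6
      rw [← hP] at h6
      have hxs := c.pos hs1t.le
      have hδ := c.hδ
      have h13 : β s1 * ((∑ j, p j * x (s1 - τ j s1) * Real.exp (-(a j) * x (s1 - σ j s1)))
          - δ * x s1) ≤ B * (x s1 * P) := by
        calc _ ≤ β s1 * (x s1 * P) := by
              apply mul_le_mul_of_nonneg_left _ (c.hb.le.trans (c.hβb s1 hs1t.le))
              have := mul_pos hδ hxs
              linarith
          _ ≤ _ := mul_le_mul_of_nonneg_right (c.hβB s1 hs1t.le) (by positivity)
      have hE : 0 < Real.exp (-(lam * s1)) := Real.exp_pos _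
      simp only [id, Pi.neg_apply] at hd3
      set D := β s1 * ((∑ j, p j * x (s1 - τ j s1) * Real.exp (-(a j) * x (s1 - σ j s1)))
          - δ * x s1)
      have h14 : 0 ≤ (D - lam * x s1) * Real.exp (-(lam * s1)) := by linarith
      have h15 := nonneg_of_mul_nonneg_left h14 hE
      rw [hlam] at h15
      nlinarith
    have h4 := hmax3 t2 ⟨by linarith, le_rfl⟩
    have h5 : x t2 ≤ x s1 * Real.exp (lam * (t2 - s1)) := by
      have : Real.exp (lam * (t2 - s1)) = Real.exp (-(lam * s1)) * (Real.exp (-(lam * t2)))⁻¹ := by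
        rw [← Real.exp_neg, ← Real.exp_add]; congr 1; ring
      rw [this, ← mul_assoc, ← div_eq_mul_inv, le_div_iff₀ (Real.exp_pos _)]
      exact h4
    refine h5.trans ?_
    apply mul_le_mul hkey _ (Real.exp_pos _).le hC0.le
    apply Real.exp_le_exp.2
    apply mul_le_mul_of_nonneg_left _ hlam0.le
    linarith [hs1.1]

lemma ev_shift (c : Ctx m p a δ t₀ h β τ σ x G B b K) {q : ℝ → Prop}
    (hq : ∀ᶠ t in Filter.atTop, q t) :
    ∀ᶠ t in Filter.atTop, ∀ j, q (t - τ j t) ∧ q (t - σ j t) := by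
  obtain ⟨T, hT⟩ := Filter.eventually_atTop.1 hq
  filter_upwards [Filter.eventually_ge_atTop (T + h), Filter.eventually_ge_atTop t₀] with t h1 h2 j
  exact ⟨hT _ (by linarith [c.hτ1 j t h2]), hT _ (by linarith [c.hσ1 j t h2])⟩

/-- every eventual property holds eventually on a whole window. -/
lemma ev_window {q : ℝ → Prop} (hq : ∀ᶠ t in Filter.atTop, q t) (h : ℝ) :
    ∀ᶠ t in Filter.atTop, ∀ r, t - h ≤ r → q r := by
  obtain ⟨T, hT⟩ := Filter.eventually_atTop.1 hq
  filter_upwards [Filter.eventually_ge_atTop (T + h)] with t h1 r hr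
  exact hT _ (by linarith)

lemma step_up (c : Ctx m p a δ t₀ h β τ σ x G B b K) {L K' ε0 : ℝ} (hL : 0 < L)
    (hL1 : ∀ ε > 0, ∀ᶠ t in Filter.atTop, x t < L + ε)
    (hL2 : ∀ ε > 0, ∃ᶠ t in Filter.atTop, L - ε < x t) (hK' : K < K') (hε0 : 0 < ε0) :
    ∃ᶠ t in Filter.atTop, L - ε0 ≤ x t ∧ ∃ j, x (t - σ j t) ≤ K' := by
  have hS := c.S_lt hK'
  rw [c.hK] at hS
  set S := ∑ j, p j * Real.exp (-(a j) * K') with hSd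
  have hb := c.hb
  have hex : ∀ᶠ ε in nhdsWithin (0:ℝ) (Set.Ioi 0), (L + ε) * S < δ * (L - ε) - ε / b := by
    apply Filter.Eventually.filter_mono nhdsWithin_le_nhds
    have h1 : Filter.Tendsto (fun ε : ℝ => (L + ε) * S) (nhds 0) (nhds ((L + 0) * S)) :=
      Continuous.tendsto (by fun_prop) 0
    have h2 : Filter.Tendsto (fun ε : ℝ => δ * (L - ε) - ε / b) (nhds 0)
      (nhds (δ * (L - 0) - 0 / b)) := Continuous.tendsto (by fun_prop) 0
    apply h1.eventually_lt h2
    simp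
    nlinarith
  have hpe : ∀ᶠ ε in nhdsWithin (0:ℝ) (Set.Ioi 0), 0 < ε := self_mem_nhdsWithin
  obtain ⟨ε, hε, hεpos, hεle⟩ := (hex.and (hpe.and
    (Filter.eventually_mem_set.2 (Ioo_mem_nhdsGT hε0)))).exists
  have hfl := fluct c.hx hL2 ε hεpos
  have hev := c.ev_shift (hL1 ε hεpos)
  refine (hfl.and_eventually (hev.and (Filter.eventually_ge_atTop t₀))).mono ?_
  rintro t ⟨⟨h1, h2⟩, h3, h4⟩
  refine ⟨by linarith [hεle.2], ?_⟩
  by_contra hn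
  push Not at hn
  have h5 := c.prod_le (y := fun j => x (t - τ j t)) (z := fun j => x (t - σ j t))
    (M := L + ε) (k := K') (by linarith) (fun j => (h3 j).1.le) (fun j => (hn j).le)
  rw [← hSd] at h5
  set Q := ∑ j, p j * x (t - τ j t) * Real.exp (-(a j) * x (t - σ j t))
  have hβ := c.hβb t h4
  have h6 : Q - δ * x t < -(ε / b) := by
    have := mul_le_mul_of_nonneg_left h1 c.hδ.le
    linarith
  have h7 : b * (ε / b) = ε := by field_simp
  have h8 : 0 < ε / b := by positivity
  nlinarith

lemma step_low (c : Ctx m p a δ t₀ h β τ σ x G B b K) {L K' ε0 : ℝ} (hL : 0 < L)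
    (hL1 : ∀ ε > 0, ∀ᶠ t in Filter.atTop, L - ε < x t)
    (hL2 : ∀ ε > 0, ∃ᶠ t in Filter.atTop, x t < L + ε) (hK' : K' < K) (hε0 : 0 < ε0) :
    ∃ᶠ t in Filter.atTop, x t ≤ L + ε0 ∧ ∃ j, K' ≤ x (t - σ j t) := by
  have hS := c.S_lt hK'
  rw [c.hK] at hS
  set S := ∑ j, p j * Real.exp (-(a j) * K') with hSd
  have hb := c.hb
  have hex : ∀ᶠ ε in nhdsWithin (0:ℝ) (Set.Ioi 0), δ * (L + ε) + ε / b < (L - ε) * S := by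
    apply Filter.Eventually.filter_mono nhdsWithin_le_nhds
    have h1 : Filter.Tendsto (fun ε : ℝ => (L - ε) * S) (nhds 0) (nhds ((L - 0) * S)) :=
      Continuous.tendsto (by fun_prop) 0
    have h2 : Filter.Tendsto (fun ε : ℝ => δ * (L + ε) + ε / b) (nhds 0)
      (nhds (δ * (L + 0) + 0 / b)) := Continuous.tendsto (by fun_prop) 0
    apply h2.eventually_lt h1
    simp
    nlinarith
  have hpe : ∀ᶠ ε in nhdsWithin (0:ℝ) (Set.Ioi 0), 0 < ε := self_mem_nhdsWithin
  obtain ⟨ε, hε, hεpos, hεle, hεL⟩ := (hex.and (hpe.and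
    ((Filter.eventually_mem_set.2 (Ioo_mem_nhdsGT hε0)).and
      (Filter.eventually_mem_set.2 (Ioo_mem_nhdsGT hL))))).exists
  have hfl := fluct (x := fun t => - x t) (L := -L) (fun t ht => (c.hx t ht).neg)
    (fun e he => (hL2 e he).mono (fun t ht => by linarith)) ε hεpos
  have hev := c.ev_shift (hL1 ε hεpos)
  refine (hfl.and_eventually (hev.and (Filter.eventually_ge_atTop t₀))).mono ?_
  rintro t ⟨⟨h1, h2⟩, h3, h4⟩
  refine ⟨by linarith [hεle.2], ?_⟩
  by_contra hn
  push Not at hn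
  have h5 := c.le_prod (y := fun j => x (t - τ j t)) (z := fun j => x (t - σ j t))
    (M := L - ε) (k := K') (by linarith [hεL.2]) (fun j => (h3 j).1.le) (fun j => (hn j).le)
  rw [← hSd] at h5
  set Q := ∑ j, p j * x (t - τ j t) * Real.exp (-(a j) * x (t - σ j t))
  have hβ := c.hβb t h4
  have h6 : ε / b < Q - δ * x t := by
    have : x t ≤ L + ε := by linarith
    have := mul_le_mul_of_nonneg_left this c.hδ.le
    linarith
  have h7 : b * (ε / b) = ε := by field_simp
  have h8 : 0 < ε / b := by positivity
  nlinarith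

lemma main_up (c : Ctx m p a δ t₀ h β τ σ x G B b K) {L l' L' K' ζ' : ℝ} (hL : 0 < L)
    (hL1 : ∀ ε > 0, ∀ᶠ t in Filter.atTop, x t < L + ε)
    (hL2 : ∀ ε > 0, ∃ᶠ t in Filter.atTop, L - ε < x t) (hK' : K < K') (hL' : L < L')
    (hl' : ∀ᶠ t in Filter.atTop, l' < x t)
    (hζ : ∀ᶠ t in Filter.atTop, ∀ j, G t - G (t - σ j t) < ζ') :
    L ≤ max (L' * (∑ j, p j * Real.exp (-(a j) * l')) / δ) K' +
      (K' - max (L' * (∑ j, p j * Real.exp (-(a j) * l')) / δ) K') * Real.exp (-(δ * ζ')) := by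
  set C := max (L' * (∑ j, p j * Real.exp (-(a j) * l')) / δ) K' with hC
  have hC1 : L' * (∑ j, p j * Real.exp (-(a j) * l')) ≤ δ * C := by
    have := le_max_left (L' * (∑ j, p j * Real.exp (-(a j) * l')) / δ) K'
    rw [← hC, div_le_iff₀ c.hδ] at this
    linarith
  have hC2 : K' ≤ C := le_max_right _ _
  apply le_of_forall_pos_le_add
  intro ε0 hε0
  have hup : ∀ᶠ t in Filter.atTop, x t < L' :=
    (hL1 (L' - L) (by linarith)).mono (fun t ht => by linarith)
  have hw := ev_window (c.ev_shift (hup.and hl')) h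
  obtain ⟨t, ⟨h1, j, hj⟩, h2, h3, h4⟩ := ((c.step_up hL hL1 hL2 hK' hε0).and_eventually
    (hw.and (hζ.and (Filter.eventually_ge_atTop (t₀ + h))))).exists
  have hh := c.hh
  have ht0 : t₀ ≤ t := by linarith
  have hs0 := c.hσ0 j t ht0
  have hs1 := c.hσ1 j t ht0
  have hcmp := compare (x := x) (G := G) (β := β) (δ := δ) (C := C) (s := t - σ j t) (t := t)
    (by linarith) (c.hxc.mono (fun r hr => by simp only [Set.mem_Ici]; linarith [hr.1])) c.hGc
    (fun r hr => c.hx r (by linarith [hr.1]))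
    (fun r hr => c.hG r (by linarith [hr.1]))
    (fun r hr => by
      have hr0 : t₀ ≤ r := by linarith [hr.1]
      apply mul_le_mul_of_nonneg_left _ (c.hb.le.trans (c.hβb r hr0))
      have h5 := c.prod_le (y := fun j => x (r - τ j r)) (z := fun j => x (r - σ j r))
        (M := L') (k := l') (by linarith) (fun i => (h2 r (by linarith [hr.1]) i).1.1.le)
        (fun i => (h2 r (by linarith [hr.1]) i).2.2.le)
      try simp only at h5
      linarith)
  have h6 : (x (t - σ j t) - C) * Real.exp (-(δ * (G t - G (t - σ j t)))) ≤
      (K' - C) * Real.exp (-(δ * (G t - G (t - σ j t)))) :=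
    mul_le_mul_of_nonneg_right (by linarith) (Real.exp_pos _).le
  have h7 : (K' - C) * Real.exp (-(δ * (G t - G (t - σ j t)))) ≤
      (K' - C) * Real.exp (-(δ * ζ')) := by
    apply mul_le_mul_of_nonpos_left _ (by linarith)
    apply Real.exp_le_exp.2
    have := mul_le_mul_of_nonneg_left (h3 j).le c.hδ.le
    linarith
  linarith

lemma main_low (c : Ctx m p a δ t₀ h β τ σ x G B b K) {L l' L' K' ζ' : ℝ} (hL : 0 < L)
    (hL1 : ∀ ε > 0, ∀ᶠ t in Filter.atTop, L - ε < x t)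
    (hL2 : ∀ ε > 0, ∃ᶠ t in Filter.atTop, x t < L + ε) (hK' : K' < K) (hL' : L' < L)
    (hL'0 : 0 ≤ L')
    (hl' : ∀ᶠ t in Filter.atTop, x t < l')
    (hζ : ∀ᶠ t in Filter.atTop, ∀ j, G t - G (t - σ j t) < ζ') :
    min (L' * (∑ j, p j * Real.exp (-(a j) * l')) / δ) K' +
      (K' - min (L' * (∑ j, p j * Real.exp (-(a j) * l')) / δ) K') * Real.exp (-(δ * ζ')) ≤ L := by
  set C := min (L' * (∑ j, p j * Real.exp (-(a j) * l')) / δ) K' with hC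
  have hC1 : δ * C ≤ L' * (∑ j, p j * Real.exp (-(a j) * l')) := by
    have := min_le_left (L' * (∑ j, p j * Real.exp (-(a j) * l')) / δ) K'
    rw [← hC, le_div_iff₀ c.hδ] at this
    linarith
  have hC2 : C ≤ K' := min_le_right _ _
  apply le_of_forall_pos_le_add
  intro ε0 hε0
  have hup : ∀ᶠ t in Filter.atTop, L' < x t :=
    (hL1 (L - L') (by linarith)).mono (fun t ht => by linarith)
  have hw := ev_window (c.ev_shift (hup.and hl')) h
  obtain ⟨t, ⟨h1, j, hj⟩, h2, h3, h4⟩ := ((c.step_low hL hL1 hL2 hK' hε0).and_eventually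
    (hw.and (hζ.and (Filter.eventually_ge_atTop (t₀ + h))))).exists
  have hh := c.hh
  have ht0 : t₀ ≤ t := by linarith
  have hs0 := c.hσ0 j t ht0
  have hs1 := c.hσ1 j t ht0
  have hcmp := compare_low (x := x) (G := G) (β := β) (δ := δ) (C := C) (s := t - σ j t) (t := t)
    (by linarith) (c.hxc.mono (fun r hr => by simp only [Set.mem_Ici]; linarith [hr.1])) c.hGc
    (fun r hr => c.hx r (by linarith [hr.1]))
    (fun r hr => c.hG r (by linarith [hr.1]))
    (fun r hr => by
      have hr0 : t₀ ≤ r := by linarith [hr.1]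
      apply mul_le_mul_of_nonneg_left _ (c.hb.le.trans (c.hβb r hr0))
      have h5 := c.le_prod (y := fun j => x (r - τ j r)) (z := fun j => x (r - σ j r))
        (M := L') (k := l') hL'0 (fun i => (h2 r (by linarith [hr.1]) i).1.1.le)
        (fun i => (h2 r (by linarith [hr.1]) i).2.2.le)
      try simp only at h5
      linarith)
  have h6 : (K' - C) * Real.exp (-(δ * (G t - G (t - σ j t)))) ≤
      (x (t - σ j t) - C) * Real.exp (-(δ * (G t - G (t - σ j t)))) :=
    mul_le_mul_of_nonneg_right (by linarith) (Real.exp_pos _).le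
  have h7 : (K' - C) * Real.exp (-(δ * ζ')) ≤
      (K' - C) * Real.exp (-(δ * (G t - G (t - σ j t)))) := by
    apply mul_le_mul_of_nonneg_left _ (by linarith)
    apply Real.exp_le_exp.2
    have := mul_le_mul_of_nonneg_left (h3 j).le c.hδ.le
    linarith
  linarith

lemma S_le_exp (c : Ctx m p a δ t₀ h β τ σ x G B b K) {A l : ℝ} (hA : ∀ j, a j ≤ A) (hl : l ≤ K) :
    ∑ j, p j * Real.exp (-(a j) * l) ≤ δ * Real.exp (A * (K - l)) := by
  rw [← c.hK, Finset.sum_mul]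
  apply Finset.sum_le_sum
  intro j _
  rw [mul_assoc, ← Real.exp_add]
  apply mul_le_mul_of_nonneg_left _ (c.hp j).le
  apply Real.exp_le_exp.2
  nlinarith [hA j]

lemma exp_le_S (c : Ctx m p a δ t₀ h β τ σ x G B b K) {A l : ℝ} (hA : ∀ j, a j ≤ A) (hl : K ≤ l) :
    δ * Real.exp (-(A * (l - K))) ≤ ∑ j, p j * Real.exp (-(a j) * l) := by
  rw [← c.hK, Finset.sum_mul]
  apply Finset.sum_le_sum
  intro j _
  rw [mul_assoc, ← Real.exp_add]
  apply mul_le_mul_of_nonneg_left _ (c.hp j).le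
  apply Real.exp_le_exp.2
  nlinarith [hA j]

lemma final (c : Ctx m p a δ t₀ h β τ σ x G B b K) {A l L ζ : ℝ} (hA : ∀ j, a j ≤ A) (hA0 : 0 < A)
    (hl : 0 < l) (hlL : l ≤ L)
    (hL1 : ∀ ε > 0, ∀ᶠ t in Filter.atTop, x t < L + ε)
    (hL2 : ∀ ε > 0, ∃ᶠ t in Filter.atTop, L - ε < x t)
    (hl1 : ∀ ε > 0, ∀ᶠ t in Filter.atTop, l - ε < x t)
    (hl2 : ∀ ε > 0, ∃ᶠ t in Filter.atTop, x t < l + ε)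
    (hζ : ∀ ε > 0, ∀ᶠ t in Filter.atTop, ∀ j, G t - G (t - σ j t) < ζ + ε)
    (hcond : A * K * (Real.exp (δ * ζ) - 1) ≤ 1) : l = K ∧ L = K := by
  have hL : 0 < L := hl.trans_le hlL
  have hK0 := c.hK0
  have hδ := c.hδ
  have hlK : l ≤ K := by
    apply le_of_forall_pos_le_add
    intro ε hε
    obtain ⟨t, ⟨_, j, hj⟩, h2⟩ := ((c.step_up (K' := K + ε / 2) (ε0 := 1) hL hL1 hL2 (by linarith)
      one_pos).and_eventually (c.ev_shift (hl1 (ε / 2) (by linarith)))).exists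
    linarith [(h2 j).2]
  have hKL : K ≤ L := by
    apply le_of_forall_pos_le_add
    intro ε hε
    obtain ⟨t, ⟨_, j, hj⟩, h2⟩ := ((c.step_low (K' := K - ε / 2) (ε0 := 1) hl hl1 hl2 (by linarith)
      one_pos).and_eventually (c.ev_shift (hL1 (ε / 2) (by linarith)))).exists
    linarith [(h2 j).2]
  -- limits
  have hU : L ≤ max (L * (∑ j, p j * Real.exp (-(a j) * l)) / δ) K +
      (K - max (L * (∑ j, p j * Real.exp (-(a j) * l)) / δ) K) * Real.exp (-(δ * ζ)) := by
    have ht : Filter.Tendsto (fun ε : ℝ =>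
        max ((L + ε) * (∑ j, p j * Real.exp (-(a j) * (l - ε))) / δ) (K + ε) +
        ((K + ε) - max ((L + ε) * (∑ j, p j * Real.exp (-(a j) * (l - ε))) / δ) (K + ε))
          * Real.exp (-(δ * (ζ + ε)))) (nhdsWithin 0 (Set.Ioi 0))
        (nhds (max ((L + 0) * (∑ j, p j * Real.exp (-(a j) * (l - 0))) / δ) (K + 0) +
        ((K + 0) - max ((L + 0) * (∑ j, p j * Real.exp (-(a j) * (l - 0))) / δ) (K + 0))
          * Real.exp (-(δ * (ζ + 0))))) :=
      (Continuous.tendsto (by fun_prop) 0).mono_left nhdsWithin_le_nhds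
    simp only [add_zero, sub_zero] at ht
    refine ge_of_tendsto ht ?_
    filter_upwards [self_mem_nhdsWithin] with ε hε
    have hε : 0 < ε := hε
    exact c.main_up hL hL1 hL2 (by linarith) (by linarith) (hl1 ε hε) (hζ ε hε)
  have hW : min (l * (∑ j, p j * Real.exp (-(a j) * L)) / δ) K +
      (K - min (l * (∑ j, p j * Real.exp (-(a j) * L)) / δ) K) * Real.exp (-(δ * ζ)) ≤ l := by
    have ht : Filter.Tendsto (fun ε : ℝ =>
        min ((l - ε) * (∑ j, p j * Real.exp (-(a j) * (L + ε))) / δ) (K - ε) +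
        ((K - ε) - min ((l - ε) * (∑ j, p j * Real.exp (-(a j) * (L + ε))) / δ) (K - ε))
          * Real.exp (-(δ * (ζ + ε)))) (nhdsWithin 0 (Set.Ioi 0))
        (nhds (min ((l - 0) * (∑ j, p j * Real.exp (-(a j) * (L + 0))) / δ) (K - 0) +
        ((K - 0) - min ((l - 0) * (∑ j, p j * Real.exp (-(a j) * (L + 0))) / δ) (K - 0))
          * Real.exp (-(δ * (ζ + 0))))) :=
      (Continuous.tendsto (by fun_prop) 0).mono_left nhdsWithin_le_nhds
    simp only [add_zero, sub_zero] at ht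
    refine le_of_tendsto ht ?_
    filter_upwards [self_mem_nhdsWithin, Ioo_mem_nhdsGT hl] with ε hε hε2
    have hε : 0 < ε := hε
    exact c.main_low hl hl1 hl2 (by linarith) (by linarith) (by linarith [hε2.2])
      (hL1 ε hε) (hζ ε hε)
  -- ζ is nonnegative
  have hζ0 : 0 ≤ ζ := by
    apply le_of_forall_pos_le_add
    intro ε hε
    obtain ⟨j, _⟩ := c.ne
    obtain ⟨t, h1, h2⟩ := ((hζ ε hε).and (Filter.eventually_ge_atTop (t₀ + h))).exists
    have ht0 : t₀ ≤ t := by linarith [c.hh]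
    have h3 := c.hσ0 j t ht0
    have h4 := c.hσ1 j t ht0
    have hmono : MonotoneOn G (Set.Ici t₀) := by
      apply monotoneOn_of_deriv_nonneg (convex_Ici _) c.hGc.continuousOn
      · intro r hr
        rw [interior_Ici] at hr
        exact (c.hG r hr).differentiableAt.differentiableWithinAt
      · intro r hr
        rw [interior_Ici] at hr
        rw [(c.hG r hr).deriv]
        exact c.hb.le.trans (c.hβb r (le_of_lt hr))
    have h5 := hmono (a := t - σ j t) (by simp only [Set.mem_Ici]; linarith) ht0 (by linarith)
    linarith [h1 j]
  set X := Real.exp (δ * ζ) with hX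
  have hX1 : 1 ≤ X := Real.one_le_exp (by positivity)
  have hXi : Real.exp (-(δ * ζ)) = X⁻¹ := Real.exp_neg _
  rw [hXi] at hU hW
  have hXp : 0 < X := by linarith
  have hSl := c.S_le_exp hA hlK
  have hSL := c.exp_le_S hA hKL
  set u := A * (K - l) with hu
  set v := A * (L - K) with hv
  have hu0 : 0 ≤ u := mul_nonneg hA0.le (by linarith)
  have hv0 : 0 ≤ v := mul_nonneg hA0.le (by linarith)
  have hU2 : L * X ≤ K + (X - 1) * (L * Real.exp u) := by
    set C := max (L * (∑ j, p j * Real.exp (-(a j) * l)) / δ) K with hC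
    have hCle : C ≤ L * Real.exp u := by
      apply max_le
      · rw [div_le_iff₀ hδ]
        have := mul_le_mul_of_nonneg_left hSl hL.le
        linarith
      · have := Real.one_le_exp hu0
        nlinarith
    have h1 := mul_le_mul_of_nonneg_right hU hXp.le
    have h2 : (C + (K - C) * X⁻¹) * X = C * X + (K - C) := by field_simp
    have h3 := mul_le_mul_of_nonneg_left hCle (show 0 ≤ X - 1 by linarith)
    linarith
  have hW2 : K + (X - 1) * (l * Real.exp (-v)) ≤ l * X := by
    set C := min (l * (∑ j, p j * Real.exp (-(a j) * L)) / δ) K with hC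
    have hCle : l * Real.exp (-v) ≤ C := by
      apply le_min
      · rw [le_div_iff₀ hδ]
        have := mul_le_mul_of_nonneg_left hSL hl.le
        linarith
      · have : Real.exp (-v) ≤ 1 := Real.exp_le_one_iff.2 (by linarith)
        nlinarith
    have h1 := mul_le_mul_of_nonneg_right hW hXp.le
    have h2 : (C + (K - C) * X⁻¹) * X = C * X + (K - C) := by field_simp
    have h3 := mul_le_mul_of_nonneg_left hCle (show 0 ≤ X - 1 by linarith)
    linarith
  have hAK : 0 < A * K := by positivity
  have h1 : A * K * v ≤ (A * K + v) * (Real.exp u - 1) := by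
    have e1 : L - K ≤ (X - 1) * (L * (Real.exp u - 1)) := by linarith
    have e2 := mul_le_mul_of_nonneg_left e1 hAK.le
    have e3 : 0 ≤ L * (Real.exp u - 1) := mul_nonneg hL.le (by linarith [Real.one_le_exp hu0])
    have e4 : A * K * ((X - 1) * (L * (Real.exp u - 1))) ≤ 1 * (L * (Real.exp u - 1)) := by
      rw [← mul_assoc]; exact mul_le_mul_of_nonneg_right hcond e3
    have e5 := mul_le_mul_of_nonneg_left (e2.trans e4) hA0.le
    rw [hv]
    linarith
  have h2 : A * K * u ≤ (A * K - u) * (1 - Real.exp (-v)) := by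
    have e1 : K - l ≤ (X - 1) * (l * (1 - Real.exp (-v))) := by linarith
    have e2 := mul_le_mul_of_nonneg_left e1 hAK.le
    have e3 : 0 ≤ l * (1 - Real.exp (-v)) :=
      mul_nonneg hl.le (by linarith [Real.exp_le_one_iff.2 (show -v ≤ 0 by linarith)])
    have e4 : A * K * ((X - 1) * (l * (1 - Real.exp (-v)))) ≤ 1 * (l * (1 - Real.exp (-v))) := by
      rw [← mul_assoc]; exact mul_le_mul_of_nonneg_right hcond e3
    have e5 := mul_le_mul_of_nonneg_left (e2.trans e4) hA0.le
    rw [hu]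
    linarith
  obtain ⟨r1, r2⟩ := algebra_core hAK hu0 (by rw [hu]; nlinarith) hv0 h1 h2
  rw [hu] at r1
  rw [hv] at r2
  rcases mul_eq_zero.1 r1 with h3 | h3
  · linarith
  rcases mul_eq_zero.1 r2 with h4 | h4
  · linarith
  constructor <;> linarith

end Ctx

end NichAux

/- STATEMENT 11 (Corollary 3.1): assume p := Σ_j p_j > δ, let K > 0 be
   the positive equilibrium, a⁺ := max_j a_j, a⁻ := min_j a_j,
   ζ_M := max_j limsup_{t→∞} ∫_{t−σ_j(t)}^t β(s) ds. If
   (H1) a⁺/a⁻ < 3/2 and (H2*) (a⁺/a⁻)(e^{δζ_M} − 1) log(p/δ) ≤ 1, then K is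
   globally attractive: every solution with admissible data converges to K. -/
theorem nicholson_global_attractivity_cor
    (m : ℕ) (hm : 1 ≤ m) (p a : Fin m → ℝ)
    (hp : ∀ j, 0 < p j) (ha : ∀ j, 0 < a j) (δ : ℝ) (hδ : 0 < δ)
    (t₀ : ℝ) (β : ℝ → ℝ) (τ σ : Fin m → ℝ → ℝ)
    (hβc : ContinuousOn β (Set.Ici t₀))
    (hτc : ∀ j, ContinuousOn (τ j) (Set.Ici t₀))
    (hσc : ∀ j, ContinuousOn (σ j) (Set.Ici t₀))
    (hτ0 : ∀ j, ∀ t ∈ Set.Ici t₀, 0 ≤ τ j t)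
    (hσ0 : ∀ j, ∀ t ∈ Set.Ici t₀, 0 ≤ σ j t)
    (βminus : ℝ) (hβminus : IsGLB (β '' Set.Ici t₀) βminus) (hβmpos : 0 < βminus)
    (hβub : ∃ B, ∀ t ∈ Set.Ici t₀, β t ≤ B)
    (τbar : ℝ)
    (hτbar : IsLUB ((⋃ j, τ j '' Set.Ici t₀) ∪ ⋃ j, σ j '' Set.Ici t₀) τbar)
    -- p > δ and K is the positive equilibrium
    (hpδ : δ < ∑ j, p j)
    (K : ℝ) (hK0 : 0 < K) (hK : ∑ j, p j * Real.exp (-(a j) * K) = δ)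
    -- a⁺ := max_j a_j, a⁻ := min_j a_j
    (aplus aminus : ℝ)
    (haplus : IsGreatest (Set.range a) aplus)
    (haminus : IsLeast (Set.range a) aminus)
    -- ζ_M := max_j limsup_{t→∞} ∫_{t−σ_j(t)}^t β(s) ds
    (ζM : ℝ)
    (hζM : IsGreatest (Set.range fun j =>
      Filter.limsup (fun t => ∫ s in (t - σ j t)..t, β s) Filter.atTop) ζM)
    -- (H1) and (H2*)
    (hH1 : aplus / aminus < 3 / 2)
    (hH2star : (aplus / aminus) * (Real.exp (δ * ζM) - 1) *
      Real.log ((∑ j, p j) / δ) ≤ 1) :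
    ∀ x : ℝ → ℝ, NicholsonSolution m p a δ t₀ τbar β τ σ x →
      Filter.Tendsto x Filter.atTop (nhds K) := by
  intro x hx
  obtain ⟨hxc, hxd, hx0, hxt0⟩ := hx
  obtain ⟨B, hB⟩ := hβub
  have hσle : ∀ j t, t₀ ≤ t → σ j t ≤ τbar := fun j t ht =>
    hτbar.1 (Or.inr (Set.mem_iUnion.2 ⟨j, t, ht, rfl⟩))
  have hτle : ∀ j t, t₀ ≤ t → τ j t ≤ τbar := fun j t ht =>
    hτbar.1 (Or.inl (Set.mem_iUnion.2 ⟨j, t, ht, rfl⟩))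
  have hτbar0 : 0 ≤ τbar := (hσ0 ⟨0, hm⟩ t₀ Set.self_mem_Ici).trans (hσle ⟨0, hm⟩ t₀ le_rfl)
  have hβt : Continuous (fun t => β (max t t₀)) :=
    hβc.comp_continuous (by fun_prop) (fun t => le_max_right t t₀)
  set G : ℝ → ℝ := fun t => ∫ s in t₀..t, β (max s t₀) with hGdef
  have hGd : ∀ t, HasDerivAt G (β (max t t₀)) t := fun t =>
    intervalIntegral.integral_hasDerivAt_right (hβt.intervalIntegrable _ _)
      (hβt.stronglyMeasurableAtFilter _ _) hβt.continuousAt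
  have c : NichAux.Ctx m p a δ t₀ τbar β τ σ x G B βminus K :=
    { hp := hp
      ha := ha
      hδ := hδ
      hh := hτbar0
      hτ0 := fun j t ht => hτ0 j t ht
      hσ0 := fun j t ht => hσ0 j t ht
      hτ1 := hτle
      hσ1 := hσle
      hb := hβmpos
      hβb := fun t ht => hβminus.1 ⟨t, ht, rfl⟩
      hβB := fun t ht => hB t ht
      hGc := continuous_iff_continuousAt.2 (fun t => (hGd t).continuousAt)
      hG := fun t ht => by have := hGd t; rwa [max_eq_left ht.le] at this
      hxc := hxc.mono (Set.Ici_subset_Ici.2 (by linarith))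
      hx := fun t ht => (hxd t (le_of_lt ht)).hasDerivAt (Ici_mem_nhds ht)
      hx0 := hx0
      hxt0 := hxt0
      hK0 := hK0
      hK := hK }
  have hint : ∀ j, ∀ᶠ t in Filter.atTop,
      (∫ s in (t - σ j t)..t, β s) = G t - G (t - σ j t) := by
    intro j
    filter_upwards [Filter.eventually_ge_atTop (t₀ + τbar)] with t ht
    have ht0 : t₀ ≤ t := by linarith
    have h1 := hσle j t ht0
    have h2 := c.hσ0 j t ht0
    rw [hGdef]
    simp only
    rw [intervalIntegral.integral_interval_sub_left (hβt.intervalIntegrable _ _)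
      (hβt.intervalIntegrable _ _)]
    apply intervalIntegral.integral_congr
    intro s hs
    rw [Set.uIcc_of_le (by linarith)] at hs
    simp only
    rw [max_eq_left (by linarith [hs.1])]
  have hζ : ∀ ε > 0, ∀ᶠ t in Filter.atTop, ∀ j, G t - G (t - σ j t) < ζM + ε := by
    intro ε hε
    rw [Filter.eventually_all]
    intro j
    have h1 : Filter.limsup (fun t => ∫ s in (t - σ j t)..t, β s) Filter.atTop ≤ ζM :=
      hζM.2 ⟨j, rfl⟩
    have hbd : Filter.IsBoundedUnder (· ≤ ·) Filter.atTop
        (fun t => ∫ s in (t - σ j t)..t, β s) := by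
      refine ⟨B * τbar, ?_⟩
      rw [Filter.eventually_map]
      filter_upwards [hint j, Filter.eventually_ge_atTop (t₀ + τbar)] with t h2 ht
      rw [h2]
      have ht0 : t₀ ≤ t := by linarith
      have h3 := hσle j t ht0
      have h4 := c.hσ0 j t ht0
      have h5 := c.Gle (s := t - σ j t) (t := t) (by linarith) (by linarith)
      have hB0 : 0 ≤ B := c.hb.le.trans ((c.hβb t ht0).trans (c.hβB t ht0))
      have := mul_le_mul_of_nonneg_left h3 hB0
      linarith
    have h2 := Filter.eventually_lt_of_limsup_lt (lt_of_le_of_lt h1 (by linarith : ζM < ζM + ε)) hbd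
    filter_upwards [h2, hint j] with t h3 h4
    linarith
  -- bounds
  obtain ⟨k, hk, hkx⟩ := c.bdd_below
  obtain ⟨M, hMx⟩ := c.bdd_above
  have hbA : Filter.IsBoundedUnder (· ≤ ·) Filter.atTop x :=
    ⟨M, Filter.eventually_map.2 ((Filter.eventually_ge_atTop t₀).mono hMx)⟩
  have hbB : Filter.IsBoundedUnder (· ≥ ·) Filter.atTop x :=
    ⟨k, Filter.eventually_map.2 ((Filter.eventually_ge_atTop t₀).mono hkx)⟩
  have hcA := hbA.isCoboundedUnder_ge
  have hcB := hbB.isCoboundedUnder_le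
  have hl0 : 0 < Filter.liminf x Filter.atTop := hk.trans_le
    (Filter.le_liminf_of_le hcA ((Filter.eventually_ge_atTop t₀).mono hkx))
  have hAmem : ∀ j, a j ≤ aplus := fun j => haplus.2 ⟨j, rfl⟩
  have hA0 : 0 < aplus := (ha ⟨0, hm⟩).trans_le (hAmem _)
  have haK : aminus * K ≤ Real.log ((∑ j, p j) / δ) := by
    rw [Real.le_log_iff_exp_le (div_pos (hδ.trans hpδ) hδ), le_div_iff₀ hδ, ← hK, Finset.mul_sum]
    apply Finset.sum_le_sum
    intro j _
    have h1 : aminus ≤ a j := haminus.2 ⟨j, rfl⟩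
    have h2 : Real.exp (aminus * K) * Real.exp (-(a j) * K) ≤ 1 := by
      rw [← Real.exp_add]
      apply Real.exp_le_one_iff.2
      nlinarith
    have := mul_le_mul_of_nonneg_left h2 (hp j).le
    linarith
  have haminus0 : 0 < aminus := by
    obtain ⟨j, hj⟩ := haminus.1
    rw [← hj]; exact ha j
  have hcond : aplus * K * (Real.exp (δ * ζM) - 1) ≤ 1 := by
    rcases le_or_gt (Real.exp (δ * ζM) - 1) 0 with h1 | h1
    · have : aplus * K * (Real.exp (δ * ζM) - 1) ≤ 0 :=
        mul_nonpos_of_nonneg_of_nonpos (by positivity) h1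
      linarith
    · have h2 : aplus / aminus * (Real.exp (δ * ζM) - 1) * (aminus * K) ≤
          aplus / aminus * (Real.exp (δ * ζM) - 1) * Real.log ((∑ j, p j) / δ) :=
        mul_le_mul_of_nonneg_left haK (by positivity)
      have h3 : aplus / aminus * (Real.exp (δ * ζM) - 1) * (aminus * K)
          = aplus * K * (Real.exp (δ * ζM) - 1) := by field_simp
      linarith
  obtain ⟨e1, e2⟩ := c.final (A := aplus) (l := Filter.liminf x Filter.atTop)
    (L := Filter.limsup x Filter.atTop) (ζ := ζM) hAmem hA0 hl0
    (Filter.liminf_le_limsup hbA hbB)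
    (fun ε hε => Filter.eventually_lt_of_limsup_lt (by linarith) hbA)
    (fun ε hε => Filter.frequently_lt_of_lt_limsup hcB (by linarith))
    (fun ε hε => Filter.eventually_lt_of_lt_liminf (by linarith) hbB)
    (fun ε hε => Filter.frequently_lt_of_liminf_lt hcA (by linarith))
    hζ hcond
  exact tendsto_of_liminf_eq_limsup e1 e2 hbA hbB
end
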